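/- arXiv:1901.09303 — 2 statements merged into one kernel-verified Lean document; each statement's English description precedes it below -/
import Mathlib

section
/- Fix θ ∈ Θ_M°. As |x| → ∞ the second-order parameter derivatives of the stable density satisfy: f_{σσ}(x;θ) = O(|x|^{−(1+α)}), f_{σα}(x;θ) = O(|x|^{−(1+α)} log|x|), f_{σβ}(x;θ) = O(|x|^{−(1+α)}), f_{αα}(x;θ) = O(|x|^{−(1+α)} log²|x|), f_{αβ}(x;θ) = O(|x|^{−(1+α)} log|x|), f_{ββ}(x;θ) = O(|x|^{−(1+α)}). -/
open MeasureTheory Filter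

noncomputable section

def ThetaInt : Set (Fin 4 → ℝ) :=
  {θ | 0 < θ 1 ∧ θ 2 ∈ Set.Ioo (0:ℝ) 2 ∧ θ 3 ∈ Set.Ioo (-1:ℝ) 1}

/-- Cumulant (log characteristic function) of the continuous (M₀) parameterization,
with `θ = (μ, σ, α, β)`. -/
def psiM (θ : Fin 4 → ℝ) (t : ℝ) : ℂ :=
  if θ 2 = 1 then
    ((-(|θ 1 * t|) : ℝ) : ℂ)
      - Complex.I * (((2 * θ 3 / Real.pi) * (θ 1 * t) * Real.log |θ 1 * t| : ℝ) : ℂ)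
      + Complex.I * ((θ 0 * t : ℝ) : ℂ)
  else
    ((-(|θ 1 * t| ^ (θ 2)) : ℝ) : ℂ) *
        (1 + Complex.I * ((θ 3 * Real.sign t * Real.tan (Real.pi * θ 2 / 2)
            * (|θ 1 * t| ^ (1 - θ 2) - 1) : ℝ) : ℂ))
      + Complex.I * ((θ 0 * t : ℝ) : ℂ)

/-- Characteristic function of the (M₀) parameterization. -/
def phiM (θ : Fin 4 → ℝ) (t : ℝ) : ℂ := Complex.exp (psiM θ t)

/-- Stable density in the (M₀) parameterization, via Fourier inversion. -/
def fM (θ : Fin 4 → ℝ) (x : ℝ) : ℝ :=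
  (1 / (2 * Real.pi)) *
    (∫ t : ℝ, Complex.exp (-Complex.I * (t : ℂ) * (x : ℂ)) * phiM θ t).re

/-- Partial derivative of the density in parameter `i`. -/
def fP (i : Fin 4) (θ : Fin 4 → ℝ) (x : ℝ) : ℝ :=
  deriv (fun s => fM (Function.update θ i s) x) (θ i)

/-- Second partial derivative of the density in parameters `i`, `j`. -/
def fPP (i j : Fin 4) (θ : Fin 4 → ℝ) (x : ℝ) : ℝ :=
  deriv (fun s => fP i (Function.update θ j s) x) (θ j)

/-- Derivative of the density in `x`. -/
def fX (θ : Fin 4 → ℝ) (x : ℝ) : ℝ := deriv (fun y => fM θ y) x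

/-- Mixed derivative `∂²f/∂x∂θᵢ`. -/
def fPX (i : Fin 4) (θ : Fin 4 → ℝ) (x : ℝ) : ℝ := deriv (fun y => fP i θ y) x

/-- Score functions. -/
def ellP (i : Fin 4) (θ : Fin 4 → ℝ) (x : ℝ) : ℝ := fP i θ x / fM θ x

/-- Derivative of the score in `x`. -/
def ellPX (i : Fin 4) (θ : Fin 4 → ℝ) (x : ℝ) : ℝ := deriv (fun y => ellP i θ y) x

/-- Derivative of the score `ℓ_{θᵢ}` in the parameter `θⱼ`. -/
def ellPP (i j : Fin 4) (θ : Fin 4 → ℝ) (x : ℝ) : ℝ :=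
  deriv (fun s => ellP i (Function.update θ j s) x) (θ j)

/-- `h = O(r)` as `|x| → ∞`. -/
def IsBigOAtInfty (h r : ℝ → ℝ) : Prop :=
  ∃ c > 0, ∃ M > 0, ∀ x : ℝ, M ≤ |x| → |h x| ≤ c * r x

end

/-!
Folding the inversion integral onto `(0, ∞)` gives `f = π⁻¹ Re ∫₀^∞ e^{-itx} e^{ψ(t)} dt`, and
differentiating under the integral shows that `f_{θᵢθⱼ}` has the amplitude
`e^ψ (ψ_{θᵢ} ψ_{θⱼ} + ψ_{θᵢθⱼ})`. This amplitude decays rapidly at infinity, so the tail is decided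
by its behaviour at the origin: integration by parts shows that a singularity `t^α logᵏ t`
contributes `O(|x|^{-(1+α)} logᵏ|x|)`.

For `α > 1` the exponent and its derivatives also contain a linear term in `t`, which is larger than
`t^α`, and at `α = 1` a resonant term `t logᵏ⁺¹ t`. Both have purely imaginary coefficients, so only
their *sine* transforms enter the real part. All boundary terms of two integrations by parts of a
sine transform vanish, and the second derivative of `t logᵏ⁺¹ t` is `O(t⁻¹ logᵏ t)`, one logarithm
less.
-/

noncomputable section

/-! ### Symbols on the half-line -/

section SymbolCalculus

/-- The weight `t ^ a (1 + |log t|) ^ k (1 + t) ^ N` on `(0, ∞)`: `a` and `k` measure the size at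
the origin, `N` the growth at infinity. -/
def logWeight (a : ℝ) (k : ℕ) (N t : ℝ) : ℝ := t ^ a * (1 + |Real.log t|) ^ k * (1 + t) ^ N

/-- `IsSymbol n a k N g`: the function `g` has `n` derivatives on `(0, ∞)`, and the `m`-th one is
`O (logWeight (a - m) k N)` there for each `m ≤ n`. -/
def IsSymbol : ℕ → ℝ → ℕ → ℝ → (ℝ → ℂ) → Prop
  | 0, a, k, N, g => ∃ C : ℝ, ∀ t, 0 < t → ‖g t‖ ≤ C * logWeight a k N t
  | n + 1, a, k, N, g => (∃ C : ℝ, ∀ t, 0 < t → ‖g t‖ ≤ C * logWeight a k N t) ∧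
      (∀ t, 0 < t → DifferentiableAt ℝ g t) ∧ IsSymbol n (a - 1) k N (deriv g)

variable {n k k' : ℕ} {a a' b N N' : ℝ} {g g' : ℝ → ℂ}

lemma logWeight_pos {t : ℝ} (ht : 0 < t) : 0 < logWeight a k N t := by
  unfold logWeight; positivity

lemma logWeight_mul_logWeight {t : ℝ} (ht : 0 < t) :
    logWeight a k N t * logWeight a' k' N' t = logWeight (a + a') (k + k') (N + N') t := by
  unfold logWeight
  rw [Real.rpow_add ht, Real.rpow_add (by linarith : (0 : ℝ) < 1 + t), pow_add]
  ring

lemma logWeight_sub_one {t : ℝ} (ht : 0 < t) :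
    logWeight (a - 1) k N t = t⁻¹ * logWeight a k N t := by
  unfold logWeight
  rw [Real.rpow_sub ht, Real.rpow_one]
  ring

lemma logWeight_mono {t : ℝ} (ht : 0 < t) (hk : k ≤ k') (hN : N ≤ N') :
    logWeight a k N t ≤ logWeight a k' N' t := by
  unfold logWeight
  have := abs_nonneg (Real.log t)
  gcongr <;> linarith

lemma exists_one_add_abs_log_pow_le (k : ℕ) {δ : ℝ} (hδ : 0 < δ) :
    ∃ D : ℝ, 0 ≤ D ∧ ∀ t, 0 < t → (1 + |Real.log t|) ^ k ≤ D * (t ^ δ + t ^ (-δ)) := by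
  refine ⟨k.factorial * Real.exp δ / δ ^ k, by positivity, fun t ht => ?_⟩
  have hexp : Real.exp (δ * |Real.log t|) ≤ t ^ δ + t ^ (-δ) := by
    rw [Real.rpow_def_of_pos ht, Real.rpow_def_of_pos ht, mul_comm (Real.log t) δ, mul_neg,
      mul_comm (Real.log t) δ]
    have := Real.exp_pos (δ * Real.log t)
    have := Real.exp_pos (-(δ * Real.log t))
    rcases abs_cases (Real.log t) with ⟨h, -⟩ | ⟨h, -⟩ <;> rw [h]
    · linarith
    · rw [mul_neg]; linarith
  have hpow := Real.pow_div_factorial_le_exp (x := δ * (1 + |Real.log t|)) (by positivity) k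
  rw [div_le_iff₀ (by positivity), mul_pow, mul_one_add, Real.exp_add] at hpow
  rw [div_mul_eq_mul_div, le_div_iff₀' (by positivity)]
  calc δ ^ k * (1 + |Real.log t|) ^ k
      ≤ Real.exp δ * Real.exp (δ * |Real.log t|) * k.factorial := hpow
    _ ≤ Real.exp δ * (t ^ δ + t ^ (-δ)) * k.factorial := by gcongr
    _ = _ := by ring

lemma exists_logWeight_le (h : a' < a) (k : ℕ) (N : ℝ) :
    ∃ D, 0 ≤ D ∧ ∀ t, 0 < t → logWeight a k N t ≤ D * logWeight a' 0 (N + 2 * (a - a')) t := by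
  obtain ⟨D, hD0, hD⟩ := exists_one_add_abs_log_pow_le k (sub_pos.2 h)
  refine ⟨D * 2, by positivity, fun t ht => ?_⟩
  set δ := a - a' with hδ
  have : 0 < δ := sub_pos.2 h
  have hsum : t ^ δ * (t ^ δ + t ^ (-δ)) ≤ 2 * (1 + t) ^ (2 * δ) := by
    rw [mul_add, ← Real.rpow_add ht, ← Real.rpow_add ht, add_neg_cancel, Real.rpow_zero, ← two_mul]
    have : t ^ (2 * δ) ≤ (1 + t) ^ (2 * δ) := by gcongr; linarith
    have : 1 ≤ (1 + t) ^ (2 * δ) := Real.one_le_rpow (by linarith) (by positivity)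
    linarith
  unfold logWeight
  calc t ^ a * (1 + |Real.log t|) ^ k * (1 + t) ^ N
      ≤ t ^ a * (D * (t ^ δ + t ^ (-δ))) * (1 + t) ^ N := by gcongr; exact hD t ht
    _ = t ^ a' * D * (t ^ δ * (t ^ δ + t ^ (-δ))) * (1 + t) ^ N := by
        rw [show a = a' + δ by rw [hδ]; ring, Real.rpow_add ht]; ring
    _ ≤ t ^ a' * D * (2 * (1 + t) ^ (2 * δ)) * (1 + t) ^ N := by gcongr
    _ = _ := by rw [Real.rpow_add (by linarith : (0 : ℝ) < 1 + t)]; ring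

namespace IsSymbol

lemma exists_bound (h : IsSymbol n a k N g) :
    ∃ C : ℝ, 0 ≤ C ∧ ∀ t, 0 < t → ‖g t‖ ≤ C * logWeight a k N t := by
  obtain ⟨C, hC⟩ : ∃ C : ℝ, ∀ t, 0 < t → ‖g t‖ ≤ C * logWeight a k N t := by
    cases n with
    | zero => exact h
    | succ n => exact h.1
  refine ⟨|C|, abs_nonneg C, fun t ht => (hC t ht).trans ?_⟩
  have := logWeight_pos (a := a) (k := k) (N := N) ht
  gcongr
  exact le_abs_self C

lemma order_zero (h : IsSymbol n a k N g) : IsSymbol 0 a k N g :=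
  let ⟨C, _, hC⟩ := h.exists_bound
  ⟨C, hC⟩

lemma congr (h : IsSymbol n a k N g) (hg : ∀ t, 0 < t → g' t = g t) : IsSymbol n a k N g' := by
  induction n generalizing a g g' with
  | zero =>
    obtain ⟨C, hC⟩ := h
    exact ⟨C, fun t ht => hg t ht ▸ hC t ht⟩
  | succ n ih =>
    obtain ⟨⟨C, hC⟩, hdiff, hderiv⟩ := h
    have heq : ∀ t, 0 < t → g' =ᶠ[nhds t] g := fun t ht => by
      filter_upwards [lt_mem_nhds ht] with s hs using hg s hs
    exact ⟨⟨C, fun t ht => hg t ht ▸ hC t ht⟩,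
      fun t ht => (hdiff t ht).congr_of_eventuallyEq (heq t ht),
      ih hderiv fun t ht => (heq t ht).deriv_eq⟩

lemma succ_of_hasDerivAt (hbound : IsSymbol 0 a k N g)
    (hderiv : ∀ t, 0 < t → HasDerivAt g (g' t) t) (h : IsSymbol n (a - 1) k N g') :
    IsSymbol (n + 1) a k N g :=
  ⟨hbound, fun t ht => (hderiv t ht).differentiableAt, h.congr fun t ht => (hderiv t ht).deriv⟩

lemma hasDerivAt (h : IsSymbol (n + 1) a k N g) {t : ℝ} (ht : 0 < t) :
    HasDerivAt g (deriv g t) t :=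
  (h.2.1 t ht).hasDerivAt

protected lemma deriv (h : IsSymbol (n + 1) a k N g) : IsSymbol n (a - 1) k N (deriv g) :=
  h.2.2

lemma of_succ (h : IsSymbol (n + 1) a k N g) : IsSymbol n a k N g := by
  induction n generalizing a g with
  | zero => exact h.order_zero
  | succ n ih => exact succ_of_hasDerivAt h.order_zero (fun t ht => h.hasDerivAt ht) (ih h.deriv)

lemma mono_weight (h : IsSymbol n a k N g) {D : ℝ}
    (hw : ∀ t, 0 < t → logWeight a k N t ≤ D * logWeight a' k' N' t) :
    IsSymbol n a' k' N' g := by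
  have bound : ∀ {b b' : ℝ} {g : ℝ → ℂ}, IsSymbol 0 b k N g →
      (∀ t, 0 < t → logWeight b k N t ≤ D * logWeight b' k' N' t) → IsSymbol 0 b' k' N' g := by
    intro b b' g h hw
    obtain ⟨C, hC0, hC⟩ := h.exists_bound
    refine ⟨C * D, fun t ht => (hC t ht).trans ?_⟩
    rw [mul_assoc]
    gcongr
    exact hw t ht
  induction n generalizing a a' g with
  | zero => exact bound h hw
  | succ n ih =>
    refine succ_of_hasDerivAt (bound h.order_zero hw) (fun t ht => h.hasDerivAt ht)
      (ih h.deriv fun t ht => ?_)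
    rw [logWeight_sub_one ht, logWeight_sub_one ht, mul_left_comm]
    gcongr
    exact hw t ht

lemma mono (h : IsSymbol n a k N g) (hk : k ≤ k') (hN : N ≤ N') : IsSymbol n a k' N' g :=
  h.mono_weight (D := 1) fun t ht => by simpa using logWeight_mono ht hk hN

lemma of_exponent_lt (h : IsSymbol n a k N g) (ha : a' < a) :
    IsSymbol n a' 0 (N + 2 * (a - a')) g := by
  obtain ⟨D, -, hD⟩ := exists_logWeight_le ha k N
  exact h.mono_weight hD

lemma of_exponent_lt_of_forall (hg : ∀ N, IsSymbol n a k N g) (ha : a' < a) (k' : ℕ)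
    (N : ℝ) : IsSymbol n a' k' N g :=
  ((hg (N - 2 * (a - a'))).of_exponent_lt ha).mono k'.zero_le (by linarith)

lemma add_order_zero (h : IsSymbol 0 a k N g) (h' : IsSymbol 0 a k N g') :
    IsSymbol 0 a k N (fun t => g t + g' t) := by
  obtain ⟨C, hC⟩ := h
  obtain ⟨C', hC'⟩ := h'
  refine ⟨C + C', fun t ht => (norm_add_le _ _).trans ?_⟩
  rw [add_mul]
  exact add_le_add (hC t ht) (hC' t ht)

lemma add (h : IsSymbol n a k N g) (h' : IsSymbol n a k N g') :
    IsSymbol n a k N (fun t => g t + g' t) := by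
  induction n generalizing a g g' with
  | zero => exact h.add_order_zero h'
  | succ n ih =>
    exact succ_of_hasDerivAt (h.order_zero.add_order_zero h'.order_zero)
      (fun t ht => (h.hasDerivAt ht).add (h'.hasDerivAt ht)) (ih h.deriv h'.deriv)

lemma mul_order_zero (h : IsSymbol 0 a k N g) (h' : IsSymbol 0 a' k' N' g') :
    IsSymbol 0 (a + a') (k + k') (N + N') (fun t => g t * g' t) := by
  obtain ⟨C, hC0, hC⟩ := h.exists_bound
  obtain ⟨C', -, hC'⟩ := h'.exists_bound
  refine ⟨C * C', fun t ht => ?_⟩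
  have := logWeight_pos (a := a) (k := k) (N := N) ht
  calc ‖g t * g' t‖ = ‖g t‖ * ‖g' t‖ := norm_mul _ _
    _ ≤ C * logWeight a k N t * (C' * logWeight a' k' N' t) := by
        gcongr
        · exact hC t ht
        · exact hC' t ht
    _ = _ := by rw [mul_mul_mul_comm, logWeight_mul_logWeight ht]

lemma mul (h : IsSymbol n a k N g) (h' : IsSymbol n a' k' N' g') :
    IsSymbol n (a + a') (k + k') (N + N') (fun t => g t * g' t) := by
  induction n generalizing a a' g g' with
  | zero => exact h.mul_order_zero h'
  | succ n ih =>
    refine succ_of_hasDerivAt (h.order_zero.mul_order_zero h'.order_zero)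
      (fun t ht => (h.hasDerivAt ht).mul (h'.hasDerivAt ht)) (add ?_ ?_)
    · simpa only [sub_add_eq_add_sub] using ih h.deriv h'.of_succ
    · simpa only [add_sub_assoc] using ih h.of_succ h'.deriv

lemma const (n : ℕ) (c : ℂ) : IsSymbol n 0 0 0 (fun _ => c) := by
  have bound : ∀ (a : ℝ) (k : ℕ) (N : ℝ), IsSymbol 0 a k N (fun _ => (0 : ℂ)) :=
    fun a k N => ⟨0, by simp⟩
  have zero : ∀ (n : ℕ) (a : ℝ), IsSymbol n a 0 0 (fun _ => (0 : ℂ)) := by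
    intro n
    induction n with
    | zero => exact fun a => bound a 0 0
    | succ n ih =>
      exact fun a => succ_of_hasDerivAt (bound a 0 0) (fun t _ => hasDerivAt_const t 0) (ih _)
  have hc : IsSymbol 0 0 0 0 (fun _ => c) := ⟨‖c‖, by simp [logWeight]⟩
  cases n with
  | zero => exact hc
  | succ n => exact succ_of_hasDerivAt hc (fun t _ => hasDerivAt_const t c) (zero n _)

lemma const_mul (c : ℂ) (h : IsSymbol n a k N g) : IsSymbol n a k N (fun t => c * g t) := by
  simpa using (const n c).mul h

lemma sub (h : IsSymbol n a k N g) (h' : IsSymbol n a k N g') :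
    IsSymbol n a k N (fun t => g t - g' t) := by
  simpa [sub_eq_add_neg] using h.add (h'.const_mul (-1))

lemma rpow (n : ℕ) (a : ℝ) : IsSymbol n a 0 0 (fun t => ((t ^ a : ℝ) : ℂ)) := by
  have bound : ∀ a, IsSymbol 0 a 0 0 (fun t => ((t ^ a : ℝ) : ℂ)) := fun a =>
    ⟨1, fun t ht => by
      rw [Complex.norm_real, Real.norm_of_nonneg (by positivity)]
      simp [logWeight]⟩
  induction n generalizing a with
  | zero => exact bound a
  | succ n ih =>
    refine succ_of_hasDerivAt (bound a) (fun t ht => ?_) ((ih (a - 1)).const_mul a)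
    simpa using (Real.hasDerivAt_rpow_const (p := a) (Or.inl ht.ne')).ofReal_comp

lemma ofReal (n : ℕ) : IsSymbol n 1 0 0 (fun t => (t : ℂ)) :=
  (rpow n 1).congr fun t _ => by rw [Real.rpow_one]

protected lemma log (n : ℕ) : IsSymbol n 0 1 0 (fun t => ((Real.log t : ℝ) : ℂ)) := by
  have bound : IsSymbol 0 0 1 0 (fun t => ((Real.log t : ℝ) : ℂ)) :=
    ⟨1, fun t _ => by rw [Complex.norm_real, Real.norm_eq_abs]; simp [logWeight]⟩
  cases n with
  | zero => exact bound
  | succ n =>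
    refine succ_of_hasDerivAt bound (fun t ht => (Real.hasDerivAt_log ht.ne').ofReal_comp) ?_
    rw [zero_sub]
    exact ((rpow n (-1)).mono zero_le_one le_rfl).congr fun t _ => by rw [Real.rpow_neg_one]

lemma log_pow (n m : ℕ) : IsSymbol n 0 m 0 (fun t => ((Real.log t : ℝ) : ℂ) ^ m) := by
  induction m with
  | zero => simpa using const n 1
  | succ m ih => simpa [pow_succ] using ih.mul (IsSymbol.log n)

protected lemma exp {ψ : ℝ → ℂ} (hb : 0 ≤ b) (hψ : IsSymbol n b 0 N' ψ)
    (hdecay : ∀ N, IsSymbol 0 0 0 N fun t => Complex.exp (ψ t)) (N : ℝ) :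
    IsSymbol n 0 0 N fun t => Complex.exp (ψ t) := by
  induction n generalizing N with
  | zero => exact hdecay N
  | succ n ih =>
    refine succ_of_hasDerivAt (hdecay N) (fun t ht => (hψ.hasDerivAt ht).cexp) ?_
    obtain ⟨M, hM⟩ : ∃ M, IsSymbol n (-1) 0 M (_root_.deriv ψ) := by
      rcases hb.eq_or_lt with rfl | hb
      · exact ⟨N', by simpa using hψ.deriv⟩
      · exact ⟨_, hψ.deriv.of_exponent_lt (by linarith)⟩
    simpa using (ih hψ.of_succ (N - M)).mul hM

end IsSymbol

lemma norm_cexp_sub_cexp_le (z w : ℂ) :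
    ‖Complex.exp z - Complex.exp w‖ ≤ (‖Complex.exp z‖ + ‖Complex.exp w‖) * ‖z - w‖ := by
  refine Convex.norm_image_sub_le_of_norm_hasDerivWithin_le (f' := Complex.exp)
    (s := {u : ℂ | u.re ≤ max z.re w.re}) (fun u _ => (Complex.hasDerivAt_exp u).hasDerivWithinAt)
    (fun u hu => ?_) (convex_halfSpace_re_le _) (show w.re ≤ _ from le_max_right _ _)
    (show z.re ≤ _ from le_max_left _ _)
  simp only [Complex.norm_exp]
  refine (Real.exp_le_exp.2 hu).trans ?_
  rcases max_choice z.re w.re with h | h <;> rw [h] <;>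
    linarith [Real.exp_pos z.re, Real.exp_pos w.re]

lemma IsSymbol.exp_sub_exp {ψ χ : ℝ → ℂ} (hb : 0 ≤ b) (hψ : IsSymbol n b 0 N' ψ)
    (hχ : IsSymbol n b 0 N' χ) (hψdecay : ∀ N, IsSymbol 0 0 0 N fun t => Complex.exp (ψ t))
    (hχdecay : ∀ N, IsSymbol 0 0 0 N fun t => Complex.exp (χ t)) (N : ℝ) :
    IsSymbol n b 0 N fun t => Complex.exp (ψ t) - Complex.exp (χ t) := by
  have bound : IsSymbol 0 b 0 N fun t => Complex.exp (ψ t) - Complex.exp (χ t) := by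
    obtain ⟨C₁, hC₁, h₁⟩ := (hψdecay (N - N')).exists_bound
    obtain ⟨C₂, hC₂, h₂⟩ := (hχdecay (N - N')).exists_bound
    obtain ⟨C, -, h⟩ := (hψ.sub hχ).exists_bound
    refine ⟨(C₁ + C₂) * C, fun t ht => ?_⟩
    have := logWeight_pos (a := 0) (k := 0) (N := N - N') ht
    calc ‖Complex.exp (ψ t) - Complex.exp (χ t)‖
        ≤ (‖Complex.exp (ψ t)‖ + ‖Complex.exp (χ t)‖) * ‖ψ t - χ t‖ := norm_cexp_sub_cexp_le _ _
      _ ≤ ((C₁ + C₂) * logWeight 0 0 (N - N') t) * (C * logWeight b 0 N' t) := by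
          rw [add_mul C₁]
          gcongr
          · exact h₁ t ht
          · exact h₂ t ht
          · exact h t ht
      _ = _ := by rw [mul_mul_mul_comm, logWeight_mul_logWeight ht, zero_add, add_zero,
          sub_add_cancel]
  cases n with
  | zero => exact bound
  | succ n =>
    refine succ_of_hasDerivAt bound
      (fun t ht => (hψ.hasDerivAt ht).cexp.sub (hχ.hasDerivAt ht).cexp) (sub ?_ ?_)
    · simpa using (IsSymbol.exp hb hψ.of_succ hψdecay (N - N')).mul hψ.deriv
    · simpa using (IsSymbol.exp hb hχ.of_succ hχdecay (N - N')).mul hχ.deriv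

lemma one_add_rpow_le {t s : ℝ} (ht : 0 ≤ t) (hs : 0 ≤ s) :
    (1 + t) ^ s ≤ 2 ^ s * (1 + t ^ s) := by
  have h1t : 1 + t ≤ 2 * max 1 t := by
    linarith [le_max_left 1 t, le_max_right 1 t]
  calc (1 + t) ^ s ≤ (2 * max 1 t) ^ s := by gcongr
    _ = 2 ^ s * max 1 t ^ s := Real.mul_rpow (by norm_num) (by positivity)
    _ ≤ 2 ^ s * (1 + t ^ s) := by
        gcongr
        have := Real.rpow_nonneg ht s
        rcases max_choice 1 t with h | h <;> rw [h]
        · rw [Real.one_rpow]; linarith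
        · linarith

lemma exists_exp_neg_mul_rpow_le (N : ℝ) {c p : ℝ} (hc : 0 < c) (hp : 0 < p) :
    ∃ C : ℝ, 0 ≤ C ∧ ∀ t, 0 < t → Real.exp (-(c * t ^ p)) ≤ C * (1 + t) ^ N := by
  obtain ⟨m, hm⟩ := exists_nat_ge (|N| / p)
  have hNm : |N| ≤ p * m := by rwa [div_le_iff₀' hp] at hm
  refine ⟨2 ^ (p * m) * (1 + m.factorial / c ^ m), by positivity, fun t ht => ?_⟩
  have hdecay : Real.exp (-(c * t ^ p)) * t ^ (p * m) ≤ m.factorial / c ^ m := by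
    have := Real.pow_div_factorial_le_exp (x := c * t ^ p) (by positivity) m
    rw [div_le_iff₀ (by positivity), mul_pow, ← Real.rpow_mul_natCast ht.le] at this
    rw [Real.exp_neg, le_div_iff₀ (by positivity), inv_mul_eq_div, div_mul_eq_mul_div,
      div_le_iff₀ (by positivity)]
    linarith
  have hle_one : Real.exp (-(c * t ^ p)) ≤ 1 := Real.exp_le_one_iff.2 (neg_nonpos.2 (by positivity))
  have hN : (1 + t) ^ (-N) ≤ 2 ^ (p * m) * (1 + t ^ (p * m)) :=
    (Real.rpow_le_rpow_of_exponent_le (by linarith) ((neg_le_abs N).trans hNm)).trans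
      (one_add_rpow_le ht.le (by positivity))
  rw [← div_le_iff₀ (by positivity), div_eq_mul_inv, ← Real.rpow_neg (by positivity)]
  calc Real.exp (-(c * t ^ p)) * (1 + t) ^ (-N)
      ≤ Real.exp (-(c * t ^ p)) * (2 ^ (p * m) * (1 + t ^ (p * m))) := by gcongr
    _ = 2 ^ (p * m) * (Real.exp (-(c * t ^ p)) + Real.exp (-(c * t ^ p)) * t ^ (p * m)) := by ring
    _ ≤ _ := by gcongr

end SymbolCalculus

/-! ### Half-line Fourier integrals of symbols -/

section TailLemma

open Set Asymptotics Bornology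

/-- The half-line Fourier integral `∫₀^∞ e^{-itx} g(t) dt`. -/
def halfLineFourier (g : ℝ → ℂ) (x : ℝ) : ℂ :=
  ∫ t in Ioi (0 : ℝ), Complex.exp (-Complex.I * t * x) * g t

variable {n k : ℕ} {a N r x : ℝ} {g g' : ℝ → ℂ}

lemma norm_cexp_neg_I_mul (t x : ℝ) : ‖Complex.exp (-Complex.I * t * x)‖ = 1 := by
  rw [Complex.norm_exp]
  simp

lemma measurable_logWeight : Measurable (logWeight a k N) := by
  unfold logWeight
  fun_prop

lemma integrableOn_logWeight {s : Set ℝ} (hs : MeasurableSet s) (hpos : s ⊆ Ioi 0) {δ : ℝ}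
    (hδ : 0 < δ) (hadd : IntegrableOn (fun t : ℝ => t ^ (a + δ)) s)
    (hsub : IntegrableOn (fun t : ℝ => t ^ (a - δ)) s) :
    IntegrableOn (logWeight a k 0) s := by
  obtain ⟨D, -, hD⟩ := exists_one_add_abs_log_pow_le k hδ
  refine Integrable.mono' ((hadd.add hsub).const_mul D) measurable_logWeight.aestronglyMeasurable
    ((ae_restrict_iff' hs).2 (Eventually.of_forall fun t hts => ?_))
  have ht : 0 < t := hpos hts
  rw [Real.norm_of_nonneg (logWeight_pos ht).le, logWeight, Real.rpow_zero, mul_one]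
  calc t ^ a * (1 + |Real.log t|) ^ k ≤ t ^ a * (D * (t ^ δ + t ^ (-δ))) := by
        gcongr; exact hD t ht
    _ = D * (t ^ (a + δ) + t ^ (a - δ)) := by
        rw [sub_eq_add_neg, Real.rpow_add ht, Real.rpow_add ht]; ring

lemma integrableOn_Ioc_logWeight (ha : -1 < a) (r : ℝ) :
    IntegrableOn (logWeight a k 0) (Ioc 0 r) := by
  have hint : ∀ {p : ℝ}, -1 < p → IntegrableOn (fun t : ℝ => t ^ p) (Ioc 0 r) := fun hp =>
    (intervalIntegral.intervalIntegrable_rpow' hp).1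
  exact integrableOn_logWeight measurableSet_Ioc (fun t ht => ht.1) (δ := (a + 1) / 2)
    (by linarith) (hint (by linarith)) (hint (by linarith))

lemma integrableOn_Ioi_logWeight (ha : a < -1) (hr : 0 < r) :
    IntegrableOn (logWeight a k 0) (Ioi r) := by
  have hint : ∀ {p : ℝ}, p < -1 → IntegrableOn (fun t : ℝ => t ^ p) (Ioi r) := fun hp =>
    integrableOn_Ioi_rpow_of_lt hp hr
  exact integrableOn_logWeight measurableSet_Ioi (Ioi_subset_Ioi hr.le) (δ := -(a + 1) / 2)
    (by linarith) (hint (by linarith)) (hint (by linarith))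

lemma logWeight_le_mul_logWeight_mul {y t : ℝ} (hy : 1 ≤ y) (ht : 0 < t) :
    logWeight a k 0 t ≤ y ^ (-a) * (1 + Real.log y) ^ k * logWeight a k 0 (y * t) := by
  have hy0 : 0 < y := by linarith
  have hlogy := Real.log_nonneg hy
  have hlog : 1 + |Real.log t| ≤ (1 + Real.log y) * (1 + |Real.log (y * t)|) := by
    have := abs_sub (Real.log (y * t)) (Real.log y)
    rw [Real.log_mul hy0.ne' ht.ne', add_sub_cancel_left, abs_of_nonneg hlogy] at this
    rw [Real.log_mul hy0.ne' ht.ne']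
    nlinarith [abs_nonneg (Real.log y + Real.log t)]
  simp only [logWeight, Real.rpow_zero, mul_one]
  calc t ^ a * (1 + |Real.log t|) ^ k
      ≤ t ^ a * ((1 + Real.log y) * (1 + |Real.log (y * t)|)) ^ k := by gcongr
    _ = _ := by
        rw [Real.mul_rpow hy0.le ht.le, Real.rpow_neg hy0.le, mul_pow]
        field_simp

lemma exists_setIntegral_Ioc_logWeight_le (k : ℕ) (ha : -1 < a) :
    ∃ C, 0 ≤ C ∧ ∀ y : ℝ, 1 ≤ y →
      ∫ t in Ioc 0 y⁻¹, logWeight a k 0 t ≤ C * (y ^ (-(1 + a)) * (1 + Real.log y) ^ k) := by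
  refine ⟨∫ t in Ioc 0 1, logWeight a k 0 t, setIntegral_nonneg measurableSet_Ioc
    fun t ht => (logWeight_pos ht.1).le, fun y hy => ?_⟩
  have hy0 : 0 < y := by linarith
  have hscale : ∫ t in Ioc 0 y⁻¹, logWeight a k 0 (y * t) =
      y⁻¹ * ∫ t in Ioc 0 1, logWeight a k 0 t := by
    rw [← intervalIntegral.integral_of_le (inv_nonneg.2 hy0.le),
      ← intervalIntegral.integral_of_le zero_le_one,
      intervalIntegral.integral_comp_mul_left _ hy0.ne', mul_zero, mul_inv_cancel₀ hy0.ne',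
      smul_eq_mul]
  have hint : IntegrableOn (fun t => logWeight a k 0 (y * t)) (Ioc 0 y⁻¹) := by
    have := ((intervalIntegrable_iff_integrableOn_Ioc_of_le zero_le_one).2
      (integrableOn_Ioc_logWeight (k := k) ha 1)).comp_mul_left (c := y)
    rw [zero_div, one_div] at this
    exact this.1
  calc ∫ t in Ioc 0 y⁻¹, logWeight a k 0 t
      ≤ ∫ t in Ioc 0 y⁻¹, y ^ (-a) * (1 + Real.log y) ^ k * logWeight a k 0 (y * t) :=
        setIntegral_mono_on (integrableOn_Ioc_logWeight ha _) (hint.const_mul _)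
          measurableSet_Ioc fun t ht => logWeight_le_mul_logWeight_mul hy ht.1
    _ = _ := by
        rw [integral_const_mul, hscale, neg_add, ← sub_eq_neg_add, Real.rpow_sub_one hy0.ne']
        ring

lemma exists_setIntegral_Ioi_logWeight_le (k : ℕ) (ha : a < -1) :
    ∃ C, 0 ≤ C ∧ ∀ y : ℝ, 1 ≤ y →
      ∫ t in Ioi y⁻¹, logWeight a k 0 t ≤ C * (y ^ (-(1 + a)) * (1 + Real.log y) ^ k) := by
  refine ⟨∫ t in Ioi 1, logWeight a k 0 t, setIntegral_nonneg measurableSet_Ioi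
    fun t ht => (logWeight_pos (zero_lt_one.trans ht)).le, fun y hy => ?_⟩
  have hy0 : 0 < y := by linarith
  have hscale : ∫ t in Ioi y⁻¹, logWeight a k 0 (y * t) =
      y⁻¹ * ∫ t in Ioi 1, logWeight a k 0 t := by
    rw [integral_comp_mul_left_Ioi _ _ hy0, mul_inv_cancel₀ hy0.ne', smul_eq_mul]
  have hint : IntegrableOn (fun t => logWeight a k 0 (y * t)) (Ioi y⁻¹) := by
    rw [integrableOn_Ioi_comp_mul_left_iff _ _ hy0, mul_inv_cancel₀ hy0.ne']
    exact integrableOn_Ioi_logWeight ha one_pos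
  calc ∫ t in Ioi y⁻¹, logWeight a k 0 t
      ≤ ∫ t in Ioi y⁻¹, y ^ (-a) * (1 + Real.log y) ^ k * logWeight a k 0 (y * t) :=
        setIntegral_mono_on (integrableOn_Ioi_logWeight ha (inv_pos.2 hy0)) (hint.const_mul _)
          measurableSet_Ioi fun t ht =>
            logWeight_le_mul_logWeight_mul hy ((inv_pos.2 hy0).trans ht)
    _ = _ := by
        rw [integral_const_mul, hscale, neg_add, ← sub_eq_neg_add, Real.rpow_sub_one hy0.ne']
        ring

lemma integrableOn_cexp_mul {s : Set ℝ} (x : ℝ) (hg : IntegrableOn g s) :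
    IntegrableOn (fun t : ℝ => Complex.exp (-Complex.I * t * x) * g t) s :=
  Integrable.bdd_mul (c := 1) hg (by fun_prop)
    (Eventually.of_forall fun t => (norm_cexp_neg_I_mul t x).le)

lemma norm_setIntegral_Ioi_cexp_mul_le (hx : x ≠ 0)
    (hderiv : ∀ t ∈ Ici r, HasDerivAt g (g' t) t) (hg : IntegrableOn g (Ioi r))
    (hg' : IntegrableOn g' (Ioi r)) :
    ‖∫ t in Ioi r, Complex.exp (-Complex.I * t * x) * g t‖ ≤
      (‖g r‖ + ‖∫ t in Ioi r, Complex.exp (-Complex.I * t * x) * g' t‖) / |x| := by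
  have hprod : ∀ t ∈ Ici r, HasDerivAt (fun t : ℝ => Complex.exp (-Complex.I * t * x) * g t)
      ((-Complex.I * x) * (Complex.exp (-Complex.I * t * x) * g t) +
        Complex.exp (-Complex.I * t * x) * g' t) t := by
    intro t ht
    have harg : HasDerivAt (fun t : ℝ => -Complex.I * (t : ℂ) * x) (-Complex.I * 1 * x) t :=
      ((Complex.ofRealCLM.hasDerivAt (x := t)).const_mul (-Complex.I)).mul_const _
    exact (harg.cexp.mul (hderiv t ht)).congr_deriv (by ring)
  have hint := (integrableOn_cexp_mul x hg).const_mul (-Complex.I * x)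
  have hint' := integrableOn_cexp_mul x hg'
  have hlim := tendsto_zero_of_hasDerivAt_of_integrableOn_Ioi
    (fun t ht => hprod t (Ioi_subset_Ici_self ht)) (hint.add hint') (integrableOn_cexp_mul x hg)
  have hftc := integral_Ioi_of_hasDerivAt_of_tendsto' hprod (hint.add hint') hlim
  rw [integral_add hint hint', integral_const_mul] at hftc
  rw [le_div_iff₀ (abs_pos.2 hx)]
  calc ‖∫ t in Ioi r, Complex.exp (-Complex.I * t * x) * g t‖ * |x|
      = ‖(-Complex.I * x) * ∫ t in Ioi r, Complex.exp (-Complex.I * t * x) * g t‖ := by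
        simp [mul_comm]
    _ ≤ _ := by
        rw [eq_sub_of_add_eq hftc, zero_sub]
        refine (norm_sub_le _ _).trans_eq ?_
        rw [norm_neg, norm_mul, norm_cexp_neg_I_mul, one_mul]

lemma logWeight_le_of_nonpos (hN : N ≤ 0) {t : ℝ} (ht : 0 < t) :
    logWeight a k N t ≤ logWeight (a + N) k 0 t := by
  have := Real.rpow_le_rpow_of_nonpos ht (by linarith : t ≤ 1 + t) hN
  calc logWeight a k N t ≤ t ^ a * (1 + |Real.log t|) ^ k * t ^ N := by unfold logWeight; gcongr
    _ = _ := by rw [logWeight, Real.rpow_add ht, Real.rpow_zero]; ring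

lemma IsSymbol.integrableOn_Ioi (hg : IsSymbol n a k N g) (hN : N ≤ 0) (haN : a + N < -1)
    (hmeas : AEStronglyMeasurable g (volume.restrict (Ioi r))) (hr : 0 < r) :
    IntegrableOn g (Ioi r) := by
  obtain ⟨C, hC0, hC⟩ := hg.exists_bound
  refine Integrable.mono' ((integrableOn_Ioi_logWeight (k := k) haN hr).const_mul C) hmeas
    ((ae_restrict_iff' measurableSet_Ioi).2 (Eventually.of_forall fun t ht => ?_))
  have ht0 : 0 < t := hr.trans ht
  exact (hC t ht0).trans (by gcongr; exact logWeight_le_of_nonpos hN ht0)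

lemma IsSymbol.integrableOn_Ioc (hg : IsSymbol n a k N g) (hN : N ≤ 0) (ha : -1 < a)
    (hmeas : AEStronglyMeasurable g (volume.restrict (Ioc 0 r))) :
    IntegrableOn g (Ioc 0 r) := by
  obtain ⟨C, hC0, hC⟩ := hg.exists_bound
  refine Integrable.mono' ((integrableOn_Ioc_logWeight (k := k) ha r).const_mul C) hmeas
    ((ae_restrict_iff' measurableSet_Ioc).2 (Eventually.of_forall fun t ht => ?_))
  exact (hC t ht.1).trans (by gcongr; exact logWeight_mono ht.1 le_rfl hN)

lemma IsSymbol.continuousOn (hg : IsSymbol (n + 1) a k N g) : ContinuousOn g (Ioi 0) :=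
  fun _ ht => (hg.hasDerivAt ht).continuousAt.continuousWithinAt

lemma norm_setIntegral_cexp_mul_le {C : ℝ} (hC0 : 0 ≤ C)
    (hC : ∀ t, 0 < t → ‖g t‖ ≤ C * logWeight a k N t) (hN : N ≤ 0) {s : Set ℝ}
    (hs : MeasurableSet s) (hpos : s ⊆ Ioi 0) (hint : IntegrableOn (logWeight a k 0) s) (x : ℝ) :
    ‖∫ t in s, Complex.exp (-Complex.I * t * x) * g t‖ ≤ C * ∫ t in s, logWeight a k 0 t := by
  rw [← integral_const_mul]
  refine norm_integral_le_of_norm_le (hint.const_mul C)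
    ((ae_restrict_iff' hs).2 (Eventually.of_forall fun t ht => ?_))
  rw [norm_mul, norm_cexp_neg_I_mul, one_mul]
  exact (hC t (hpos ht)).trans (by gcongr; exact logWeight_mono (hpos ht) le_rfl hN)

lemma IsSymbol.exists_norm_head_le (hg : IsSymbol n a k N g) (hN : N ≤ 0) (ha : -1 < a) :
    ∃ C, 0 ≤ C ∧ ∀ x : ℝ, 1 ≤ |x| →
      ‖∫ t in Ioc 0 |x|⁻¹, Complex.exp (-Complex.I * t * x) * g t‖ ≤
        C * (|x| ^ (-(1 + a)) * (1 + Real.log |x|) ^ k) := by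
  obtain ⟨C, hC0, hC⟩ := hg.exists_bound
  obtain ⟨D, hD0, hD⟩ := exists_setIntegral_Ioc_logWeight_le k ha
  refine ⟨C * D, by positivity, fun x hx => ?_⟩
  refine (norm_setIntegral_cexp_mul_le hC0 hC hN measurableSet_Ioc Ioc_subset_Ioi_self
    (integrableOn_Ioc_logWeight ha _) x).trans ?_
  rw [mul_assoc]
  gcongr
  exact hD |x| hx

lemma IsSymbol.aestronglyMeasurable (hg : IsSymbol (n + 1) a k N g) {s : Set ℝ}
    (hs : MeasurableSet s) (hpos : s ⊆ Ioi 0) : AEStronglyMeasurable g (volume.restrict s) :=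
  (hg.continuousOn.mono hpos).aestronglyMeasurable hs

/- Each integration by parts trades a factor `|x|⁻¹` for one order of decay of `g` at the origin;
once the exponent is below `-1`, the integral is bounded in absolute value. -/
lemma IsSymbol.exists_norm_tail_le (hg : IsSymbol n a k N g) (hN : N ≤ 0) (haN : a + N < -1)
    (han : a + 1 < n) :
    ∃ C, 0 ≤ C ∧ ∀ x : ℝ, 1 ≤ |x| →
      ‖∫ t in Ioi |x|⁻¹, Complex.exp (-Complex.I * t * x) * g t‖ ≤
        C * (|x| ^ (-(1 + a)) * (1 + Real.log |x|) ^ k) := by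
  induction n generalizing a g with
  | zero =>
    have ha : a < -1 := by rw [Nat.cast_zero] at han; linarith
    obtain ⟨C, hC0, hC⟩ := hg.exists_bound
    obtain ⟨D, hD0, hD⟩ := exists_setIntegral_Ioi_logWeight_le k ha
    refine ⟨C * D, by positivity, fun x hx => ?_⟩
    have hr : 0 < |x|⁻¹ := inv_pos.2 (by linarith)
    refine (norm_setIntegral_cexp_mul_le hC0 hC hN measurableSet_Ioi (Ioi_subset_Ioi hr.le)
      (integrableOn_Ioi_logWeight ha hr) x).trans ?_
    rw [mul_assoc]
    gcongr
    exact hD |x| hx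
  | succ n ih =>
    obtain ⟨C, hC0, hC⟩ := hg.exists_bound
    obtain ⟨D, hD0, hD⟩ := ih hg.deriv (by linarith) (by push_cast at han; linarith)
    refine ⟨C + D, by positivity, fun x hx => ?_⟩
    have hx0 : 0 < |x| := by linarith
    have hr : 0 < |x|⁻¹ := inv_pos.2 hx0
    have hboundary : ‖g |x|⁻¹‖ ≤ C * (|x| ^ (-a) * (1 + Real.log |x|) ^ k) := by
      refine (hC _ hr).trans ?_
      gcongr
      refine (logWeight_mono hr le_rfl hN).trans_eq ?_
      rw [logWeight, Real.rpow_zero, mul_one, Real.log_inv, abs_neg,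
        abs_of_nonneg (Real.log_nonneg hx), Real.inv_rpow hx0.le, Real.rpow_neg hx0.le]
    refine (norm_setIntegral_Ioi_cexp_mul_le (abs_pos.1 hx0)
      (fun t ht => hg.hasDerivAt (hr.trans_le ht))
      (hg.integrableOn_Ioi hN haN
        (hg.aestronglyMeasurable measurableSet_Ioi (Ioi_subset_Ioi hr.le)) hr)
      (hg.deriv.integrableOn_Ioi hN (by linarith) (aestronglyMeasurable_deriv g _) hr)).trans ?_
    rw [div_le_iff₀ hx0]
    refine (add_le_add hboundary (hD x hx)).trans_eq ?_
    rw [show -(1 + (a - 1)) = -a by ring, neg_add, ← sub_eq_neg_add, Real.rpow_sub_one hx0.ne']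
    field_simp

lemma IsSymbol.integrableOn_Ioi_zero (hg : IsSymbol (n + 1) a k N g) (hN : N ≤ 0)
    (haN : a + N < -1) (ha : -1 < a) : IntegrableOn g (Ioi 0) := by
  rw [← Ioc_union_Ioi_eq_Ioi zero_le_one]
  exact (hg.integrableOn_Ioc hN ha
    (hg.aestronglyMeasurable measurableSet_Ioc Ioc_subset_Ioi_self)).union
    (hg.integrableOn_Ioi hN haN
      (hg.aestronglyMeasurable measurableSet_Ioi (Ioi_subset_Ioi zero_le_one)) one_pos)

lemma isBigO_cobounded_of_bound {E : Type*} [Norm E] {F : ℝ → E} {C b : ℝ}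
    (h : ∀ x : ℝ, 1 ≤ |x| → ‖F x‖ ≤ C * (|x| ^ b * (1 + Real.log |x|) ^ k)) :
    F =O[cobounded ℝ] fun x => |x| ^ b * Real.log |x| ^ k := by
  refine IsBigO.of_bound (|C| * 2 ^ k) ?_
  filter_upwards [eventually_cobounded_le_norm (E := ℝ) (Real.exp 1)] with x hx
  rw [Real.norm_eq_abs] at hx
  have hlog : 1 ≤ Real.log |x| := (Real.le_log_iff_exp_le ((Real.exp_pos 1).trans_le hx)).2 hx
  have hx1 : 1 ≤ |x| := (Real.one_le_exp zero_le_one).trans hx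
  rw [Real.norm_of_nonneg (by positivity)]
  calc ‖F x‖ ≤ C * (|x| ^ b * (1 + Real.log |x|) ^ k) := h x hx1
    _ ≤ |C| * (|x| ^ b * (2 * Real.log |x|) ^ k) := by
        gcongr
        · exact le_abs_self C
        · linarith
    _ = _ := by rw [mul_pow]; ring

theorem IsSymbol.isBigO_halfLineFourier (hg : IsSymbol n a k N g) (hN : N ≤ 0) (haN : a + N < -1)
    (ha : -1 < a) (han : a + 1 < n) :
    halfLineFourier g =O[cobounded ℝ] fun x => |x| ^ (-(1 + a)) * Real.log |x| ^ k := by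
  obtain ⟨C, -, hC⟩ := hg.exists_norm_head_le hN ha
  obtain ⟨D, -, hD⟩ := hg.exists_norm_tail_le hN haN han
  obtain ⟨n, rfl⟩ : ∃ m, n = m + 1 := Nat.exists_eq_succ_of_ne_zero <| by
    rintro rfl
    rw [Nat.cast_zero] at han
    linarith
  refine isBigO_cobounded_of_bound (C := C + D) fun x hx => ?_
  have hr : 0 < |x|⁻¹ := inv_pos.2 (by linarith)
  have hint := integrableOn_cexp_mul x (hg.integrableOn_Ioi_zero hN haN ha)
  rw [← Ioc_union_Ioi_eq_Ioi hr.le] at hint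
  rw [halfLineFourier, ← Ioc_union_Ioi_eq_Ioi hr.le, setIntegral_union (Ioc_disjoint_Ioi le_rfl)
    measurableSet_Ioi hint.left_of_union hint.right_of_union, add_mul]
  exact (norm_add_le _ _).trans (add_le_add (hC x hx) (hD x hx))

end TailLemma

/-! ### Half-line sine transforms of symbols -/

section SineTransform

open Set Asymptotics Bornology

variable {n k k' : ℕ} {a a' N x : ℝ} {g g' g'' F F' : ℝ → ℂ}

/-- The half-line sine transform `∫₀^∞ sin(tx) g(t) dt`. The zero of the sine at the origin makes
it converge for symbols of exponent greater than `-2`, and not only greater than `-1`. -/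
def halfLineSine (g : ℝ → ℂ) (x : ℝ) : ℂ :=
  ∫ t in Ioi (0 : ℝ), (Real.sin (t * x) : ℂ) * g t

lemma re_halfLineFourier_eq_im_halfLineSine (hg : IntegrableOn g (Ioi 0))
    (hre : ∀ t, 0 < t → (g t).re = 0) :
    (halfLineFourier g x).re = (halfLineSine g x).im := by
  have hsin : IntegrableOn (fun t : ℝ => (Real.sin (t * x) : ℂ) * g t) (Ioi 0) :=
    Integrable.bdd_mul (c := 1) hg (by fun_prop)
      (Eventually.of_forall fun t => by
        rw [Complex.norm_real]; exact Real.abs_sin_le_one _)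
  have hL := Complex.reCLM.integral_comp_comm (integrableOn_cexp_mul x hg)
  have hR := Complex.imCLM.integral_comp_comm hsin
  simp only [Complex.reCLM_apply, Complex.imCLM_apply] at hL hR
  rw [halfLineFourier, halfLineSine, ← hL, ← hR]
  refine setIntegral_congr_fun measurableSet_Ioi fun t ht => ?_
  have harg : -Complex.I * t * x = ((-(t * x) : ℝ) : ℂ) * Complex.I := by push_cast; ring
  simp only [harg, Complex.mul_re, hre t ht, Complex.exp_ofReal_mul_I_im, Real.sin_neg,
    Complex.im_ofReal_mul]
  ring

lemma norm_sin_mul_le (z : ℂ) (t : ℝ) :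
    ‖(Real.sin (t * x) : ℂ) * z‖ ≤ |x| * ‖(t : ℂ) * z‖ := by
  rw [norm_mul, norm_mul, Complex.norm_real, Complex.norm_real, Real.norm_eq_abs, Real.norm_eq_abs,
    ← mul_assoc, mul_comm |x|, ← abs_mul]
  exact mul_le_mul_of_nonneg_right Real.abs_sin_le_abs (norm_nonneg z)

lemma IsSymbol.integrableOn_sin_mul (hg : IsSymbol (n + 1) a k N g) (hN : N ≤ 0)
    (haN : a + N < -1) (ha : -2 < a) (x : ℝ) :
    IntegrableOn (fun t : ℝ => (Real.sin (t * x) : ℂ) * g t) (Ioi 0) := by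
  have hmeas : ∀ {s}, MeasurableSet s → s ⊆ Ioi 0 → AEStronglyMeasurable
      (fun t : ℝ => (Real.sin (t * x) : ℂ) * g t) (volume.restrict s) := fun hs hpos =>
    (by fun_prop : Continuous fun t : ℝ => (Real.sin (t * x) : ℂ)).aestronglyMeasurable.mul
      (hg.aestronglyMeasurable hs hpos)
  have hmul := (IsSymbol.ofReal (n + 1)).mul hg
  rw [← Ioc_union_Ioi_eq_Ioi zero_le_one]
  refine IntegrableOn.union ?_ ?_
  · exact Integrable.mono' ((hmul.integrableOn_Ioc (by linarith) (by linarith)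
      (hmul.aestronglyMeasurable measurableSet_Ioc Ioc_subset_Ioi_self)).norm.const_mul |x|)
      (hmeas measurableSet_Ioc Ioc_subset_Ioi_self)
      ((ae_restrict_iff' measurableSet_Ioc).2
        (Eventually.of_forall fun t _ => norm_sin_mul_le _ t))
  · exact Integrable.bdd_mul (c := 1) (hg.integrableOn_Ioi hN haN
      (hg.aestronglyMeasurable measurableSet_Ioi (Ioi_subset_Ioi zero_le_one)) one_pos)
      (by fun_prop) (Eventually.of_forall fun t => by
        rw [Complex.norm_real]; exact Real.abs_sin_le_one _)

lemma IsSymbol.exists_norm_sine_head_le (hg : IsSymbol n a k N g) (hN : N ≤ 0) (ha : -2 < a) :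
    ∃ C, 0 ≤ C ∧ ∀ x : ℝ, 1 ≤ |x| →
      ‖∫ t in Ioc 0 |x|⁻¹, (Real.sin (t * x) : ℂ) * g t‖ ≤
        C * (|x| ^ (-(1 + a)) * (1 + Real.log |x|) ^ k) := by
  obtain ⟨C, hC0, hC⟩ := ((IsSymbol.ofReal n).mul hg).exists_bound
  rw [zero_add, zero_add] at hC
  obtain ⟨D, hD0, hD⟩ := exists_setIntegral_Ioc_logWeight_le k (by linarith : -1 < 1 + a)
  refine ⟨C * D, by positivity, fun x hx => ?_⟩
  have hx0 : 0 < |x| := by linarith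
  calc ‖∫ t in Ioc 0 |x|⁻¹, (Real.sin (t * x) : ℂ) * g t‖
      ≤ ∫ t in Ioc 0 |x|⁻¹, |x| * C * logWeight (1 + a) k 0 t := by
        refine norm_integral_le_of_norm_le
          ((integrableOn_Ioc_logWeight (by linarith) _).const_mul _)
          ((ae_restrict_iff' measurableSet_Ioc).2 (Eventually.of_forall fun t ht => ?_))
        refine (norm_sin_mul_le _ t).trans ?_
        rw [mul_assoc]
        gcongr
        exact (hC t ht.1).trans (by gcongr; exact logWeight_mono ht.1 le_rfl hN)
    _ ≤ |x| * C * (D * (|x| ^ (-(1 + (1 + a))) * (1 + Real.log |x|) ^ k)) := by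
        rw [integral_const_mul]
        gcongr
        exact hD |x| hx
    _ = _ := by
        rw [show -(1 + (1 + a)) = -(1 + a) - 1 by ring, Real.rpow_sub_one hx0.ne']
        field_simp

lemma IsSymbol.exists_norm_sine_tail_le (hg : IsSymbol (n + 1) a k N g) (hN : N ≤ 0)
    (haN : a + N < -1) (han : a < n) :
    ∃ C, 0 ≤ C ∧ ∀ x : ℝ, 1 ≤ |x| →
      ‖∫ t in Ioi |x|⁻¹, (Real.sin (t * x) : ℂ) * g t‖ ≤
        C * (|x| ^ (-(1 + a)) * (1 + Real.log |x|) ^ k) := by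
  obtain ⟨C, hC0, hC⟩ := hg.exists_norm_tail_le hN haN (by push_cast; linarith)
  refine ⟨C, hC0, fun x hx => ?_⟩
  have hr : 0 < |x|⁻¹ := inv_pos.2 (by linarith)
  have hint := hg.integrableOn_Ioi hN haN
    (hg.aestronglyMeasurable measurableSet_Ioi (Ioi_subset_Ioi hr.le)) hr
  have hsplit : ∫ t in Ioi |x|⁻¹, (Real.sin (t * x) : ℂ) * g t =
      -Complex.I / 2 * ((∫ t in Ioi |x|⁻¹, Complex.exp (-Complex.I * t * (-x : ℝ)) * g t) -
        ∫ t in Ioi |x|⁻¹, Complex.exp (-Complex.I * t * x) * g t) := by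
    rw [← integral_sub (integrableOn_cexp_mul _ hint) (integrableOn_cexp_mul _ hint),
      ← integral_const_mul]
    refine integral_congr_ae (Eventually.of_forall fun t => ?_)
    simp only [Complex.ofReal_sin, Complex.sin, Complex.ofReal_mul, Complex.ofReal_neg]
    ring_nf
  have hneg := hC (-x) (by rwa [abs_neg])
  rw [abs_neg] at hneg
  rw [hsplit, norm_mul, norm_div, norm_neg, Complex.norm_I, Complex.norm_ofNat]
  linarith [hC x hx, norm_sub_le
    (∫ t in Ioi |x|⁻¹, Complex.exp (-Complex.I * t * (-x : ℝ)) * g t)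
    (∫ t in Ioi |x|⁻¹, Complex.exp (-Complex.I * t * x) * g t)]

theorem IsSymbol.isBigO_halfLineSine (hg : IsSymbol (n + 1) a k N g) (hN : N ≤ 0)
    (haN : a + N < -1) (ha : -2 < a) (han : a < n) :
    halfLineSine g =O[cobounded ℝ] fun x => |x| ^ (-(1 + a)) * Real.log |x| ^ k := by
  obtain ⟨C, -, hC⟩ := hg.exists_norm_sine_head_le hN ha
  obtain ⟨D, -, hD⟩ := hg.exists_norm_sine_tail_le hN haN han
  refine isBigO_cobounded_of_bound (C := C + D) fun x hx => ?_
  have hr : 0 < |x|⁻¹ := inv_pos.2 (by linarith)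
  have hint := hg.integrableOn_sin_mul hN haN ha x
  rw [← Ioc_union_Ioi_eq_Ioi hr.le] at hint
  rw [halfLineSine, ← Ioc_union_Ioi_eq_Ioi hr.le, setIntegral_union (Ioc_disjoint_Ioi le_rfl)
    measurableSet_Ioi hint.left_of_union hint.right_of_union, add_mul]
  exact (norm_add_le _ _).trans (add_le_add (hC x hx) (hD x hx))

lemma IsSymbol.tendsto_nhdsGT_zero (hF : IsSymbol 0 a k N F) (ha : 0 < a) :
    Tendsto F (nhdsWithin 0 (Ioi 0)) (nhds 0) := by
  obtain ⟨C, -, hC⟩ := (hF.of_exponent_lt (half_lt_self ha)).exists_bound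
  have hlim : Tendsto (fun t : ℝ => C * (t ^ (a / 2) * (1 + t) ^ (N + 2 * (a - a / 2))))
      (nhdsWithin 0 (Ioi 0)) (nhds (C * (0 ^ (a / 2) * (1 + 0) ^ (N + 2 * (a - a / 2))))) := by
    refine Tendsto.mono_left (ContinuousAt.tendsto ?_) nhdsWithin_le_nhds
    refine continuousAt_const.mul ((Real.continuousAt_rpow_const _ _ (Or.inr (by positivity))).mul
      ((continuousAt_const.add continuousAt_id).rpow_const (Or.inl ?_)))
    simp
  rw [Real.zero_rpow (by positivity), zero_mul, mul_zero] at hlim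
  refine squeeze_zero_norm' ?_ hlim
  filter_upwards [self_mem_nhdsWithin] with t ht
  simpa only [logWeight, pow_zero, mul_one] using hC t ht

lemma IsSymbol.integral_deriv_eq_zero (hF : IsSymbol 0 a k N F) (ha : 0 < a) (hN : N ≤ 0)
    (haN : a + N < -1) (hderiv : ∀ t ∈ Ioi 0, HasDerivAt F (F' t) t)
    (hF' : IntegrableOn F' (Ioi 0)) : ∫ t in Ioi 0, F' t = 0 := by
  have hcont : ContinuousOn F (Ioi 0) := fun t ht => (hderiv t ht).continuousAt.continuousWithinAt
  have hint : IntegrableOn F (Ioi 0) := by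
    rw [← Ioc_union_Ioi_eq_Ioi zero_le_one]
    exact (hF.integrableOn_Ioc hN (by linarith)
      ((hcont.mono Ioc_subset_Ioi_self).aestronglyMeasurable measurableSet_Ioc)).union
      (hF.integrableOn_Ioi hN haN ((hcont.mono (Ioi_subset_Ioi zero_le_one)).aestronglyMeasurable
        measurableSet_Ioi) one_pos)
  have := integral_Ioi_deriv_mul_eq_sub (v := fun _ => (1 : ℂ)) (v' := fun _ => 0) hderiv
    (fun t _ => hasDerivAt_const t 1) (by simpa [Pi.mul_def, Pi.add_def] using hF')
    (by simpa [Pi.mul_def] using hF.tendsto_nhdsGT_zero ha)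
    (by simpa [Pi.mul_def] using tendsto_zero_of_hasDerivAt_of_integrableOn_Ioi hderiv hF' hint)
  simpa using this

lemma IsSymbol.sin_mul (hg : IsSymbol 0 (a - 1) k N g) (x : ℝ) :
    IsSymbol 0 a k N fun t => (Real.sin (t * x) : ℂ) * g t := by
  obtain ⟨C, -, hC⟩ := ((IsSymbol.ofReal 0).mul hg).exists_bound
  rw [zero_add, zero_add, add_sub_cancel] at hC
  refine ⟨|x| * C, fun t ht => (norm_sin_mul_le _ t).trans ?_⟩
  rw [mul_assoc]
  exact mul_le_mul_of_nonneg_left (hC t ht) (abs_nonneg x)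

lemma IsSymbol.cos_mul (hg : IsSymbol 0 a k N g) (x : ℝ) :
    IsSymbol 0 a k N fun t => (Real.cos (t * x) : ℂ) * g t := by
  obtain ⟨C, -, hC⟩ := hg.exists_bound
  refine ⟨C, fun t ht => le_trans ?_ (hC t ht)⟩
  rw [norm_mul, Complex.norm_real]
  exact mul_le_of_le_one_left (norm_nonneg _) (Real.abs_cos_le_one _)

/- Two integrations by parts: the antiderivative `sin(tx) g' / x² - cos(tx) g / x` vanishes at both
ends. -/
lemma halfLineSine_eq (hg : IsSymbol (n + 3) a k N g) (ha : 0 < a) (hN : N ≤ 0) (haN : a + N < -1)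
    (hderiv : ∀ t, 0 < t → HasDerivAt g (g' t) t) (hderiv' : ∀ t, 0 < t → HasDerivAt g' (g'' t) t)
    (hx : x ≠ 0) : halfLineSine g x = -((x : ℂ) ^ 2)⁻¹ * halfLineSine g'' x := by
  have hg' : IsSymbol (n + 2) (a - 1) k N g' :=
    hg.deriv.congr fun t ht => (hderiv t ht).deriv.symm
  have hg'' : IsSymbol (n + 1) (a - 1 - 1) k N g'' :=
    hg'.deriv.congr fun t ht => (hderiv' t ht).deriv.symm
  have hint := hg.integrableOn_sin_mul hN haN (by linarith) x
  have hint'' := (hg''.integrableOn_sin_mul hN (by linarith) (by linarith) x).const_mul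
    ((x : ℂ) ^ 2)⁻¹
  have hprimitive : ∀ t ∈ Ioi (0 : ℝ), HasDerivAt
      (fun t : ℝ => ((x : ℂ) ^ 2)⁻¹ * ((Real.sin (t * x) : ℂ) * g' t) +
        -(x : ℂ)⁻¹ * ((Real.cos (t * x) : ℂ) * g t))
      ((Real.sin (t * x) : ℂ) * g t + ((x : ℂ) ^ 2)⁻¹ * ((Real.sin (t * x) : ℂ) * g'' t)) t := by
    intro t ht
    have harg : HasDerivAt (fun t : ℝ => t * x) x t := hasDerivAt_mul_const x
    refine (((harg.sin.ofReal_comp.mul (hderiv' t ht)).const_mul _).add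
      ((harg.cos.ofReal_comp.mul (hderiv t ht)).const_mul _)).congr_deriv ?_
    have hx' : (x : ℂ) ≠ 0 := Complex.ofReal_ne_zero.2 hx
    push_cast
    field_simp
    ring
  have hzero := IsSymbol.integral_deriv_eq_zero
    (((hg'.order_zero.sin_mul x).const_mul _).add ((hg.order_zero.cos_mul x).const_mul _))
    ha hN haN hprimitive (hint.add hint'')
  rw [integral_add hint hint'', integral_const_mul] at hzero
  rw [halfLineSine, halfLineSine, eq_neg_of_add_eq_zero_left hzero, neg_mul]

theorem IsSymbol.isBigO_re_halfLineFourier (hg : IsSymbol (n + 3) a k N g) (ha : 0 < a)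
    (hN : N ≤ 0) (haN : a + N < -1) (hre : ∀ t, 0 < t → (g t).re = 0)
    (hderiv : ∀ t, 0 < t → HasDerivAt g (g' t) t) (hderiv' : ∀ t, 0 < t → HasDerivAt g' (g'' t) t)
    (hg'' : IsSymbol (n + 1) a' k' N g'') (ha' : -2 < a') (han : a' < n) (haN' : a' + N < -1) :
    (fun x => (halfLineFourier g x).re) =O[cobounded ℝ]
      fun x => |x| ^ (-(3 + a')) * Real.log |x| ^ k' := by
  have hsine : (fun x : ℝ => (x ^ 2)⁻¹ * ‖halfLineSine g'' x‖) =O[cobounded ℝ]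
      fun x => (x ^ 2)⁻¹ * (|x| ^ (-(1 + a')) * Real.log |x| ^ k') :=
    (isBigO_refl _ _).mul (hg''.isBigO_halfLineSine hN haN' ha' han).norm_left
  refine (IsBigO.of_bound 1 ?_).trans (hsine.congr' .rfl ?_)
  all_goals filter_upwards [eventually_ne_cobounded (0 : ℝ)] with x hx
  · rw [re_halfLineFourier_eq_im_halfLineSine (hg.integrableOn_Ioi_zero hN haN (by linarith)) hre,
      halfLineSine_eq hg ha hN haN hderiv hderiv' hx, one_mul]
    refine (Complex.abs_im_le_norm _).trans_eq ?_
    simp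
  · rw [← mul_assoc, ← sq_abs, ← Real.rpow_natCast, ← Real.rpow_neg (abs_nonneg x),
      ← Real.rpow_add (abs_pos.2 hx)]
    congr 2
    push_cast
    ring

lemma IsSymbol.exp_neg (n : ℕ) (N : ℝ) : IsSymbol n 0 0 N fun t => Complex.exp (-(t : ℂ)) := by
  refine IsSymbol.exp zero_le_one
    (((IsSymbol.ofReal n).const_mul (-1)).congr fun t _ => (neg_one_mul _).symm) (fun N => ?_) N
  obtain ⟨C, -, hC⟩ := exists_exp_neg_mul_rpow_le N one_pos one_pos
  refine ⟨C, fun t ht => ?_⟩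
  simpa [Complex.norm_exp, logWeight] using hC t ht

lemma IsSymbol.mul_exp_neg (hg : IsSymbol n a k N g) (N' : ℝ) :
    IsSymbol n a k N' fun t => g t * Complex.exp (-(t : ℂ)) := by
  simpa using hg.mul (IsSymbol.exp_neg n (N' - N))

lemma IsSymbol.mul_exp_neg_of_lt (hg : IsSymbol n a k N g) (ha : a' < a) (k' : ℕ) (N' : ℝ) :
    IsSymbol n a' k' N' fun t => g t * Complex.exp (-(t : ℂ)) :=
  .of_exponent_lt_of_forall hg.mul_exp_neg ha k' N'

lemma hasDerivAt_mul_exp_neg {z : ℂ} {t : ℝ} (hg : HasDerivAt g z t) :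
    HasDerivAt (fun t : ℝ => g t * Complex.exp (-(t : ℂ))) ((z - g t) * Complex.exp (-(t : ℂ)))
      t :=
  (hg.mul (Complex.ofRealCLM.hasDerivAt (x := t)).neg.cexp).congr_deriv (by
    simp only [Pi.neg_apply, Complex.ofRealCLM_apply, Complex.ofReal_one]; ring)

/-- The profile `i c t log^m t · e^{-t}`, whose half-line Fourier integral has a real part of lower
order than the integral itself. -/
def linearLog (c : ℝ) (m : ℕ) (t : ℝ) : ℂ :=
  Complex.I * c * (t * (Real.log t : ℂ) ^ m) * Complex.exp (-(t : ℂ))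

lemma hasDerivAt_ofReal_log_pow (m : ℕ) {t : ℝ} (ht : 0 < t) :
    HasDerivAt (fun t : ℝ => (Real.log t : ℂ) ^ m) (m * (Real.log t : ℂ) ^ (m - 1) * (t : ℂ)⁻¹) t :=
  ((Real.hasDerivAt_log ht.ne').ofReal_comp.pow m).congr_deriv (by push_cast; ring)

lemma hasDerivAt_ofReal_mul_log_pow (m : ℕ) {t : ℝ} (ht : 0 < t) :
    HasDerivAt (fun t : ℝ => (t : ℂ) * (Real.log t : ℂ) ^ m)
      ((Real.log t : ℂ) ^ m + m * (Real.log t : ℂ) ^ (m - 1)) t := by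
  have ht' : (t : ℂ) ≠ 0 := Complex.ofReal_ne_zero.2 ht.ne'
  exact ((Complex.ofRealCLM.hasDerivAt (x := t)).mul (hasDerivAt_ofReal_log_pow m ht)).congr_deriv
    (by simp only [Complex.ofRealCLM_apply, Complex.ofReal_one]; field_simp)

lemma isBigO_re_halfLineFourier_mul_exp_neg {f f' f'' : ℝ → ℂ} (hf : IsSymbol 4 a k 0 f)
    (ha : 0 < a) (hre : ∀ t, 0 < t → (f t).re = 0)
    (hderiv : ∀ t, 0 < t → HasDerivAt f (f' t) t) (hderiv' : ∀ t, 0 < t → HasDerivAt f' (f'' t) t)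
    (hg'' : ∀ N, IsSymbol 2 a' k' N
      fun t => (f'' t - f' t - (f' t - f t)) * Complex.exp (-(t : ℂ)))
    (ha' : -2 < a') (ha'1 : a' < 1) :
    (fun x => (halfLineFourier (fun t => f t * Complex.exp (-(t : ℂ))) x).re) =O[cobounded ℝ]
      fun x => |x| ^ (-(3 + a')) * Real.log |x| ^ k' := by
  refine IsSymbol.isBigO_re_halfLineFourier (n := 1) (hf.mul_exp_neg (-(a + 2))) ha
    (by linarith) (by linarith) (fun t ht => ?_) (fun t ht => hasDerivAt_mul_exp_neg (hderiv t ht))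
    (fun t ht => hasDerivAt_mul_exp_neg ((hderiv' t ht).sub (hderiv t ht)))
    (hg'' (-(a + 2))) ha' (by simpa using ha'1) (by linarith)
  rw [← Complex.ofReal_neg, ← Complex.ofReal_exp, Complex.re_mul_ofReal, hre t ht, zero_mul]

lemma isSymbol_linear_log (n : ℕ) (c : ℝ) (m : ℕ) :
    IsSymbol n 1 m 0 fun t => Complex.I * c * (t * (Real.log t : ℂ) ^ m) := by
  simpa using ((IsSymbol.ofReal n).mul (IsSymbol.log_pow n m)).const_mul (Complex.I * c)

lemma re_linear_log (c : ℝ) (m : ℕ) (t : ℝ) :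
    (Complex.I * c * (t * (Real.log t : ℂ) ^ m)).re = 0 := by
  rw [mul_assoc, ← Complex.ofReal_pow, ← Complex.ofReal_mul, ← Complex.ofReal_mul,
    Complex.re_mul_ofReal, Complex.I_re, zero_mul]

theorem isBigO_re_halfLineFourier_linearLog_zero (c : ℝ) :
    (fun x => (halfLineFourier (linearLog c 0) x).re) =O[cobounded ℝ]
      fun x => |x| ^ (-3 : ℝ) := by
  have h := isBigO_re_halfLineFourier_mul_exp_neg (a' := 0) (k' := 0)
    (isSymbol_linear_log 4 c 0) one_pos (fun t _ => re_linear_log c 0 t)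
    (fun t ht => (hasDerivAt_ofReal_mul_log_pow 0 ht).const_mul _)
    (f'' := fun _ => 0) (fun t _ => ?_) (fun N => ?_) (by norm_num) one_pos
  · exact h.congr_right fun x => by rw [add_zero, pow_zero, mul_one]
  · simpa using hasDerivAt_const t (Complex.I * (c : ℂ))
  · refine ((((IsSymbol.const 2 (-2)).mul_exp_neg N).add
      ((IsSymbol.ofReal 2).mul_exp_neg_of_lt one_pos 0 N)).const_mul (Complex.I * c)).congr
      fun t _ => ?_
    simp only [pow_zero, Nat.cast_zero, zero_mul, add_zero, mul_one]
    ring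

theorem isBigO_re_halfLineFourier_linearLog_succ (c : ℝ) (k : ℕ) :
    (fun x => (halfLineFourier (linearLog c (k + 1)) x).re) =O[cobounded ℝ]
      fun x => |x| ^ (-2 : ℝ) * Real.log |x| ^ k := by
  have h := isBigO_re_halfLineFourier_mul_exp_neg (a' := -1) (k' := k)
    (isSymbol_linear_log 4 c (k + 1)) one_pos (fun t _ => re_linear_log c _ t)
    (fun t ht => (hasDerivAt_ofReal_mul_log_pow _ ht).const_mul _)
    (fun t ht => ((hasDerivAt_ofReal_log_pow _ ht).add
      ((hasDerivAt_ofReal_log_pow _ ht).const_mul _)).const_mul _)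
    (fun N => ?_) (by norm_num) (by norm_num)
  · rwa [show -(3 + (-1 : ℝ)) = -2 by norm_num] at h
  · have hinv : ∀ m ≤ k, IsSymbol 2 (-1) k N fun t =>
        (Real.log t : ℂ) ^ m * ((t ^ (-1 : ℝ) : ℝ) : ℂ) * Complex.exp (-(t : ℂ)) := fun m hm => by
      have := ((IsSymbol.log_pow 2 m).mul (IsSymbol.rpow 2 (-1))).mul_exp_neg N
      rw [zero_add, add_zero] at this
      exact this.mono hm le_rfl
    have hpow : ∀ m, IsSymbol 2 (-1) k N fun t =>
        (Real.log t : ℂ) ^ m * Complex.exp (-(t : ℂ)) := fun m =>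
      (IsSymbol.log_pow 2 m).mul_exp_neg_of_lt (by norm_num) k N
    have hlin := (isSymbol_linear_log 2 c (k + 1)).mul_exp_neg_of_lt
      (by norm_num : (-1 : ℝ) < 1) k N
    refine (((hinv k le_rfl).const_mul (Complex.I * c * (k + 1))).add
      (((hinv (k - 1) (k.sub_le 1)).const_mul (Complex.I * c * ((k + 1) * k))).add
      (((hpow (k + 1)).const_mul (-2 * Complex.I * c)).add
      (((hpow k).const_mul (-2 * Complex.I * c * (k + 1))).add hlin)))).congr fun t _ => ?_
    simp only [Nat.add_sub_cancel, Real.rpow_neg_one]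
    push_cast
    ring

end SineTransform

/-! ### Exponential moments and the regularised tangent -/

section ExponentialMoments

/-- The moment `∫₀¹ sʲ exp (s z) ds`. For `j = 0` this is the divided difference `(exp z - 1) / z`
continued to `z = 0`, and the higher moments are its successive derivatives. -/
def expMoment (j : ℕ) (z : ℝ) : ℝ := ∫ s in (0 : ℝ)..1, s ^ j * Real.exp (s * z)

lemma hasDerivAt_expMoment (j : ℕ) (z : ℝ) :
    HasDerivAt (expMoment j) (expMoment (j + 1) z) z := by
  have hcont (i : ℕ) (y : ℝ) : Continuous fun s : ℝ => s ^ i * Real.exp (s * y) := by fun_prop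
  refine (intervalIntegral.hasDerivAt_integral_of_dominated_loc_of_deriv_le
    (F' := fun y s => s ^ (j + 1) * Real.exp (s * y)) (bound := fun _ => Real.exp (|z| + 1))
    (Metric.ball_mem_nhds z one_pos)
    (Eventually.of_forall fun y => (hcont j y).aestronglyMeasurable)
    ((hcont j z).intervalIntegrable _ _) (hcont (j + 1) z).aestronglyMeasurable
    (Eventually.of_forall fun s hs y hy => ?_) intervalIntegrable_const
    (Eventually.of_forall fun s _ y _ => ?_)).2
  · rw [Set.uIoc_of_le zero_le_one] at hs
    have hs0 := hs.1.le
    have hy' : |y| ≤ |z| + 1 := by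
      rw [Metric.mem_ball, Real.dist_eq] at hy
      linarith [abs_sub_abs_le_abs_sub y z]
    have hsy : s * y ≤ |z| + 1 := calc
      s * y ≤ s * |y| := by gcongr; exact le_abs_self y
      _ ≤ 1 * |y| := by gcongr; exact hs.2
      _ ≤ |z| + 1 := by linarith
    rw [Real.norm_of_nonneg (by positivity)]
    calc s ^ (j + 1) * Real.exp (s * y) ≤ 1 * Real.exp (|z| + 1) := by
          gcongr; exact pow_le_one₀ hs0 hs.2
      _ = Real.exp (|z| + 1) := one_mul _
  · exact (((hasDerivAt_id y).const_mul s).exp.const_mul (s ^ j)).congr_deriv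
      (by simp only [id]; ring)

lemma continuous_expMoment (j : ℕ) : Continuous (expMoment j) :=
  continuous_iff_continuousAt.2 fun z => (hasDerivAt_expMoment j z).continuousAt

lemma abs_expMoment_le (j : ℕ) (z : ℝ) : |expMoment j z| ≤ 1 + Real.exp z := by
  have hbound : ∀ s ∈ Set.uIoc (0 : ℝ) 1, ‖s ^ j * Real.exp (s * z)‖ ≤ 1 + Real.exp z := by
    intro s hs
    rw [Set.uIoc_of_le zero_le_one] at hs
    have hs0 := hs.1.le
    have hexp : Real.exp (s * z) ≤ 1 + Real.exp z := by
      rcases le_total z 0 with hz | hz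
      · linarith [Real.exp_pos z, Real.exp_le_one_iff.2 (mul_nonpos_of_nonneg_of_nonpos hs0 hz)]
      · linarith [Real.exp_le_exp.2 (mul_le_of_le_one_left hz hs.2)]
    rw [Real.norm_of_nonneg (by positivity)]
    calc s ^ j * Real.exp (s * z) ≤ 1 * (1 + Real.exp z) := by
          gcongr; exact pow_le_one₀ hs0 hs.2
      _ = 1 + Real.exp z := one_mul _
  simpa [expMoment] using intervalIntegral.norm_integral_le_of_norm_le_const hbound

lemma expMoment_zero_right (j : ℕ) : expMoment j 0 = 1 / (j + 1) := by
  simp [expMoment, integral_pow]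

lemma mul_expMoment_zero (z : ℝ) : z * expMoment 0 z = Real.exp z - 1 := by
  have hderiv : ∀ s ∈ Set.uIcc (0 : ℝ) 1,
      HasDerivAt (fun s => Real.exp (s * z)) (z * (s ^ 0 * Real.exp (s * z))) s := fun s _ =>
    ((hasDerivAt_id s).mul_const z).exp.congr_deriv (by simp only [id]; ring)
  rw [expMoment, ← intervalIntegral.integral_const_mul,
    intervalIntegral.integral_eq_sub_of_hasDerivAt hderiv
      (Continuous.intervalIntegrable (by fun_prop) _ _)]
  simp

lemma expMoment_succ (j : ℕ) (z : ℝ) :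
    (j + 1) * expMoment j z + z * expMoment (j + 1) z = Real.exp z := by
  have hderiv : ∀ s ∈ Set.uIcc (0 : ℝ) 1, HasDerivAt (fun s => s ^ (j + 1) * Real.exp (s * z))
      ((j + 1) * (s ^ j * Real.exp (s * z)) + z * (s ^ (j + 1) * Real.exp (s * z))) s := fun s _ =>
    ((hasDerivAt_pow (j + 1) s).mul ((hasDerivAt_id s).mul_const z).exp).congr_deriv
      (by simp only [id, Nat.add_sub_cancel]; push_cast; ring)
  rw [expMoment, expMoment, ← intervalIntegral.integral_const_mul,
    ← intervalIntegral.integral_const_mul, ← intervalIntegral.integral_add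
      (Continuous.intervalIntegrable (by fun_prop) _ _)
      (Continuous.intervalIntegrable (by fun_prop) _ _),
    intervalIntegral.integral_eq_sub_of_hasDerivAt hderiv
      (Continuous.intervalIntegrable (by fun_prop) _ _)]
  simp

end ExponentialMoments

section RegularizedTangent

open scoped ContDiff

lemma contDiff_sinc {n : WithTop ℕ∞} : ContDiff ℝ n Real.sinc := by
  have hdiff : Differentiable ℂ (dslope Complex.sin 0) := differentiableOn_univ.1
    ((Complex.differentiableOn_dslope univ_mem).2 Complex.differentiable_sin.differentiableOn)
  have hre : Real.sinc = fun x : ℝ => (dslope Complex.sin 0 (x : ℂ)).re := by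
    ext x
    rcases eq_or_ne x 0 with rfl | hx
    · simp [dslope_same]
    · rw [Real.sinc_of_ne_zero hx, dslope_of_ne _ (Complex.ofReal_ne_zero.2 hx),
        slope_def_field, Complex.sin_zero, sub_zero, sub_zero, ← Complex.ofReal_sin,
        ← Complex.ofReal_div, Complex.ofReal_re]
  rw [hre]
  exact Complex.reCLM.contDiff.comp
    ((hdiff.contDiff.restrict_scalars ℝ).comp Complex.ofRealCLM.contDiff)

/-- The function `-e tan (π (1 + e) / 2)`, continued to `e = 0`. It cancels the pole at `α = 1` of
the factor `tan (π α / 2)` in the stable exponent. -/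
def regularizedTan (e : ℝ) : ℝ :=
  2 / Real.pi * (Real.cos (Real.pi * e / 2) / Real.sinc (Real.pi * e / 2))

lemma sinc_ne_zero_of_abs_lt_pi {x : ℝ} (hx : |x| < Real.pi) : Real.sinc x ≠ 0 := by
  rcases eq_or_ne x 0 with rfl | h0
  · simp
  · rw [Real.sinc_of_ne_zero h0]
    refine div_ne_zero (fun hsin => h0 ?_) h0
    exact (Real.sin_eq_zero_iff_of_lt_of_lt (abs_lt.1 hx).1 (abs_lt.1 hx).2).1 hsin

lemma contDiffOn_regularizedTan {n : WithTop ℕ∞} :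
    ContDiffOn ℝ n regularizedTan (Set.Ioo (-1) 1) := by
  have hlin : ContDiff ℝ n fun e : ℝ => Real.pi * e / 2 := by fun_prop
  refine contDiffOn_const.mul ((Real.contDiff_cos.comp hlin).contDiffOn.div
    (contDiff_sinc.comp hlin).contDiffOn fun e he => sinc_ne_zero_of_abs_lt_pi ?_)
  rw [abs_lt]
  constructor <;> nlinarith [Real.pi_pos, he.1, he.2]

lemma regularizedTan_zero : regularizedTan 0 = 2 / Real.pi := by
  simp [regularizedTan]

lemma tan_mul_eq_neg_regularizedTan {e : ℝ} (he : e ≠ 0) :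
    Real.tan (Real.pi * (1 + e) / 2) * e = -regularizedTan e := by
  have hne : Real.pi * e / 2 ≠ 0 := div_ne_zero (mul_ne_zero Real.pi_ne_zero he) two_ne_zero
  rw [Real.tan_eq_sin_div_cos,
    show Real.pi * (1 + e) / 2 = Real.pi * e / 2 + Real.pi / 2 by ring,
    Real.sin_add_pi_div_two, Real.cos_add_pi_div_two, regularizedTan, Real.sinc_of_ne_zero hne,
    div_div_eq_mul_div]
  field_simp

end RegularizedTangent

/-! ### The stable exponent on the half-line -/

section StableExponent

/-- Parameters `θ = (μ, σ, α, β)` with `σ > 0` and `0 < α < 2`, the skewness `β` being arbitrary. -/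
def stableDomain : Set (Fin 4 → ℝ) := {θ | 0 < θ 1 ∧ θ 2 ∈ Set.Ioo (0 : ℝ) 2}

/-- The derivative `∂ᵐ/∂αᵐ (σt)^α = logᵐ(σt) (σt)^α`. -/
def powerDeriv (m : ℕ) (θ : Fin 4 → ℝ) (t : ℝ) : ℝ :=
  Real.log (θ 1 * t) ^ m * Real.exp (θ 2 * Real.log (θ 1 * t))

/-- The derivative `∂ʲ/∂αʲ` of the difference quotient `((σt)^α - σt) / (α - 1)`, written through
`expMoment` so that it is also defined at `α = 1`. -/
def quotientDeriv (j : ℕ) (θ : Fin 4 → ℝ) (t : ℝ) : ℝ :=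
  Real.exp (Real.log (θ 1 * t)) * Real.log (θ 1 * t) ^ (j + 1) *
    expMoment j ((θ 2 - 1) * Real.log (θ 1 * t))

/-- The part of the stable exponent on `t > 0` that does not involve the location `μ`. -/
def centeredExponent (θ : Fin 4 → ℝ) (t : ℝ) : ℂ :=
  -powerDeriv 0 θ t -
    Complex.I * (((θ 3 * regularizedTan (θ 2 - 1) : ℝ) : ℂ) * quotientDeriv 0 θ t)

/-- The stable exponent on `t > 0` without case distinction at `α = 1`. -/
def halfLineExponent (θ : Fin 4 → ℝ) (t : ℝ) : ℂ :=
  centeredExponent θ t + Complex.I * θ 0 * t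

variable {θ : Fin 4 → ℝ} {t : ℝ}

lemma isOpen_stableDomain : IsOpen stableDomain :=
  (isOpen_lt continuous_const (continuous_apply 1)).inter
    (isOpen_Ioo.preimage (continuous_apply (2 : Fin 4)))

lemma powerDeriv_eq_rpow (m : ℕ) (hu : 0 < θ 1 * t) :
    powerDeriv m θ t = Real.log (θ 1 * t) ^ m * (θ 1 * t) ^ θ 2 := by
  rw [powerDeriv, Real.rpow_def_of_pos hu, mul_comm (θ 2)]

lemma exp_mul_log_eq (θ : Fin 4 → ℝ) (t : ℝ) :
    Real.exp (θ 2 * Real.log (θ 1 * t)) =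
      Real.exp (Real.log (θ 1 * t)) * Real.exp ((θ 2 - 1) * Real.log (θ 1 * t)) := by
  rw [← Real.exp_add]
  ring_nf

lemma sub_one_mul_quotientDeriv_zero (hu : 0 < θ 1 * t) :
    (θ 2 - 1) * quotientDeriv 0 θ t = powerDeriv 0 θ t - θ 1 * t := by
  rw [quotientDeriv, powerDeriv, exp_mul_log_eq]
  linear_combination Real.exp (Real.log (θ 1 * t)) *
    mul_expMoment_zero ((θ 2 - 1) * Real.log (θ 1 * t)) - Real.exp_log hu

lemma sub_one_mul_quotientDeriv_succ (j : ℕ) (θ : Fin 4 → ℝ) (t : ℝ) :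
    (θ 2 - 1) * quotientDeriv (j + 1) θ t =
      powerDeriv (j + 1) θ t - (j + 1) * quotientDeriv j θ t := by
  simp only [quotientDeriv, powerDeriv, exp_mul_log_eq]
  linear_combination Real.exp (Real.log (θ 1 * t)) * Real.log (θ 1 * t) ^ (j + 1) *
    expMoment_succ j ((θ 2 - 1) * Real.log (θ 1 * t))

lemma quotientDeriv_of_eq_one (j : ℕ) (hα : θ 2 = 1) (hu : 0 < θ 1 * t) :
    quotientDeriv j θ t = θ 1 * t * Real.log (θ 1 * t) ^ (j + 1) / (j + 1) := by
  rw [quotientDeriv, hα, sub_self, zero_mul, expMoment_zero_right, Real.exp_log hu, mul_one_div]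

lemma psiM_of_pos (hθ : θ ∈ stableDomain) (ht : 0 < t) : psiM θ t = halfLineExponent θ t := by
  have hu : 0 < θ 1 * t := mul_pos hθ.1 ht
  rw [psiM, halfLineExponent, centeredExponent, powerDeriv_eq_rpow 0 hu, abs_of_pos hu, pow_zero,
    one_mul]
  split_ifs with hα
  · rw [quotientDeriv_of_eq_one 0 hα hu, hα, sub_self, regularizedTan_zero, Real.rpow_one]
    push_cast
    ring
  · have htan := tan_mul_eq_neg_regularizedTan (sub_ne_zero.2 hα)
    have hquot := sub_one_mul_quotientDeriv_zero hu
    have hrpow : (θ 1 * t) ^ θ 2 * (θ 1 * t) ^ (1 - θ 2) = θ 1 * t := by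
      rw [← Real.rpow_add hu, add_sub_cancel, Real.rpow_one]
    rw [powerDeriv_eq_rpow 0 hu, pow_zero, one_mul] at hquot
    rw [add_sub_cancel] at htan
    have hskew : θ 3 * regularizedTan (θ 2 - 1) * quotientDeriv 0 θ t =
        (θ 1 * t) ^ θ 2 * (θ 3 * Real.tan (Real.pi * θ 2 / 2) *
          ((θ 1 * t) ^ (1 - θ 2) - 1)) := by
      linear_combination (θ 3 * quotientDeriv 0 θ t) * htan -
        θ 3 * Real.tan (Real.pi * θ 2 / 2) * (hrpow + hquot)
    rw [← Complex.ofReal_mul, hskew, Real.sign_of_pos ht]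
    push_cast
    ring

lemma psiM_neg (θ : Fin 4 → ℝ) (t : ℝ) : psiM θ (-t) = starRingEnd ℂ (psiM θ t) := by
  unfold psiM
  split_ifs <;>
  · simp only [mul_neg, abs_neg, Real.sign_neg, map_add, map_sub, map_mul, map_one,
      Complex.conj_ofReal, Complex.conj_I]
    push_cast
    ring

lemma re_halfLineExponent (θ : Fin 4 → ℝ) (t : ℝ) :
    (halfLineExponent θ t).re = -powerDeriv 0 θ t := by
  simp [halfLineExponent, centeredExponent]

lemma measurable_powerDeriv (m : ℕ) (θ : Fin 4 → ℝ) : Measurable (powerDeriv m θ) := by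
  unfold powerDeriv
  fun_prop

lemma measurable_quotientDeriv (j : ℕ) (θ : Fin 4 → ℝ) : Measurable (quotientDeriv j θ) := by
  have := (continuous_expMoment j).measurable
  unfold quotientDeriv
  fun_prop

lemma measurable_halfLineExponent (θ : Fin 4 → ℝ) : Measurable (halfLineExponent θ) := by
  have := measurable_powerDeriv 0 θ
  have := measurable_quotientDeriv 0 θ
  unfold halfLineExponent centeredExponent
  fun_prop

lemma hasDerivAt_log_update_scale (hσ : 0 < θ 1) (ht : 0 < t) :
    HasDerivAt (fun s => Real.log (s * t)) (1 / θ 1) (θ 1) :=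
  (((hasDerivAt_id (θ 1)).mul_const t).log (mul_pos hσ ht).ne').congr_deriv (by
    simp only [id]; field_simp)

lemma hasDerivAt_powerDeriv_update_scale (m : ℕ) (hσ : 0 < θ 1) (ht : 0 < t) :
    HasDerivAt (fun s => powerDeriv m (Function.update θ 1 s) t)
      ((m * powerDeriv (m - 1) θ t + θ 2 * powerDeriv m θ t) / θ 1) (θ 1) := by
  have hlog := hasDerivAt_log_update_scale hσ ht
  simp only [powerDeriv, Function.update_self,
    Function.update_of_ne (show (2 : Fin 4) ≠ 1 by decide)]
  exact ((hlog.fun_pow m).fun_mul (hlog.const_mul (θ 2)).exp).congr_deriv (by ring)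

lemma hasDerivAt_powerDeriv_update_index (m : ℕ) (θ : Fin 4 → ℝ) (t : ℝ) :
    HasDerivAt (fun s => powerDeriv m (Function.update θ 2 s) t)
      (powerDeriv (m + 1) θ t) (θ 2) := by
  simp only [powerDeriv, Function.update_self,
    Function.update_of_ne (show (1 : Fin 4) ≠ 2 by decide)]
  exact (((hasDerivAt_id (θ 2)).mul_const _).exp.const_mul _).congr_deriv (by
    simp only [id]; ring)

lemma hasDerivAt_quotientDeriv_update_scale (j : ℕ) (hσ : 0 < θ 1) (ht : 0 < t) :
    HasDerivAt (fun s => quotientDeriv j (Function.update θ 1 s) t)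
      ((quotientDeriv j θ t + powerDeriv j θ t) / θ 1) (θ 1) := by
  have hlog := hasDerivAt_log_update_scale hσ ht
  have hmoment := (hasDerivAt_expMoment j _).comp (θ 1) (hlog.const_mul (θ 2 - 1))
  simp only [quotientDeriv, Function.update_self,
    Function.update_of_ne (show (2 : Fin 4) ≠ 1 by decide)]
  refine ((hlog.exp.fun_mul (hlog.fun_pow (j + 1))).fun_mul hmoment).congr_deriv ?_
  rw [powerDeriv, exp_mul_log_eq, ← expMoment_succ j ((θ 2 - 1) * Real.log (θ 1 * t)),
    Nat.add_sub_cancel]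
  simp only [Function.comp_apply]
  push_cast
  ring

lemma hasDerivAt_quotientDeriv_update_index (j : ℕ) (θ : Fin 4 → ℝ) (t : ℝ) :
    HasDerivAt (fun s => quotientDeriv j (Function.update θ 2 s) t)
      (quotientDeriv (j + 1) θ t) (θ 2) := by
  simp only [quotientDeriv, Function.update_self,
    Function.update_of_ne (show (1 : Fin 4) ≠ 2 by decide)]
  exact (((hasDerivAt_expMoment j _).comp (θ 2)
    (((hasDerivAt_id (θ 2)).sub_const 1).mul_const _)).const_mul _).congr_deriv (by
      simp only [id]; ring)

end StableExponent

/-! ### Parameter derivatives -/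

section ParameterDerivative

open Set Topology

open scoped ContDiff

variable {q q' r r' : (Fin 4 → ℝ) → ℝ → ℂ} {f : (Fin 4 → ℝ) → ℝ} {θ : Fin 4 → ℝ} {i : Fin 4}
  {k l : ℕ} {R R' : ℝ}

/-- `q'` is the partial derivative in the `i`-th parameter of the amplitude `q`, pointwise in
`t > 0`. -/
def HasParamDeriv (i : Fin 4) (q q' : (Fin 4 → ℝ) → ℝ → ℂ) : Prop :=
  ∀ θ ∈ stableDomain, ∀ t, 0 < t →
    HasDerivAt (fun s => q (Function.update θ i s) t) (q' θ t) (θ i)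

lemma HasParamDeriv.add (hq : HasParamDeriv i q q') (hr : HasParamDeriv i r r') :
    HasParamDeriv i (fun θ t => q θ t + r θ t) fun θ t => q' θ t + r' θ t :=
  fun θ hθ t ht => (hq θ hθ t ht).fun_add (hr θ hθ t ht)

lemma HasParamDeriv.mul (hq : HasParamDeriv i q q') (hr : HasParamDeriv i r r') :
    HasParamDeriv i (fun θ t => q θ t * r θ t) fun θ t => q' θ t * r θ t + q θ t * r' θ t :=
  fun θ hθ t ht => by
    simpa only [Function.update_eq_self] using (hq θ hθ t ht).fun_mul (hr θ hθ t ht)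

lemma HasParamDeriv.cexp (hq : HasParamDeriv i q q') :
    HasParamDeriv i (fun θ t => Complex.exp (q θ t)) fun θ t => Complex.exp (q θ t) * q' θ t :=
  fun θ hθ t ht => by simpa only [Function.update_eq_self] using (hq θ hθ t ht).cexp

lemma hasParamDeriv_coeff (hf : ContDiffOn ℝ ∞ f stableDomain) (i : Fin 4) :
    HasParamDeriv i (fun θ _ => (f θ : ℂ)) fun θ _ => (fderiv ℝ f θ (Pi.single i 1) : ℂ) := by
  intro θ hθ t _
  have hdiff : HasFDerivAt f (fderiv ℝ f θ) (Function.update θ i (θ i)) := by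
    rw [Function.update_eq_self]
    exact ((hf.contDiffAt (isOpen_stableDomain.mem_nhds hθ)).differentiableAt
      (by simp)).hasFDerivAt
  exact (hdiff.comp_hasDerivAt (θ i) (hasDerivAt_update θ i (θ i))).ofReal_comp

/-- Linear combinations, with real smooth coefficients in `θ`, of complex multiples of
`powerDeriv m` and of `i` times `quotientDeriv m`, where `m ≤ k`. -/
inductive IsPowerCombination (k : ℕ) : ((Fin 4 → ℝ) → ℝ → ℂ) → Prop
  | power {m : ℕ} (hm : m ≤ k) (c : ℂ) : IsPowerCombination k fun θ t => c * powerDeriv m θ t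
  | quotient {j : ℕ} (hj : j ≤ k) :
    IsPowerCombination k fun θ t => Complex.I * quotientDeriv j θ t
  | coeff_mul {f : (Fin 4 → ℝ) → ℝ} {q : (Fin 4 → ℝ) → ℝ → ℂ}
    (hf : ContDiffOn ℝ ∞ f stableDomain) (hq : IsPowerCombination k q) :
    IsPowerCombination k fun θ t => f θ * q θ t
  | add {q r : (Fin 4 → ℝ) → ℝ → ℂ} (hq : IsPowerCombination k q)
    (hr : IsPowerCombination k r) : IsPowerCombination k fun θ t => q θ t + r θ t

namespace IsPowerCombination

lemma mono (hq : IsPowerCombination k q) (hkl : k ≤ l) : IsPowerCombination l q := by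
  induction hq with
  | power hm c => exact power (hm.trans hkl) c
  | quotient hj => exact quotient (hj.trans hkl)
  | coeff_mul hf _ ih => exact coeff_mul hf ih
  | add _ _ ihq ihr => exact add ihq ihr

lemma zero (k : ℕ) : IsPowerCombination k fun _ _ => 0 := by
  simpa using power (Nat.zero_le k) 0

lemma contDiffOn_inv_scale : ContDiffOn ℝ ∞ (fun θ : Fin 4 → ℝ => (θ 1)⁻¹) stableDomain :=
  (contDiff_apply ℝ ℝ (1 : Fin 4)).contDiffOn.inv fun _ hθ => hθ.1.ne'

lemma exists_hasParamDeriv_power (i : Fin 4) {m : ℕ} (hm : m ≤ k) (c : ℂ) :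
    ∃ q', IsPowerCombination (k + if i = 2 then 1 else 0) q' ∧
      HasParamDeriv i (fun θ t => c * powerDeriv m θ t) q' := by
  by_cases h1 : i = 1
  · subst h1
    refine ⟨_, (coeff_mul contDiffOn_inv_scale ((power ((m.sub_le 1).trans hm) (c * m)).add
      (coeff_mul (contDiff_apply ℝ ℝ (2 : Fin 4)).contDiffOn (power hm c)))).mono
      (Nat.le_add_right k _), fun θ hθ t ht => ?_⟩
    refine ((hasDerivAt_powerDeriv_update_scale m hθ.1 ht).ofReal_comp.const_mul c).congr_deriv ?_
    push_cast
    ring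
  by_cases h2 : i = 2
  · subst h2
    exact ⟨_, power (Nat.add_le_add_right hm 1) c, fun θ _ t _ =>
      (hasDerivAt_powerDeriv_update_index m θ t).ofReal_comp.const_mul c⟩
  · refine ⟨_, zero _, fun θ _ t _ => ?_⟩
    simpa only [powerDeriv, Function.update_of_ne (Ne.symm h1), Function.update_of_ne (Ne.symm h2)]
      using hasDerivAt_const (θ i) _

lemma exists_hasParamDeriv_quotient (i : Fin 4) {j : ℕ} (hj : j ≤ k) :
    ∃ q', IsPowerCombination (k + if i = 2 then 1 else 0) q' ∧
      HasParamDeriv i (fun θ t => Complex.I * quotientDeriv j θ t) q' := by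
  by_cases h1 : i = 1
  · subst h1
    refine ⟨_, (coeff_mul contDiffOn_inv_scale ((quotient hj).add (power hj Complex.I))).mono
      (Nat.le_add_right k _), fun θ hθ t ht => ?_⟩
    refine ((hasDerivAt_quotientDeriv_update_scale j hθ.1 ht).ofReal_comp.const_mul
      Complex.I).congr_deriv ?_
    push_cast
    ring
  by_cases h2 : i = 2
  · subst h2
    exact ⟨_, quotient (Nat.add_le_add_right hj 1), fun θ _ t _ =>
      (hasDerivAt_quotientDeriv_update_index j θ t).ofReal_comp.const_mul Complex.I⟩
  · refine ⟨_, zero _, fun θ _ t _ => ?_⟩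
    simpa only [quotientDeriv, Function.update_of_ne (Ne.symm h1),
      Function.update_of_ne (Ne.symm h2)] using hasDerivAt_const (θ i) _

lemma exists_hasParamDeriv (i : Fin 4) (hq : IsPowerCombination k q) :
    ∃ q', IsPowerCombination (k + if i = 2 then 1 else 0) q' ∧ HasParamDeriv i q q' := by
  induction hq with
  | power hm c => exact exists_hasParamDeriv_power i hm c
  | quotient hj => exact exists_hasParamDeriv_quotient i hj
  | coeff_mul hf hq ih =>
    obtain ⟨q', hq', hderiv⟩ := ih
    have hf' := (hf.fderiv_of_isOpen isOpen_stableDomain (m := ∞) le_rfl).clm_apply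
      (contDiffOn_const (c := Pi.single i 1))
    exact ⟨_, (coeff_mul hf' (hq.mono (Nat.le_add_right k _))).add (coeff_mul hf hq'),
      (hasParamDeriv_coeff hf i).mul hderiv⟩
  | add _ _ ihq ihr =>
    obtain ⟨q', hq', hqderiv⟩ := ihq
    obtain ⟨r', hr', hrderiv⟩ := ihr
    exact ⟨_, hq'.add hr', hqderiv.add hrderiv⟩

end IsPowerCombination

lemma isPowerCombination_centeredExponent : IsPowerCombination 0 centeredExponent := by
  have hf : ContDiffOn ℝ ∞ (fun θ : Fin 4 → ℝ => -(θ 3 * regularizedTan (θ 2 - 1)))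
      stableDomain := by
    have hmaps : MapsTo (fun θ : Fin 4 → ℝ => θ 2 - 1) stableDomain (Ioo (-1) 1) :=
      fun θ hθ => ⟨by linarith [hθ.2.1], by linarith [hθ.2.2]⟩
    exact ((contDiff_apply ℝ ℝ (3 : Fin 4)).contDiffOn.mul (contDiffOn_regularizedTan.comp
      ((contDiff_apply ℝ ℝ (2 : Fin 4)).sub contDiff_const).contDiffOn hmaps)).neg
  convert (IsPowerCombination.power le_rfl (-1)).add
    (IsPowerCombination.coeff_mul hf (.quotient le_rfl)) using 3
  rw [centeredExponent]
  push_cast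
  ring

lemma exists_hasParamDeriv_halfLineExponent (hi : i ≠ 0) :
    ∃ p, IsPowerCombination (if i = 2 then 1 else 0) p ∧ HasParamDeriv i halfLineExponent p := by
  obtain ⟨p, hp, hderiv⟩ := isPowerCombination_centeredExponent.exists_hasParamDeriv i
  refine ⟨p, by simpa only [zero_add] using hp, fun θ hθ t ht => ?_⟩
  simpa only [halfLineExponent, Function.update_of_ne hi.symm] using
    (hderiv θ hθ t ht).add_const (Complex.I * θ 0 * t)

/-- The amplitude `q` is `O((1 + t)^R)` on the half-line, locally uniformly in the parameters. -/
def IsTempered (R : ℝ) (q : (Fin 4 → ℝ) → ℝ → ℂ) : Prop :=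
  (∀ θ, Measurable (q θ)) ∧
    ∀ θ ∈ stableDomain, ∃ C, ∀ᶠ θ' in 𝓝 θ, ∀ t, 0 < t → ‖q θ' t‖ ≤ C * (1 + t) ^ R

namespace IsTempered

lemma add (hq : IsTempered R q) (hr : IsTempered R r) :
    IsTempered R fun θ t => q θ t + r θ t := by
  refine ⟨fun θ => (hq.1 θ).add (hr.1 θ), fun θ hθ => ?_⟩
  obtain ⟨C, hC⟩ := hq.2 θ hθ
  obtain ⟨D, hD⟩ := hr.2 θ hθ
  refine ⟨C + D, ?_⟩
  filter_upwards [hC, hD] with θ' hC hD t ht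
  rw [add_mul]
  exact (norm_add_le _ _).trans (add_le_add (hC t ht) (hD t ht))

lemma mul (hq : IsTempered R q) (hr : IsTempered R' r) :
    IsTempered (R + R') fun θ t => q θ t * r θ t := by
  refine ⟨fun θ => (hq.1 θ).mul (hr.1 θ), fun θ hθ => ?_⟩
  obtain ⟨C, hC⟩ := hq.2 θ hθ
  obtain ⟨D, hD⟩ := hr.2 θ hθ
  refine ⟨C * D, ?_⟩
  filter_upwards [hC, hD] with θ' hC hD t ht
  rw [norm_mul, Real.rpow_add (by linarith), mul_mul_mul_comm]
  exact mul_le_mul (hC t ht) (hD t ht) (norm_nonneg _) ((norm_nonneg _).trans (hC t ht))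

lemma coeff (hf : ContinuousOn f stableDomain) : IsTempered 0 fun θ _ => (f θ : ℂ) := by
  refine ⟨fun θ => measurable_const, fun θ hθ => ⟨|f θ| + 1, ?_⟩⟩
  have hcont := (hf.continuousAt (isOpen_stableDomain.mem_nhds hθ)).abs
  filter_upwards [hcont.eventually_lt_const (lt_add_one |f θ|)] with θ' hθ' t _
  simpa using hθ'.le

lemma const (c : ℂ) : IsTempered 0 fun _ _ => c :=
  ⟨fun _ => measurable_const, fun _ _ => ⟨‖c‖, by simp⟩⟩

end IsTempered

lemma exists_abs_log_pow_mul_rpow_le (m : ℕ) {a : ℝ} (ha : 0 < a) (ha1 : a ≤ 1) :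
    ∃ D, 0 ≤ D ∧ ∀ p ∈ Icc a 2, ∀ u, 0 < u → |Real.log u| ^ m * u ^ p ≤ D * (1 + u) ^ (3 : ℝ) := by
  obtain ⟨D, hD, hbound⟩ := exists_logWeight_le ha m (2 - a)
  refine ⟨D, hD, fun p hp u hu => ?_⟩
  have hlog : |Real.log u| ^ m ≤ (1 + |Real.log u|) ^ m := by gcongr; linarith
  have hpow : u ^ p ≤ u ^ a * (1 + u) ^ (2 - a) := by
    rw [← sub_add_cancel p a, Real.rpow_add hu, mul_comm]
    gcongr
    calc u ^ (p - a) ≤ (1 + u) ^ (p - a) :=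
          Real.rpow_le_rpow hu.le (by linarith) (by linarith [hp.1])
      _ ≤ (1 + u) ^ (2 - a) :=
          Real.rpow_le_rpow_of_exponent_le (by linarith) (by linarith [hp.2])
  calc |Real.log u| ^ m * u ^ p ≤ (1 + |Real.log u|) ^ m * (u ^ a * (1 + u) ^ (2 - a)) := by
        gcongr
    _ = logWeight a m (2 - a) u := by rw [logWeight]; ring
    _ ≤ D * logWeight 0 0 (2 - a + 2 * (a - 0)) u := hbound u hu
    _ ≤ D * (1 + u) ^ (3 : ℝ) := by
        rw [logWeight, Real.rpow_zero, pow_zero, one_mul, one_mul]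
        gcongr
        · linarith
        · linarith

lemma eventually_mem_stableDomain_and_mem_Icc (hθ : θ ∈ stableDomain) :
    ∀ᶠ θ' in 𝓝 θ, θ' ∈ stableDomain ∧ θ' 1 ∈ Icc (θ 1 / 2) (θ 1 + 1) ∧
      θ' 2 ∈ Icc (θ 2 / 2) 2 := by
  have hscale : ContinuousAt (fun θ : Fin 4 → ℝ => θ 1) θ := (continuous_apply 1).continuousAt
  have hindex : ContinuousAt (fun θ : Fin 4 → ℝ => θ 2) θ := (continuous_apply 2).continuousAt
  filter_upwards [isOpen_stableDomain.mem_nhds hθ,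
    hscale.eventually_const_lt (half_lt_self hθ.1), hscale.eventually_lt_const (lt_add_one _),
    hindex.eventually_const_lt (half_lt_self hθ.2.1)] with θ' hθ' hσ hσ' hα
  exact ⟨hθ', ⟨hσ.le, hσ'.le⟩, hα.le, hθ'.2.2.le⟩

lemma exists_abs_log_pow_mul_rpow_le_nhds (m : ℕ) (hθ : θ ∈ stableDomain) :
    ∃ C, ∀ᶠ θ' in 𝓝 θ, ∀ t, 0 < t → ∀ p ∈ Icc (θ 2 / 2) 2,
      |Real.log (θ' 1 * t)| ^ m * (θ' 1 * t) ^ p ≤ C * (1 + t) ^ (3 : ℝ) := by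
  obtain ⟨D, hD, hbound⟩ := exists_abs_log_pow_mul_rpow_le m (half_pos hθ.2.1)
    (by linarith [hθ.2.2])
  refine ⟨D * (θ 1 + 2) ^ (3 : ℝ), ?_⟩
  filter_upwards [eventually_mem_stableDomain_and_mem_Icc hθ] with θ' ⟨hθ', hscale, _⟩
  refine fun t ht p hp => (hbound p hp _ (mul_pos hθ'.1 ht)).trans ?_
  have hσ := hθ.1
  have hσ' := hθ'.1
  rw [mul_assoc, ← Real.mul_rpow (by linarith) (by linarith)]
  gcongr
  nlinarith [hscale.2]

lemma isTempered_powerDeriv (m : ℕ) : IsTempered 3 fun θ t => (powerDeriv m θ t : ℂ) := by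
  refine ⟨fun θ => (measurable_powerDeriv m θ).complex_ofReal, fun θ hθ => ?_⟩
  obtain ⟨C, hC⟩ := exists_abs_log_pow_mul_rpow_le_nhds m hθ
  refine ⟨C, ?_⟩
  filter_upwards [hC, eventually_mem_stableDomain_and_mem_Icc hθ] with θ' hC ⟨hθ', _, hindex⟩ t ht
  have hu : 0 < θ' 1 * t := mul_pos hθ'.1 ht
  rw [Complex.norm_real, Real.norm_eq_abs, powerDeriv_eq_rpow m hu, abs_mul, abs_pow,
    abs_of_nonneg (Real.rpow_nonneg hu.le _)]
  exact hC t ht _ hindex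

lemma abs_quotientDeriv_le (j : ℕ) {t : ℝ} (hu : 0 < θ 1 * t) :
    |quotientDeriv j θ t| ≤ |Real.log (θ 1 * t)| ^ (j + 1) * (θ 1 * t) ^ (1 : ℝ) +
      |Real.log (θ 1 * t)| ^ (j + 1) * (θ 1 * t) ^ θ 2 := by
  rw [quotientDeriv, abs_mul, abs_mul, abs_pow, abs_of_pos (Real.exp_pos _),
    Real.rpow_def_of_pos hu, Real.rpow_def_of_pos hu, mul_one, mul_comm _ (θ 2), exp_mul_log_eq]
  refine (mul_le_mul_of_nonneg_left (abs_expMoment_le j _) (by positivity)).trans_eq ?_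
  ring

lemma isTempered_quotientDeriv (j : ℕ) :
    IsTempered 3 fun θ t => (quotientDeriv j θ t : ℂ) := by
  refine ⟨fun θ => (measurable_quotientDeriv j θ).complex_ofReal, fun θ hθ => ?_⟩
  obtain ⟨C, hC⟩ := exists_abs_log_pow_mul_rpow_le_nhds (j + 1) hθ
  refine ⟨C + C, ?_⟩
  filter_upwards [hC, eventually_mem_stableDomain_and_mem_Icc hθ] with θ' hC ⟨hθ', _, hindex⟩ t ht
  rw [Complex.norm_real, Real.norm_eq_abs, add_mul]
  exact (abs_quotientDeriv_le j (mul_pos hθ'.1 ht)).trans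
    (add_le_add (hC t ht 1 ⟨by linarith [hθ.2.2], one_le_two⟩) (hC t ht _ hindex))

lemma IsPowerCombination.isTempered (hq : IsPowerCombination k q) : IsTempered 3 q := by
  induction hq with
  | power _ c => simpa only [zero_add] using (IsTempered.const c).mul (isTempered_powerDeriv _)
  | quotient _ =>
    simpa only [zero_add] using (IsTempered.const Complex.I).mul (isTempered_quotientDeriv _)
  | coeff_mul hf _ ih => simpa only [zero_add] using (IsTempered.coeff hf.continuousOn).mul ih
  | add _ _ ihq ihr => exact ihq.add ihr

lemma rpow_sub_one_le_rpow {u p a : ℝ} (hu : 0 ≤ u) (ha : 0 ≤ a) (hap : a ≤ p) :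
    u ^ a - 1 ≤ u ^ p := by
  rcases le_total u 1 with hu1 | hu1
  · linarith [Real.rpow_le_one hu hu1 ha, Real.rpow_nonneg hu p]
  · linarith [Real.rpow_le_rpow_of_exponent_le hu1 hap]

lemma isTempered_cexp_halfLineExponent (N : ℝ) :
    IsTempered N fun θ t => Complex.exp (halfLineExponent θ t) := by
  refine ⟨fun θ => (measurable_halfLineExponent θ).cexp, fun θ hθ => ?_⟩
  have hα : 0 < θ 2 / 2 := half_pos hθ.2.1
  have hσ : 0 < θ 1 / 2 := half_pos hθ.1
  obtain ⟨C, _, hC⟩ := exists_exp_neg_mul_rpow_le N (Real.rpow_pos_of_pos hσ (θ 2 / 2)) hα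
  refine ⟨Real.exp 1 * C, ?_⟩
  filter_upwards [eventually_mem_stableDomain_and_mem_Icc hθ] with θ' ⟨hθ', hscale, hindex⟩ t ht
  have hu : 0 < θ' 1 * t := mul_pos hθ'.1 ht
  have hlower : (θ 1 / 2) ^ (θ 2 / 2) * t ^ (θ 2 / 2) - 1 ≤ (θ' 1 * t) ^ θ' 2 :=
    calc (θ 1 / 2) ^ (θ 2 / 2) * t ^ (θ 2 / 2) - 1 ≤ (θ' 1 * t) ^ (θ 2 / 2) - 1 := by
          rw [← Real.mul_rpow hσ.le ht.le]
          gcongr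
          exact hscale.1
      _ ≤ (θ' 1 * t) ^ θ' 2 := rpow_sub_one_le_rpow hu.le hα.le hindex.1
  rw [Complex.norm_exp, re_halfLineExponent, powerDeriv_eq_rpow 0 hu, pow_zero, one_mul]
  calc Real.exp (-(θ' 1 * t) ^ θ' 2)
      ≤ Real.exp (1 + -((θ 1 / 2) ^ (θ 2 / 2) * t ^ (θ 2 / 2))) := by gcongr; linarith
    _ = Real.exp 1 * Real.exp (-((θ 1 / 2) ^ (θ 2 / 2) * t ^ (θ 2 / 2))) := Real.exp_add _ _
    _ ≤ Real.exp 1 * (C * (1 + t) ^ N) := by gcongr; exact hC t ht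
    _ = Real.exp 1 * C * (1 + t) ^ N := (mul_assoc _ _ _).symm

lemma IsTempered.cexp_halfLineExponent_mul (hq : IsTempered R q) (N : ℝ) :
    IsTempered N fun θ t => Complex.exp (halfLineExponent θ t) * q θ t := by
  simpa only [sub_add_cancel] using (isTempered_cexp_halfLineExponent (N - R)).mul hq

end ParameterDerivative

/-! ### Fourier representation of the density and its derivatives -/

section FourierRepresentation

open Set Topology

variable {q q' : (Fin 4 → ℝ) → ℝ → ℂ} {F : (Fin 4 → ℝ) → ℝ → ℝ} {θ : Fin 4 → ℝ} {i j : Fin 4}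

lemma integrableOn_one_add_rpow_neg_two (C : ℝ) :
    IntegrableOn (fun t : ℝ => C * (1 + t) ^ (-2 : ℝ)) (Ioi 0) := by
  have := integrableOn_add_rpow_Ioi_of_lt (a := -2) (c := 0) (m := 1) (by norm_num) (by norm_num)
  simpa only [IntegrableOn, add_comm] using this.integrable.const_mul C

lemma IsTempered.integrableOn (hq : IsTempered (-2) q) (hθ : θ ∈ stableDomain) :
    IntegrableOn (q θ) (Ioi 0) := by
  obtain ⟨C, hC⟩ := hq.2 θ hθ
  exact (integrableOn_one_add_rpow_neg_two C).mono' (hq.1 θ).aestronglyMeasurable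
    ((ae_restrict_iff' measurableSet_Ioi).2 (Eventually.of_forall hC.self_of_nhds))

lemma tendsto_update_self (θ : Fin 4 → ℝ) (i : Fin 4) :
    Tendsto (Function.update θ i) (𝓝 (θ i)) (𝓝 θ) := by
  simpa only [Function.update_eq_self] using
    (continuous_const.update i continuous_id : Continuous (Function.update θ i)).tendsto (θ i)

lemma HasParamDeriv.hasDerivAt_halfLineFourier (hderiv : HasParamDeriv i q q')
    (hq : IsTempered (-2) q) (hq' : IsTempered (-2) q') (hθ : θ ∈ stableDomain) (x : ℝ) :
    HasDerivAt (fun s => halfLineFourier (q (Function.update θ i s)) x)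
      (halfLineFourier (q' θ) x) (θ i) := by
  obtain ⟨C, hC⟩ := hq'.2 θ hθ
  have hnear := (tendsto_update_self θ i).eventually
    ((isOpen_stableDomain.eventually_mem hθ).and hC)
  have hmeas : ∀ {g : ℝ → ℂ}, Measurable g →
      AEStronglyMeasurable (fun t : ℝ => Complex.exp (-Complex.I * t * x) * g t)
        (volume.restrict (Ioi 0)) := fun hg => by fun_prop
  have hmain := (hasDerivAt_integral_of_dominated_loc_of_deriv_le
    (μ := volume.restrict (Ioi (0 : ℝ))) (x₀ := θ i) (bound := fun t => C * (1 + t) ^ (-2 : ℝ))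
    (F := fun s t => Complex.exp (-Complex.I * t * x) * q (Function.update θ i s) t)
    (F' := fun s t => Complex.exp (-Complex.I * t * x) * q' (Function.update θ i s) t)
    hnear (Eventually.of_forall fun s => hmeas (hq.1 _)) ?_ (hmeas (hq'.1 _)) ?_
    (integrableOn_one_add_rpow_neg_two C) ?_).2
  · simpa only [halfLineFourier, Function.update_eq_self] using hmain
  · rw [Function.update_eq_self]
    exact integrableOn_cexp_mul x (hq.integrableOn hθ)
  · refine (ae_restrict_iff' measurableSet_Ioi).2 (Eventually.of_forall fun t ht s hs => ?_)
    rw [norm_mul, norm_cexp_neg_I_mul, one_mul]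
    exact hs.2 t ht
  · refine (ae_restrict_iff' measurableSet_Ioi).2 (Eventually.of_forall fun t ht s hs => ?_)
    simpa only [Function.update_idem, Function.update_self] using
      (hderiv _ hs.1 t ht).const_mul (Complex.exp (-Complex.I * t * x))

lemma HasParamDeriv.deriv_eq_re_halfLineFourier (hderiv : HasParamDeriv i q q')
    (hq : IsTempered (-2) q) (hq' : IsTempered (-2) q') {x : ℝ}
    (hF : ∀ θ ∈ stableDomain, F θ x = 1 / Real.pi * (halfLineFourier (q θ) x).re)
    (hθ : θ ∈ stableDomain) :
    deriv (fun s => F (Function.update θ i s) x) (θ i) =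
      1 / Real.pi * (halfLineFourier (q' θ) x).re := by
  have heq : (fun s => F (Function.update θ i s) x) =ᶠ[𝓝 (θ i)]
      fun s => 1 / Real.pi * (halfLineFourier (q (Function.update θ i s)) x).re := by
    filter_upwards [(tendsto_update_self θ i).eventually
      (isOpen_stableDomain.eventually_mem hθ)] with s hs using hF _ hs
  rw [heq.deriv_eq]
  exact ((Complex.reCLM.hasFDerivAt.comp_hasDerivAt (θ i)
    (hderiv.hasDerivAt_halfLineFourier hq hq' hθ x)).const_mul _).deriv

lemma re_integral_eq_two_mul_of_conj_symm {f : ℝ → ℂ} (hf : IntegrableOn f (Ioi 0))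
    (hneg : ∀ t, f (-t) = starRingEnd ℂ (f t)) :
    (∫ t, f t).re = 2 * (∫ t in Ioi 0, f t).re := by
  have hIic : IntegrableOn f (Iic 0) := by
    have hconj : IntegrableOn (fun t => f (-t)) (Ioi 0) := by
      simp only [hneg]
      exact Complex.conjCLE.toContinuousLinearMap.integrable_comp hf
    simpa [integrableOn_Iic_iff_integrableOn_Iio] using hconj.comp_neg
  have hreflect : ∫ t in Iic 0, f t = starRingEnd ℂ (∫ t in Ioi 0, f t) := by
    rw [← integral_conj, ← neg_zero, ← integral_comp_neg_Ioi, neg_zero]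
    simp only [hneg]
  rw [← intervalIntegral.integral_Iic_add_Ioi hIic hf, hreflect, Complex.add_re, Complex.conj_re,
    two_mul]

lemma fM_eq_re_halfLineFourier (hθ : θ ∈ stableDomain) (x : ℝ) :
    fM θ x =
      1 / Real.pi * (halfLineFourier (fun t => Complex.exp (halfLineExponent θ t)) x).re := by
  have hpos : ∀ t ∈ Ioi (0 : ℝ), Complex.exp (-Complex.I * t * x) * phiM θ t =
      Complex.exp (-Complex.I * t * x) * Complex.exp (halfLineExponent θ t) := fun t ht => by
    rw [phiM, psiM_of_pos hθ ht]
  have hint : IntegrableOn (fun t : ℝ => Complex.exp (-Complex.I * t * x) * phiM θ t) (Ioi 0) :=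
    (integrableOn_congr_fun hpos measurableSet_Ioi).2 (integrableOn_cexp_mul x
      ((isTempered_cexp_halfLineExponent (-2)).integrableOn hθ))
  rw [fM, re_integral_eq_two_mul_of_conj_symm hint fun t => ?_,
    setIntegral_congr_fun measurableSet_Ioi hpos, ← halfLineFourier]
  · field_simp
  · simp only [phiM, psiM_neg, map_mul, ← Complex.exp_conj]
    simp

variable {p p' r : (Fin 4 → ℝ) → ℝ → ℂ} {R R' R'' : ℝ}

lemma fP_eq_re_halfLineFourier (hp : HasParamDeriv i halfLineExponent p) (hpR : IsTempered R p)
    (hθ : θ ∈ stableDomain) (x : ℝ) :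
    fP i θ x = 1 / Real.pi *
      (halfLineFourier (fun t => Complex.exp (halfLineExponent θ t) * p θ t) x).re :=
  hp.cexp.deriv_eq_re_halfLineFourier (isTempered_cexp_halfLineExponent _)
    (hpR.cexp_halfLineExponent_mul _) (fun _ hθ => fM_eq_re_halfLineFourier hθ x) hθ

lemma fPP_eq_re_halfLineFourier (hp : HasParamDeriv i halfLineExponent p)
    (hp' : HasParamDeriv j halfLineExponent p') (hr : HasParamDeriv j p r)
    (hpR : IsTempered R p) (hpR' : IsTempered R' p') (hrR : IsTempered R'' r)
    (hθ : θ ∈ stableDomain) (x : ℝ) :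
    fPP i j θ x = 1 / Real.pi * (halfLineFourier (fun t =>
      Complex.exp (halfLineExponent θ t) * p' θ t * p θ t +
        Complex.exp (halfLineExponent θ t) * r θ t) x).re :=
  (hp'.cexp.mul hr).deriv_eq_re_halfLineFourier (hpR.cexp_halfLineExponent_mul _)
    (IsTempered.add
      (by simpa only [sub_add_cancel] using (hpR'.cexp_halfLineExponent_mul (-2 - R)).mul hpR)
      (hrR.cexp_halfLineExponent_mul _))
    (fun _ hθ => fP_eq_re_halfLineFourier hp hpR hθ x) hθ

end FourierRepresentation

/-! ### Expansion of the amplitudes at the origin -/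

section LinearExpansion

variable {n k l m : ℕ} {α b : ℝ} {h g : ℝ → ℂ} {θ : Fin 4 → ℝ}

/-- The power of the logarithm that accompanies the linear term in a `HasLinearExpansion`. At the
resonance `α = 1` the linear term is of the same order as `t ^ α`, but the purely imaginary part may
carry one more logarithm. -/
def linearLogPower (α : ℝ) (k : ℕ) : ℕ := if α = 1 then k + 1 else 0

/-- `h(t) = i c t logᵐ t + r(t)` with `c` real and `r` a symbol of exponent `α` and logarithmic
order `k`. -/
def HasLinearExpansion (α : ℝ) (k : ℕ) (h : ℝ → ℂ) : Prop :=
  ∃ c : ℝ, ∀ n, IsSymbol n α k 0 fun t =>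
    h t - Complex.I * c * (t * (Real.log t : ℂ) ^ linearLogPower α k)

namespace HasLinearExpansion

lemma of_isSymbol (hh : ∀ n, IsSymbol n α k 0 h) : HasLinearExpansion α k h :=
  ⟨0, fun n => (hh n).congr fun t _ => by simp⟩

lemma add (hh : HasLinearExpansion α k h) (hg : HasLinearExpansion α k g) :
    HasLinearExpansion α k fun t => h t + g t := by
  obtain ⟨c, hc⟩ := hh
  obtain ⟨d, hd⟩ := hg
  refine ⟨c + d, fun n => ((hc n).add (hd n)).congr fun t _ => ?_⟩
  push_cast
  ring

lemma ofReal_mul (hh : HasLinearExpansion α k h) (a : ℝ) :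
    HasLinearExpansion α k fun t => a * h t := by
  obtain ⟨c, hc⟩ := hh
  refine ⟨a * c, fun n => ((hc n).const_mul a).congr fun t _ => ?_⟩
  push_cast
  ring

lemma congr (hh : HasLinearExpansion α k h) (hg : ∀ t, 0 < t → g t = h t) :
    HasLinearExpansion α k g := by
  obtain ⟨c, hc⟩ := hh
  exact ⟨c, fun n => (hc n).congr fun t ht => by rw [hg t ht]⟩

lemma mono (hh : HasLinearExpansion α k h) (hkl : k ≤ l) : HasLinearExpansion α l h := by
  obtain ⟨c, hc⟩ := hh
  by_cases hα : α = 1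
  · obtain rfl | hlt := hkl.eq_or_lt
    · exact ⟨c, hc⟩
    · refine of_isSymbol fun n => ?_
      have hlin := (isSymbol_linear_log n c (linearLogPower α k)).mono (k' := l)
        (by rwa [linearLogPower, if_pos hα]) le_rfl
      rw [← hα] at hlin
      simpa only [sub_add_cancel] using ((hc n).mono hkl le_rfl).add hlin
  · refine ⟨c, fun n => ?_⟩
    simpa only [linearLogPower, if_neg hα] using (hc n).mono hkl le_rfl

lemma linear (α : ℝ) (c : ℝ) (k : ℕ) : HasLinearExpansion α k fun t => Complex.I * c * t := by
  by_cases hα : α = 1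
  · refine of_isSymbol fun n => ?_
    rw [hα]
    exact (by simpa using isSymbol_linear_log n c 0 : IsSymbol n 1 0 0 _).mono k.zero_le le_rfl
  · refine ⟨c, fun n => ?_⟩
    simpa [linearLogPower, hα] using
      ((IsSymbol.rpow n α).const_mul 0).mono k.zero_le le_rfl

lemma isSymbol (hh : HasLinearExpansion α k h) (hbα : b < α) (hb1 : b < 1) (n : ℕ) :
    IsSymbol n b 0 (2 * (max α 1 - b)) h := by
  obtain ⟨c, hc⟩ := hh
  have hrem := ((hc n).of_exponent_lt hbα).mono (N' := 2 * (max α 1 - b)) le_rfl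
    (by linarith [le_max_left α 1])
  have hlin := ((isSymbol_linear_log n c (linearLogPower α k)).of_exponent_lt hb1).mono
    (N' := 2 * (max α 1 - b)) le_rfl (by linarith [le_max_right α 1])
  simpa only [sub_add_cancel] using hrem.add hlin

end HasLinearExpansion

lemma isSymbol_log_mul_pow {s : ℝ} (hs : 0 < s) (n m : ℕ) :
    IsSymbol n 0 m 0 fun t => (Real.log (s * t) : ℂ) ^ m := by
  induction m with
  | zero => simpa using IsSymbol.const n 1
  | succ m ih =>
    have hlog : IsSymbol n 0 1 0 fun t => (Real.log (s * t) : ℂ) :=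
      (((IsSymbol.const n (Real.log s : ℂ)).mono zero_le_one le_rfl).add (IsSymbol.log n)).congr
        fun t ht => by rw [Real.log_mul hs.ne' ht.ne', Complex.ofReal_add]
    simpa [pow_succ] using ih.mul hlog

lemma isSymbol_log_mul_pow_sub {s : ℝ} (hs : 0 < s) (n m : ℕ) :
    IsSymbol n 0 m 0 fun t =>
      (Real.log (s * t) : ℂ) ^ (m + 1) - (Real.log t : ℂ) ^ (m + 1) := by
  induction m with
  | zero =>
    refine (IsSymbol.const n (Real.log s : ℂ)).congr fun t ht => ?_
    rw [Real.log_mul hs.ne' ht.ne']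
    push_cast
    ring
  | succ m ih =>
    have hprod := (isSymbol_log_mul_pow hs n 1).mul ih
    rw [add_zero, add_comm 1 m] at hprod
    refine (hprod.add ((IsSymbol.log_pow n (m + 1)).const_mul (Real.log s))).congr fun t ht => ?_
    rw [Real.log_mul hs.ne' ht.ne']
    push_cast
    ring

lemma isSymbol_powerDeriv (hσ : 0 < θ 1) (n m : ℕ) :
    IsSymbol n (θ 2) m 0 fun t => (powerDeriv m θ t : ℂ) := by
  have hprod := (isSymbol_log_mul_pow hσ n m).mul
    ((IsSymbol.rpow n (θ 2)).const_mul ((θ 1 ^ θ 2 : ℝ) : ℂ))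
  rw [zero_add, add_zero, add_zero] at hprod
  refine hprod.congr fun t ht => ?_
  rw [powerDeriv_eq_rpow m (mul_pos hσ ht), Real.mul_rpow hσ.le ht.le]
  push_cast
  rfl

lemma hasLinearExpansion_const_mul_powerDeriv (hσ : 0 < θ 1) (m : ℕ) (c : ℂ) :
    HasLinearExpansion (θ 2) m fun t => c * powerDeriv m θ t :=
  .of_isSymbol fun n => (isSymbol_powerDeriv hσ n m).const_mul c

lemma hasLinearExpansion_quotientDeriv_of_eq_one (hσ : 0 < θ 1) (hα : θ 2 = 1) (j : ℕ) :
    HasLinearExpansion (θ 2) j fun t => Complex.I * quotientDeriv j θ t := by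
  refine ⟨θ 1 / (j + 1), fun n => ?_⟩
  have hrem := ((IsSymbol.ofReal n).mul (isSymbol_log_mul_pow_sub hσ n j)).const_mul
    (Complex.I * ((θ 1 / (j + 1) : ℝ) : ℂ))
  rw [add_zero, add_zero, zero_add] at hrem
  rw [hα]
  refine hrem.congr fun t ht => ?_
  simp only [quotientDeriv_of_eq_one j hα (mul_pos hσ ht), linearLogPower, if_true]
  push_cast
  ring

lemma hasLinearExpansion_quotientDeriv_of_ne_one (hσ : 0 < θ 1) (hα : θ 2 ≠ 1) (j : ℕ) :
    HasLinearExpansion (θ 2) j fun t => Complex.I * quotientDeriv j θ t := by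
  have hα' : ((θ 2 : ℂ) - 1) ≠ 0 := by exact_mod_cast sub_ne_zero.2 hα
  induction j with
  | zero =>
    refine (((hasLinearExpansion_const_mul_powerDeriv hσ 0 Complex.I).add
      (.linear (θ 2) (-θ 1) 0)).ofReal_mul (θ 2 - 1)⁻¹).congr fun t ht => ?_
    have hrec := congrArg (fun x : ℝ => (x : ℂ)) (sub_one_mul_quotientDeriv_zero (mul_pos hσ ht))
    push_cast at hrec ⊢
    rw [eq_inv_mul_iff_mul_eq₀ hα']
    linear_combination Complex.I * hrec
  | succ j ih =>
    refine (((hasLinearExpansion_const_mul_powerDeriv hσ (j + 1) Complex.I).add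
      ((ih.mono j.le_succ).ofReal_mul (-(j + 1)))).ofReal_mul (θ 2 - 1)⁻¹).congr fun t _ => ?_
    have hrec := congrArg (fun x : ℝ => (x : ℂ)) (sub_one_mul_quotientDeriv_succ j θ t)
    push_cast at hrec ⊢
    rw [eq_inv_mul_iff_mul_eq₀ hα']
    linear_combination Complex.I * hrec

lemma IsPowerCombination.hasLinearExpansion {q : (Fin 4 → ℝ) → ℝ → ℂ}
    (hq : IsPowerCombination k q) (hσ : 0 < θ 1) : HasLinearExpansion (θ 2) k (q θ) := by
  induction hq with
  | power hm c => exact (hasLinearExpansion_const_mul_powerDeriv hσ _ c).mono hm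
  | @quotient j hj =>
    by_cases hα : θ 2 = 1
    · exact (hasLinearExpansion_quotientDeriv_of_eq_one hσ hα j).mono hj
    · exact (hasLinearExpansion_quotientDeriv_of_ne_one hσ hα j).mono hj
  | coeff_mul _ _ ih => exact ih.ofReal_mul _
  | add _ _ ihq ihr => exact ihq.add ihr

lemma hasLinearExpansion_halfLineExponent (hσ : 0 < θ 1) :
    HasLinearExpansion (θ 2) 0 (halfLineExponent θ) :=
  (isPowerCombination_centeredExponent.hasLinearExpansion hσ).add (.linear (θ 2) (θ 0) 0)

end LinearExpansion

/-! ### Tails of the second parameter derivatives -/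

section SecondDerivativeTails

open Asymptotics Bornology

variable {n k k' l : ℕ} {α a c : ℝ} {ψ p p' r g : ℝ → ℂ} {θ : Fin 4 → ℝ} {i j : Fin 4}

namespace HasLinearExpansion

lemma isSymbol_cexp_sub_cexp_neg (hψ : HasLinearExpansion α 0 ψ)
    (hdecay : ∀ N, IsSymbol 0 0 0 N fun t => Complex.exp (ψ t)) (ha0 : 0 ≤ a) (haα : a < α)
    (ha1 : a < 1) (n : ℕ) (N : ℝ) :
    IsSymbol n a 0 N fun t => Complex.exp (ψ t) - Complex.exp (-(t : ℂ)) := by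
  have hneg : IsSymbol n a 0 (2 * (max α 1 - a)) fun t => -(t : ℂ) :=
    ((((IsSymbol.ofReal n).const_mul (-1)).of_exponent_lt ha1).mono le_rfl
      (by linarith [le_max_right α 1])).congr fun t _ => (neg_one_mul _).symm
  exact IsSymbol.exp_sub_exp ha0 (hψ.isSymbol haα ha1 n) hneg hdecay (IsSymbol.exp_neg 0) N

/- Two factors of exponent above `α / 2` multiply to a symbol of exponent above `α`. Hence the
quadratic term is negligible, and in the linear one `exp ψ` may be replaced by `exp (-t)`. -/
lemma exists_isSymbol_sub_linearLog (hα : α ∈ Set.Ioo (0 : ℝ) 2) (hψ : HasLinearExpansion α 0 ψ)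
    (hdecay : ∀ N, IsSymbol 0 0 0 N fun t => Complex.exp (ψ t)) (hp : HasLinearExpansion α k p)
    (hp' : HasLinearExpansion α k' p') (hr : HasLinearExpansion α l r) :
    ∃ c : ℝ, ∀ n N, IsSymbol n α l N fun t =>
      Complex.exp (ψ t) * p' t * p t + Complex.exp (ψ t) * r t -
        linearLog c (linearLogPower α l) t := by
  obtain ⟨a, hαa, ha⟩ : ∃ a, α / 2 < a ∧ a < min α 1 :=
    exists_between (lt_min (by linarith [hα.1]) (by linarith [hα.2]))
  have haα := ha.trans_le (min_le_left α 1)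
  have ha1 := ha.trans_le (min_le_right α 1)
  have ha0 : 0 ≤ a := by linarith [hα.1]
  have hαaa : α < a + a := by linarith
  have ⟨c, hc⟩ := hr
  refine ⟨c, fun n N => ?_⟩
  have hquadratic : ∀ N, IsSymbol n (a + a) 0 N fun t => Complex.exp (ψ t) * (p' t * p t) :=
    fun N => by
      simpa using (IsSymbol.exp ha0 (hψ.isSymbol haα ha1 n) hdecay
        (N - (2 * (max α 1 - a) + 2 * (max α 1 - a)))).mul
        ((hp'.isSymbol haα ha1 n).mul (hp.isSymbol haα ha1 n))
  have hcross : ∀ N, IsSymbol n (a + a) 0 N fun t =>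
      (Complex.exp (ψ t) - Complex.exp (-(t : ℂ))) * r t := fun N => by
    simpa using (hψ.isSymbol_cexp_sub_cexp_neg hdecay ha0 haα ha1 n
      (N - 2 * (max α 1 - a))).mul (hr.isSymbol haα ha1 n)
  refine (((IsSymbol.of_exponent_lt_of_forall hquadratic hαaa l N).add
    (IsSymbol.of_exponent_lt_of_forall hcross hαaa l N)).add
    ((hc n).mul_exp_neg N)).congr fun t _ => ?_
  rw [linearLog]
  ring

end HasLinearExpansion

lemma halfLineFourier_add (hf : IntegrableOn p (Set.Ioi 0)) (hg : IntegrableOn g (Set.Ioi 0))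
    (x : ℝ) :
    halfLineFourier (fun t => p t + g t) x = halfLineFourier p x + halfLineFourier g x := by
  simp only [halfLineFourier, mul_add]
  exact integral_add (integrableOn_cexp_mul x hf) (integrableOn_cexp_mul x hg)

lemma isBigO_re_halfLineFourier_linearLog (hα : α < 2) (c : ℝ) (k : ℕ) :
    (fun x => (halfLineFourier (linearLog c (linearLogPower α k)) x).re) =O[cobounded ℝ]
      fun x => |x| ^ (-(1 + α)) * Real.log |x| ^ k := by
  by_cases hα1 : α = 1
  · rw [linearLogPower, if_pos hα1, hα1, one_add_one_eq_two]
    exact isBigO_re_halfLineFourier_linearLog_succ c k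
  · rw [linearLogPower, if_neg hα1]
    refine (isBigO_re_halfLineFourier_linearLog_zero c).trans (IsBigO.of_bound 1 ?_)
    filter_upwards [eventually_cobounded_le_norm (E := ℝ) (Real.exp 1)] with x hx
    rw [Real.norm_eq_abs] at hx
    have hlog : 1 ≤ Real.log |x| := (Real.le_log_iff_exp_le ((Real.exp_pos 1).trans_le hx)).2 hx
    have hx1 : 1 ≤ |x| := (Real.one_le_exp zero_le_one).trans hx
    rw [one_mul, Real.norm_of_nonneg (by positivity), Real.norm_of_nonneg (by positivity)]
    calc |x| ^ (-3 : ℝ) ≤ |x| ^ (-(1 + α)) := by gcongr; linarith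
      _ ≤ _ := le_mul_of_one_le_right (by positivity) (one_le_pow₀ hlog)

lemma isBigO_re_halfLineFourier_of_sub_linearLog (hα : α ∈ Set.Ioo (0 : ℝ) 2)
    (hg : ∀ n N, IsSymbol n α k N fun t => g t - linearLog c (linearLogPower α k) t) :
    (fun x => (halfLineFourier g x).re) =O[cobounded ℝ]
      fun x => |x| ^ (-(1 + α)) * Real.log |x| ^ k := by
  obtain ⟨hα0, hα2⟩ := hα
  have hN : (-4 : ℝ) ≤ 0 := by norm_num
  have hrem := (hg 3 (-4)).isBigO_halfLineFourier hN (by linarith) (by linarith)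
    (by norm_num; linarith)
  have hremInt := (hg 1 (-4)).integrableOn_Ioi_zero hN (by linarith) (by linarith)
  have hlinInt : IntegrableOn (linearLog c (linearLogPower α k)) (Set.Ioi 0) :=
    ((isSymbol_linear_log 1 c (linearLogPower α k)).mul_exp_neg (-4)).integrableOn_Ioi_zero hN
      (by norm_num) (by norm_num)
  have hsplit : ∀ x, (halfLineFourier g x).re =
      (halfLineFourier (fun t => g t - linearLog c (linearLogPower α k) t) x).re +
        (halfLineFourier (linearLog c (linearLogPower α k)) x).re := fun x => by
    rw [← Complex.add_re, ← halfLineFourier_add hremInt hlinInt]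
    simp only [sub_add_cancel]
  simp only [hsplit]
  refine IsBigO.add (IsBigO.trans ?_ hrem) (isBigO_re_halfLineFourier_linearLog hα2 c k)
  exact isBigO_of_le _ fun x => Complex.abs_re_le_norm _

theorem isBigO_fPP (hθ : θ ∈ stableDomain) (hi : i ≠ 0) (hj : j ≠ 0) :
    fPP i j θ =O[cobounded ℝ] fun x => |x| ^ (-(1 + θ 2)) *
      Real.log |x| ^ ((if i = 2 then 1 else 0) + (if j = 2 then 1 else 0)) := by
  obtain ⟨p, hp, hderiv⟩ := exists_hasParamDeriv_halfLineExponent hi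
  obtain ⟨p', hp', hderiv'⟩ := exists_hasParamDeriv_halfLineExponent hj
  obtain ⟨r, hr, hderiv''⟩ := hp.exists_hasParamDeriv j
  have hdecay : ∀ N, IsSymbol 0 0 0 N fun t => Complex.exp (halfLineExponent θ t) := fun N => by
    obtain ⟨C, hC⟩ := (isTempered_cexp_halfLineExponent N).2 θ hθ
    exact ⟨C, fun t ht => by simpa [logWeight] using hC.self_of_nhds t ht⟩
  obtain ⟨c, hc⟩ := HasLinearExpansion.exists_isSymbol_sub_linearLog hθ.2
    (hasLinearExpansion_halfLineExponent hθ.1) hdecay (hp.hasLinearExpansion hθ.1)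
    (hp'.hasLinearExpansion hθ.1) (hr.hasLinearExpansion hθ.1)
  rw [funext (fPP_eq_re_halfLineFourier hderiv hderiv' hderiv'' hp.isTempered hp'.isTempered
    hr.isTempered hθ)]
  exact (isBigO_re_halfLineFourier_of_sub_linearLog hθ.2 hc).const_mul_left _

lemma isBigOAtInfty_of_isBigO {h r : ℝ → ℝ} (hr : ∀ x, 1 ≤ |x| → 0 ≤ r x)
    (hO : h =O[cobounded ℝ] r) : IsBigOAtInfty h r := by
  obtain ⟨C, hC, hbound⟩ := hO.exists_pos
  obtain ⟨M, -, hM⟩ := (hasBasis_cobounded_norm (E := ℝ)).eventually_iff.1 hbound.bound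
  refine ⟨C, hC, max M 1, by positivity, fun x hx => ?_⟩
  have hx' := hM (show M ≤ ‖x‖ from (le_max_left M 1).trans hx)
  rwa [Real.norm_eq_abs, Real.norm_of_nonneg (hr x ((le_max_right M 1).trans hx))] at hx'

end SecondDerivativeTails

theorem density_second_deriv_tail_bounds_general {θ : Fin 4 → ℝ} (hθ : θ ∈ stableDomain) :
    IsBigOAtInfty (fPP 1 1 θ) (fun x => |x| ^ (-(1 + θ 2))) ∧
    IsBigOAtInfty (fPP 1 2 θ) (fun x => |x| ^ (-(1 + θ 2)) * Real.log |x|) ∧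
    IsBigOAtInfty (fPP 1 3 θ) (fun x => |x| ^ (-(1 + θ 2))) ∧
    IsBigOAtInfty (fPP 2 2 θ) (fun x => |x| ^ (-(1 + θ 2)) * (Real.log |x|) ^ 2) ∧
    IsBigOAtInfty (fPP 2 3 θ) (fun x => |x| ^ (-(1 + θ 2)) * Real.log |x|) ∧
    IsBigOAtInfty (fPP 3 3 θ) (fun x => |x| ^ (-(1 + θ 2))) := by
  have hbound : ∀ {i j : Fin 4} {k : ℕ}, i ≠ 0 → j ≠ 0 →
      (if i = 2 then 1 else 0) + (if j = 2 then 1 else 0) = k →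
      IsBigOAtInfty (fPP i j θ) fun x => |x| ^ (-(1 + θ 2)) * Real.log |x| ^ k := by
    rintro i j _ hi hj rfl
    exact isBigOAtInfty_of_isBigO (fun x hx => by have := Real.log_nonneg hx; positivity)
      (isBigO_fPP hθ hi hj)
  have hzero {i j : Fin 4} := hbound (i := i) (j := j) (k := 0)
  have hone {i j : Fin 4} := hbound (i := i) (j := j) (k := 1)
  simp only [pow_zero, mul_one, pow_one] at hzero hone
  exact ⟨hzero (by decide) (by decide) rfl, hone (by decide) (by decide) rfl,
    hzero (by decide) (by decide) rfl, hbound (by decide) (by decide) rfl,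
    hone (by decide) (by decide) rfl, hzero (by decide) (by decide) rfl⟩

end

/-- Tail behavior of the second-order parameter derivatives of the density:
`f_{σσ} = O(|x|^{-(1+α)})`, `f_{σα} = O(|x|^{-(1+α)} log|x|)`, `f_{σβ} = O(|x|^{-(1+α)})`,
`f_{αα} = O(|x|^{-(1+α)} log²|x|)`, `f_{αβ} = O(|x|^{-(1+α)} log|x|)`,
`f_{ββ} = O(|x|^{-(1+α)})`. -/
theorem density_second_deriv_tail_bounds (θ : Fin 4 → ℝ) (hθ : θ ∈ ThetaInt) :
    IsBigOAtInfty (fPP 1 1 θ) (fun x => |x| ^ (-(1 + θ 2))) ∧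
    IsBigOAtInfty (fPP 1 2 θ) (fun x => |x| ^ (-(1 + θ 2)) * Real.log |x|) ∧
    IsBigOAtInfty (fPP 1 3 θ) (fun x => |x| ^ (-(1 + θ 2))) ∧
    IsBigOAtInfty (fPP 2 2 θ) (fun x => |x| ^ (-(1 + θ 2)) * (Real.log |x|) ^ 2) ∧
    IsBigOAtInfty (fPP 2 3 θ) (fun x => |x| ^ (-(1 + θ 2)) * Real.log |x|) ∧
    IsBigOAtInfty (fPP 3 3 θ) (fun x => |x| ^ (-(1 + θ 2))) := by
  exact density_second_deriv_tail_bounds_general ⟨hθ.1, hθ.2.1⟩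
end

section
/- Fix θ = (μ,σ,1,β) with α = 1 and β ∈ (−1,1), σ > 0, μ ∈ ℝ. Then as |x| → ∞ the second-order parameter derivatives satisfy the improved bounds f_{σσ}(x;θ) = O(|x|^{−3} log|x|) and f_{ββ}(x;θ) = O(|x|^{−3} log|x|). -/
open MeasureTheory Filter

/-!
Up to the factor `1 / π`, the density at `α = 1` is the real part of the integral over `t > 0` of
`exp (-i x t)` times the exponential of a linear combination of `t` and `t log t`. Its second
parameter derivatives carry one more factor: the square of such a combination, plus a linear term.
For `x > 0` push the half-line of integration down to `(0, ∞) - i`. The bottom edge contributes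
only `O(e⁻ˣ)`, which leaves the segment `-i [0, 1]`, where the real part of the contour integral is
the integral of `exp (-x u)` times the imaginary part of the amplitude at `-i u`. There the
combinations of size `O(u |log u|)` have imaginary part `O(u)` and the linear term is real, so this
imaginary part is `O(u² |log u|)`, one logarithm less than the amplitude itself. Watson's lemma then
gives `O(x⁻³ log x)`, and `x < 0` is reduced to `x > 0` by complex conjugation.
-/

open Set Asymptotics
open Complex (I reProdIm)
open scoped Topology ComplexConjugate

/-! ### Elementary estimates -/

theorem one_add_rpow_le_exp {x p δ : ℝ} (hx : 0 ≤ x) (hp : 0 < p) (hδ : 0 < δ) :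
    (1 + x) ^ p ≤ (p / δ) ^ p * Real.exp δ * Real.exp (δ * x) := by
  have hbase : 1 + x ≤ p / δ * Real.exp (δ * (1 + x) / p) :=
    calc 1 + x = p / δ * (δ * (1 + x) / p) := by field_simp
      _ ≤ p / δ * Real.exp (δ * (1 + x) / p) := by
        gcongr
        linarith [Real.add_one_le_exp (δ * (1 + x) / p)]
  calc (1 + x) ^ p ≤ (p / δ * Real.exp (δ * (1 + x) / p)) ^ p := by gcongr
    _ = (p / δ) ^ p * Real.exp (δ * (1 + x)) := by
      rw [Real.mul_rpow (by positivity) (Real.exp_pos _).le, ← Real.exp_mul,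
        div_mul_cancel₀ _ hp.ne']
    _ = (p / δ) ^ p * Real.exp δ * Real.exp (δ * x) := by
      rw [mul_assoc, ← Real.exp_add]; ring_nf

theorem one_add_rpow_mul_exp_neg_le {x p δ : ℝ} (hx : 0 ≤ x) (hp : 0 < p) (hδ : 0 < δ) :
    (1 + x) ^ p * Real.exp (-δ * x) ≤
      (p / (δ / 2)) ^ p * Real.exp (δ / 2) * Real.exp (-(δ / 2) * x) :=
  calc (1 + x) ^ p * Real.exp (-δ * x)
      ≤ (p / (δ / 2)) ^ p * Real.exp (δ / 2) * Real.exp (δ / 2 * x) * Real.exp (-δ * x) := by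
        gcongr
        exact one_add_rpow_le_exp hx hp (half_pos hδ)
    _ = (p / (δ / 2)) ^ p * Real.exp (δ / 2) * Real.exp (-(δ / 2) * x) := by
        rw [mul_assoc, ← Real.exp_add]; ring_nf

theorem integrableOn_Ioi_one_add_pow_mul_exp_neg (n : ℕ) {δ : ℝ} (hδ : 0 < δ) :
    IntegrableOn (fun t => (1 + t) ^ n * Real.exp (-δ * t)) (Ioi 0) := by
  have hdom := (integrableOn_exp_mul_Ioi (a := -(δ / 2)) (by linarith) 0).const_mul
    (((n + 1 : ℝ) / (δ / 2)) ^ (n + 1 : ℝ) * Real.exp (δ / 2))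
  refine hdom.mono' (by fun_prop) ?_
  filter_upwards [ae_restrict_mem measurableSet_Ioi] with t (ht : 0 < t)
  rw [Real.norm_of_nonneg (by positivity)]
  refine le_trans ?_ (one_add_rpow_mul_exp_neg_le ht.le (by positivity) hδ)
  gcongr
  rw [← Real.rpow_natCast]
  exact Real.rpow_le_rpow_of_exponent_le (by linarith) (by linarith)

theorem abs_log_le_add_inv {v : ℝ} (hv : 0 < v) : |Real.log v| ≤ v + v⁻¹ := by
  have hv' : 0 < v⁻¹ := inv_pos.2 hv
  have hlog_inv := Real.log_le_sub_one_of_pos hv'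
  rw [Real.log_inv] at hlog_inv
  exact abs_le.2 ⟨by linarith, by linarith [Real.log_le_sub_one_of_pos hv]⟩

theorem abs_im_exp_mul_le (a w : ℂ) :
    |(Complex.exp a * w).im| ≤ Real.exp a.re * (|w.im| + |a.im| * ‖w‖) := by
  have him : (Complex.exp a * w).im =
      Real.exp a.re * (Real.cos a.im * w.im + Real.sin a.im * w.re) := by
    rw [Complex.mul_im, Complex.exp_re, Complex.exp_im]; ring
  rw [him, abs_mul, Real.abs_exp]
  gcongr
  calc |Real.cos a.im * w.im + Real.sin a.im * w.re|
      ≤ |Real.cos a.im| * |w.im| + |Real.sin a.im| * |w.re| := by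
        simpa only [abs_mul] using abs_add_le (Real.cos a.im * w.im) (Real.sin a.im * w.re)
    _ ≤ 1 * |w.im| + |a.im| * ‖w‖ := by
        gcongr ?_ * _ + ?_ * ?_
        · exact Real.abs_cos_le_one _
        · exact Real.abs_sin_le_abs
        · exact Complex.abs_re_le_norm w
    _ = |w.im| + |a.im| * ‖w‖ := by rw [one_mul]

theorem re_integral_eq_two_mul_of_conj_symm_s9 {F : ℝ → ℂ} (hF : IntegrableOn F (Ioi 0))
    (hconj : ∀ t, F (-t) = conj (F t)) :
    (∫ t, F t).re = 2 * (∫ t in Ioi 0, F t).re := by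
  have hneg : ∫ t in Iic (0 : ℝ), F t = conj (∫ t in Ioi (0 : ℝ), F t) := by
    rw [← integral_conj]
    simp_rw [← hconj]
    rw [integral_comp_neg_Ioi, neg_zero]
  have hFneg : IntegrableOn F (Iic 0) := by
    rw [integrableOn_Iic_iff_integrableOn_Iio]
    refine ((Measure.measurePreserving_neg volume).integrableOn_comp_preimage
      (MeasurableEquiv.neg ℝ).measurableEmbedding).1 ?_
    simp only [Function.comp_def, hconj, Set.neg_preimage, neg_Iio, neg_zero]
    exact (LinearIsometryEquiv.integrable_comp_iff Complex.conjLIE).2 hF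
  rw [← intervalIntegral.integral_Iic_add_Ioi hFneg hF, hneg,
    Complex.add_re, Complex.conj_re, two_mul]

theorem isBigOAtInfty_of_isBigO_atTop {h r : ℝ → ℝ} (hpos : h =O[atTop] r)
    (hneg : (fun x => h (-x)) =O[atTop] r) (hr : ∀ᶠ x in atTop, 0 ≤ r x) :
    IsBigOAtInfty h fun x => r |x| := by
  obtain ⟨c, hc, hc_bound⟩ := hpos.exists_pos
  obtain ⟨d, -, hd_bound⟩ := hneg.exists_pos
  obtain ⟨M, hM⟩ := eventually_atTop.1
    ((hc_bound.bound.and hd_bound.bound).and hr)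
  refine ⟨max c d, lt_max_of_lt_left hc, max M 1, by positivity, fun x hx => ?_⟩
  obtain ⟨⟨hcx, hdx⟩, hrx⟩ := hM |x| (le_of_max_le_left hx)
  rw [Real.norm_eq_abs, Real.norm_of_nonneg hrx] at hcx hdx
  obtain habs | habs := abs_choice x
  · calc |h x| = ‖h |x|‖ := by rw [habs, Real.norm_eq_abs]
      _ ≤ c * r |x| := hcx
      _ ≤ max c d * r |x| := by gcongr; exact le_max_left c d
  · calc |h x| = ‖h (-|x|)‖ := by rw [habs, neg_neg, Real.norm_eq_abs]
      _ ≤ d * r |x| := hdx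
      _ ≤ max c d * r |x| := by gcongr; exact le_max_right c d

/-! ### Shifting the contour of a half-line Fourier integral -/

/-- The closed half-strip `0 ≤ re z`, `-1 ≤ im z ≤ 0`, across which the half-line `(0, ∞)` is
pushed down to `(0, ∞) - i`. -/
def lowerHalfStrip : Set ℂ := Ici 0 ×ℂ Icc (-1) 0

section ContourShift

variable {f : ℂ → ℂ} {C δ : ℝ}

theorem intervalIntegral_eq_of_lowerHalfStrip (hfc : ContinuousOn f lowerHalfStrip)
    (hfd : DifferentiableOn ℂ f (interior lowerHalfStrip)) {R : ℝ} (hR : 0 ≤ R) :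
    ∫ t in (0 : ℝ)..R, f t =
      (∫ t in (0 : ℝ)..R, f (t - I)) + I * (∫ u in (0 : ℝ)..1, f (R - I * u)) -
        I * ∫ u in (0 : ℝ)..1, f (-I * u) := by
  have hIcc : uIcc (-1 : ℝ) 0 = Icc (-1) 0 := uIcc_of_le (by norm_num)
  have hIoo : Ioo (min (-1 : ℝ) 0) (max (-1) 0) = Ioo (-1) 0 := by norm_num
  have hrect := Complex.integral_boundary_rect_eq_zero_of_continuousOn_of_differentiableOn
    f (-I) R (hfc.mono ?_) (hfd.mono ?_)
  · have hreflect (g : ℝ → ℂ) : ∫ y in (-1 : ℝ)..0, g y = ∫ u in (0 : ℝ)..1, g (-u) := by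
      rw [intervalIntegral.integral_comp_neg, neg_zero]
    simp only [Complex.neg_re, Complex.I_re, neg_zero, Complex.ofReal_re, Complex.neg_im,
      Complex.I_im, Complex.ofReal_im, Complex.ofReal_zero, zero_mul, add_zero, zero_add,
      smul_eq_mul, Complex.ofReal_neg, Complex.ofReal_one, neg_mul, one_mul, ← sub_eq_add_neg,
      hreflect] at hrect
    simp only [mul_comm I (Complex.ofReal _), neg_mul]
    linear_combination -hrect
  · simp only [Complex.neg_re, Complex.I_re, neg_zero, Complex.ofReal_re, Complex.neg_im,
      Complex.I_im, Complex.ofReal_im, uIcc_of_le hR, hIcc]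
    exact Complex.reProdIm_subset_iff.2 (prod_mono Icc_subset_Ici_self Subset.rfl)
  · simp only [Complex.neg_re, Complex.I_re, neg_zero, Complex.ofReal_re, Complex.neg_im,
      Complex.I_im, Complex.ofReal_im, min_eq_left hR, max_eq_right hR, hIoo]
    rw [lowerHalfStrip, Complex.interior_reProdIm, interior_Ici, interior_Icc]
    exact Complex.reProdIm_subset_iff.2 (prod_mono Ioo_subset_Ioi_self Subset.rfl)

theorem ofReal_sub_I_mul_mem_lowerHalfStrip {t u : ℝ} (ht : 0 ≤ t) (hu : u ∈ Icc (0 : ℝ) 1) :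
    (t - I * u : ℂ) ∈ lowerHalfStrip := by
  simpa [lowerHalfStrip, Complex.mem_reProdIm, ht] using hu.symm

theorem integrableOn_Ioi_of_norm_le_exp (hδ : 0 < δ) (hfc : ContinuousOn f lowerHalfStrip)
    (hf : ∀ z ∈ lowerHalfStrip, ‖f z‖ ≤ C * Real.exp (-δ * z.re))
    {u : ℝ} (hu : u ∈ Icc (0 : ℝ) 1) :
    IntegrableOn (fun t : ℝ => f (t - I * u)) (Ioi 0) := by
  have hmem {t : ℝ} (ht : t ∈ Ioi (0 : ℝ)) := ofReal_sub_I_mul_mem_lowerHalfStrip ht.le hu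
  have hmeas := (hfc.comp (f := fun t : ℝ => (t - I * u : ℂ)) (by fun_prop)
    fun _ => hmem).aestronglyMeasurable (μ := volume) measurableSet_Ioi
  refine ((integrableOn_exp_mul_Ioi (neg_lt_zero.2 hδ) 0).const_mul C).mono' hmeas ?_
  filter_upwards [ae_restrict_mem measurableSet_Ioi] with t ht
  simpa using hf _ (hmem ht)

theorem tendsto_integral_right_edge_zero (hδ : 0 < δ)
    (hf : ∀ z ∈ lowerHalfStrip, ‖f z‖ ≤ C * Real.exp (-δ * z.re)) :
    Tendsto (fun R : ℝ => ∫ u in (0 : ℝ)..1, f (R - I * u)) atTop (𝓝 0) := by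
  have hexp : Tendsto (fun R : ℝ => C * Real.exp (-δ * R)) atTop (𝓝 0) := by
    simpa only [mul_zero, Function.comp_def, id] using (Real.tendsto_exp_atBot.comp
      (tendsto_id.const_mul_atTop_of_neg (neg_lt_zero.2 hδ))).const_mul C
  refine squeeze_zero_norm' ?_ hexp
  filter_upwards [eventually_ge_atTop 0] with R hR
  have hedge := intervalIntegral.norm_integral_le_of_norm_le_const (a := (0 : ℝ)) (b := 1)
    (C := C * Real.exp (-δ * R)) (f := fun u : ℝ => f (R - I * u)) fun u hu => by
      rw [uIoc_of_le zero_le_one] at hu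
      simpa using hf _ (ofReal_sub_I_mul_mem_lowerHalfStrip hR (Ioc_subset_Icc_self hu))
  simpa using hedge

theorem integral_Ioi_eq_of_lowerHalfStrip (hδ : 0 < δ) (hfc : ContinuousOn f lowerHalfStrip)
    (hfd : DifferentiableOn ℂ f (interior lowerHalfStrip))
    (hf : ∀ z ∈ lowerHalfStrip, ‖f z‖ ≤ C * Real.exp (-δ * z.re)) :
    ∫ t in Ioi (0 : ℝ), f t =
      (∫ t in Ioi (0 : ℝ), f (t - I)) - I * ∫ u in (0 : ℝ)..1, f (-I * u) := by
  have htop : IntegrableOn (fun t : ℝ => f t) (Ioi 0) := by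
    simpa using integrableOn_Ioi_of_norm_le_exp hδ hfc hf (left_mem_Icc.2 zero_le_one)
  have hbot : IntegrableOn (fun t : ℝ => f (t - I)) (Ioi 0) := by
    simpa using integrableOn_Ioi_of_norm_le_exp hδ hfc hf (right_mem_Icc.2 zero_le_one)
  have hlim := ((intervalIntegral_tendsto_integral_Ioi 0 hbot tendsto_id).add
    ((tendsto_integral_right_edge_zero hδ hf).const_mul I)).sub_const
      (I * ∫ u in (0 : ℝ)..1, f (-I * u))
  rw [mul_zero, add_zero] at hlim
  refine tendsto_nhds_unique (intervalIntegral_tendsto_integral_Ioi 0 htop tendsto_id)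
    (hlim.congr' ?_)
  filter_upwards [eventually_ge_atTop 0] with R hR
  exact (intervalIntegral_eq_of_lowerHalfStrip hfc hfd hR).symm

theorem norm_integral_Ioi_le_of_norm_le_exp {E : Type*} [NormedAddCommGroup E] [NormedSpace ℝ E]
    {g : ℝ → E} (hδ : 0 < δ) (hg : ∀ t > 0, ‖g t‖ ≤ C * Real.exp (-δ * t)) :
    ‖∫ t in Ioi (0 : ℝ), g t‖ ≤ C / δ :=
  calc ‖∫ t in Ioi (0 : ℝ), g t‖ ≤ ∫ t in Ioi (0 : ℝ), C * Real.exp (-δ * t) := by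
        refine norm_integral_le_of_norm_le
          ((integrableOn_exp_mul_Ioi (neg_lt_zero.2 hδ) 0).const_mul C) ?_
        filter_upwards [ae_restrict_mem measurableSet_Ioi] with t ht using hg t ht
    _ = C / δ := by
        rw [integral_const_mul, integral_exp_mul_Ioi (neg_lt_zero.2 hδ), mul_zero, Real.exp_zero,
          neg_div_neg_eq, mul_one_div]

theorem re_I_mul_integral_exp_mul (hfc : ContinuousOn f lowerHalfStrip) (x : ℝ) :
    (I * ∫ u in (0 : ℝ)..1, Complex.exp (-I * x * (-I * u)) * f (-I * u)).re =
      -∫ u in (0 : ℝ)..1, Real.exp (-x * u) * (f (-I * u)).im := by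
  have hside : ContinuousOn (fun u : ℝ => f (-I * u)) (uIcc 0 1) := by
    refine hfc.comp (by fun_prop) fun u hu => ?_
    rw [uIcc_of_le zero_le_one] at hu
    simpa using ofReal_sub_I_mul_mem_lowerHalfStrip le_rfl hu
  have hint : IntervalIntegrable
      (fun u : ℝ => Complex.exp (-I * x * (-I * u)) * f (-I * u)) volume 0 1 :=
    ((Continuous.continuousOn (by fun_prop)).mul hside).intervalIntegrable
  have him (u : ℝ) : (Complex.exp (-I * x * (-I * u)) * f (-I * u)).im =
      Real.exp (-x * u) * (f (-I * u)).im := by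
    have hexponent : -I * x * (-I * u) = ((-x * u : ℝ) : ℂ) := by
      push_cast; linear_combination x * u * Complex.I_mul_I
    rw [hexponent, ← Complex.ofReal_exp, Complex.im_ofReal_mul]
  have hcomm := Complex.imCLM.intervalIntegral_comp_comm hint
  simp only [Complex.imCLM_apply, him] at hcomm
  rw [Complex.I_mul_re, hcomm]

theorem abs_re_integral_Ioi_exp_mul_le (hδ : 0 < δ) (hfc : ContinuousOn f lowerHalfStrip)
    (hfd : DifferentiableOn ℂ f (interior lowerHalfStrip))
    (hf : ∀ z ∈ lowerHalfStrip, ‖f z‖ ≤ C * Real.exp (-δ * z.re)) {x : ℝ} (hx : 0 ≤ x) :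
    |(∫ t in Ioi (0 : ℝ), Complex.exp (-I * x * t) * f t).re| ≤
      C * Real.exp (-x) / δ +
        |∫ u in (0 : ℝ)..1, Real.exp (-x * u) * (f (-I * u)).im| := by
  set F : ℂ → ℂ := fun z => Complex.exp (-I * x * z) * f z with hF
  have hFnorm {z : ℂ} (hz : z ∈ lowerHalfStrip) :
      ‖F z‖ ≤ C * Real.exp (x * z.im) * Real.exp (-δ * z.re) := by
    have hexp : ‖Complex.exp (-I * x * z)‖ = Real.exp (x * z.im) := by simp [Complex.norm_exp]
    calc ‖F z‖ = Real.exp (x * z.im) * ‖f z‖ := by rw [hF, norm_mul, hexp]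
      _ ≤ Real.exp (x * z.im) * (C * Real.exp (-δ * z.re)) := by gcongr; exact hf z hz
      _ = C * Real.exp (x * z.im) * Real.exp (-δ * z.re) := by ring
  have hC : 0 ≤ C := by
    simpa using (norm_nonneg _).trans (hf 0 (by simp [lowerHalfStrip, Complex.mem_reProdIm]))
  have hFbound : ∀ z ∈ lowerHalfStrip, ‖F z‖ ≤ C * Real.exp (-δ * z.re) := fun z hz => by
    refine (hFnorm hz).trans ?_
    gcongr
    exact mul_le_of_le_one_right hC
      (Real.exp_le_one_iff.2 (mul_nonpos_of_nonneg_of_nonpos hx hz.2.2))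
  have hbottom : ‖∫ t in Ioi (0 : ℝ), F (t - I)‖ ≤ C * Real.exp (-x) / δ :=
    norm_integral_Ioi_le_of_norm_le_exp hδ fun t ht => by
      have hmem := ofReal_sub_I_mul_mem_lowerHalfStrip ht.le (right_mem_Icc.2 zero_le_one)
      simpa using hFnorm hmem
  have hshift := integral_Ioi_eq_of_lowerHalfStrip hδ (by fun_prop : ContinuousOn F _)
    (by fun_prop) hFbound
  rw [hshift, Complex.sub_re, re_I_mul_integral_exp_mul hfc, sub_neg_eq_add]
  exact (abs_add_le _ _).trans
    (add_le_add_left ((Complex.abs_re_le_norm _).trans hbottom) _)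

end ContourShift

/-! ### The Laplace bound for the vertical side -/

theorem integral_pow_mul_exp_neg_mul_Ioi (n : ℕ) {x : ℝ} (hx : 0 < x) :
    ∫ u in Ioi (0 : ℝ), u ^ n * Real.exp (-x * u) = n.factorial / x ^ (n + 1) := by
  have hGamma := Real.integral_rpow_mul_exp_neg_mul_Ioi (a := n + 1) (by positivity) hx
  simp only [add_sub_cancel_right, Real.rpow_natCast, Real.Gamma_nat_eq_factorial] at hGamma
  simp only [neg_mul]
  rw [hGamma, ← Nat.cast_succ, Real.rpow_natCast, one_div, inv_pow, div_eq_inv_mul]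

theorem integrableOn_Ioi_pow_mul_exp_neg_mul (n : ℕ) {x : ℝ} (hx : 0 < x) :
    IntegrableOn (fun u => u ^ n * Real.exp (-x * u)) (Ioi 0) := by
  refine (integrableOn_Ioi_one_add_pow_mul_exp_neg n hx).mono' (by fun_prop) ?_
  filter_upwards [ae_restrict_mem measurableSet_Ioi] with u (hu : 0 < u)
  rw [Real.norm_of_nonneg (by positivity)]
  gcongr
  linarith

theorem sq_mul_one_add_abs_log_le {x u : ℝ} (hx : Real.exp 1 ≤ x) (hu : 0 < u) :
    u ^ 2 * (1 + |Real.log u|) ≤ Real.log x * (x⁻¹ * u + 2 * u ^ 2 + x * u ^ 3) := by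
  have hx0 : 0 < x := (Real.exp_pos 1).trans_le hx
  have hlogx : 1 ≤ Real.log x := (Real.le_log_iff_exp_le hx0).2 hx
  have hlogu : |Real.log u| ≤ x * u + (x * u)⁻¹ + Real.log x := by
    have hsplit : Real.log u = Real.log (x * u) - Real.log x := by
      rw [Real.log_mul hx0.ne' hu.ne']; ring
    calc |Real.log u| ≤ |Real.log (x * u)| + |Real.log x| := hsplit ▸ abs_sub _ _
      _ ≤ x * u + (x * u)⁻¹ + Real.log x :=
        add_le_add (abs_log_le_add_inv (mul_pos hx0 hu)) (abs_of_nonneg (by linarith)).le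
  have hone : 1 + |Real.log u| ≤ Real.log x * (x * u + (x * u)⁻¹ + 2) := by
    have : 0 < x * u + (x * u)⁻¹ := by positivity
    nlinarith
  calc u ^ 2 * (1 + |Real.log u|) ≤ u ^ 2 * (Real.log x * (x * u + (x * u)⁻¹ + 2)) := by gcongr
    _ = Real.log x * (x⁻¹ * u + 2 * u ^ 2 + x * u ^ 3) := by field_simp; ring

theorem integral_exp_neg_mul_sq_mul_one_add_abs_log_le {g : ℝ → ℝ} {B x : ℝ}
    (hg : ∀ u ∈ Ioc (0 : ℝ) 1, |g u| ≤ B * (u ^ 2 * (1 + |Real.log u|)))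
    (hx : Real.exp 1 ≤ x) :
    |∫ u in (0 : ℝ)..1, Real.exp (-x * u) * g u| ≤ B * (11 * (x ^ (-3 : ℝ) * Real.log x)) := by
  have hx0 : 0 < x := (Real.exp_pos 1).trans_le hx
  have hB : 0 ≤ B := by simpa using (abs_nonneg _).trans (hg 1 (by norm_num))
  set L : ℝ → ℝ := fun u => B * Real.log x *
    (x⁻¹ * (u ^ 1 * Real.exp (-x * u)) + 2 * (u ^ 2 * Real.exp (-x * u)) +
      x * (u ^ 3 * Real.exp (-x * u))) with hL
  have hterm (n : ℕ) (c : ℝ) := (integrableOn_Ioi_pow_mul_exp_neg_mul n hx0).const_mul c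
  have hLint : IntegrableOn L (Ioi 0) :=
    (((hterm 1 x⁻¹).add (hterm 2 2)).add (hterm 3 x)).const_mul _
  have hlog : 0 ≤ Real.log x := Real.log_nonneg ((Real.one_le_exp zero_le_one).trans hx)
  rw [intervalIntegral.integral_of_le zero_le_one]
  calc |∫ u in Ioc (0 : ℝ) 1, Real.exp (-x * u) * g u| ≤ ∫ u in Ioc (0 : ℝ) 1, L u := by
        refine norm_integral_le_of_norm_le (G := ℝ) (hLint.mono_set Ioc_subset_Ioi_self) ?_
        filter_upwards [ae_restrict_mem measurableSet_Ioc] with u hu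
        rw [norm_mul, Real.norm_eq_abs, Real.abs_exp, Real.norm_eq_abs]
        calc Real.exp (-x * u) * |g u|
            ≤ Real.exp (-x * u) *
                (B * (Real.log x * (x⁻¹ * u + 2 * u ^ 2 + x * u ^ 3))) := by
              gcongr
              exact (hg u hu).trans
                (mul_le_mul_of_nonneg_left (sq_mul_one_add_abs_log_le hx hu.1) hB)
          _ = L u := by simp only [hL]; ring
    _ ≤ ∫ u in Ioi (0 : ℝ), L u := by
        refine setIntegral_mono_set hLint ?_ (LE.le.eventuallyLE Ioc_subset_Ioi_self)
        filter_upwards [ae_restrict_mem measurableSet_Ioi] with u (hu : 0 < u)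
        simp only [hL, Pi.zero_apply]
        positivity
    _ = B * (11 * (x ^ (-3 : ℝ) * Real.log x)) := by
        have hadd := integral_add ((hterm 1 x⁻¹).add (hterm 2 2)) (hterm 3 x)
        simp only [Pi.add_apply] at hadd
        rw [hL, integral_const_mul, hadd, integral_add (hterm 1 x⁻¹) (hterm 2 2)]
        simp only [integral_const_mul, integral_pow_mul_exp_neg_mul_Ioi _ hx0]
        rw [Real.rpow_neg hx0.le, show (3 : ℝ) = (3 : ℕ) by norm_num, Real.rpow_natCast]
        norm_num [Nat.factorial]
        field_simp
        ring

theorem exp_neg_isBigO_rpow_neg_three_mul_log :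
    (fun x => Real.exp (-x)) =O[atTop] fun x => x ^ (-3 : ℝ) * Real.log x := by
  have hexp : (fun x => Real.exp (-x)) =O[atTop] fun x : ℝ => x ^ (-3 : ℝ) := by
    simpa using (isLittleO_exp_neg_mul_rpow_atTop one_pos (-3)).isBigO
  have hlog : (fun _ => (1 : ℝ)) =O[atTop] Real.log :=
    (Real.isLittleO_const_log_atTop (c := (1 : ℝ))).isBigO
  simpa using hexp.mul hlog

theorem re_integral_Ioi_exp_mul_isBigO {f : ℂ → ℂ} {B C δ : ℝ} (hδ : 0 < δ)
    (hfc : ContinuousOn f lowerHalfStrip) (hfd : DifferentiableOn ℂ f (interior lowerHalfStrip))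
    (hf : ∀ z ∈ lowerHalfStrip, ‖f z‖ ≤ C * Real.exp (-δ * z.re))
    (hfim : ∀ u ∈ Ioc (0 : ℝ) 1, |(f (-I * u)).im| ≤ B * (u ^ 2 * (1 + |Real.log u|))) :
    (fun x : ℝ => (∫ t in Ioi (0 : ℝ), Complex.exp (-I * x * t) * f t).re) =O[atTop]
      fun x => x ^ (-3 : ℝ) * Real.log x := by
  have hexp := exp_neg_isBigO_rpow_neg_three_mul_log.const_mul_left (C / δ)
  have hside : (fun x => ∫ u in (0 : ℝ)..1, Real.exp (-x * u) * (f (-I * u)).im) =O[atTop]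
      fun x => x ^ (-3 : ℝ) * Real.log x := by
    refine IsBigO.of_bound (B * 11) ?_
    filter_upwards [eventually_ge_atTop (Real.exp 1)] with x hx
    have hlog : 0 ≤ Real.log x := Real.log_nonneg ((Real.one_le_exp zero_le_one).trans hx)
    have hx0 : 0 ≤ x := (Real.exp_pos 1).le.trans hx
    rw [Real.norm_eq_abs, Real.norm_of_nonneg (by positivity), mul_assoc]
    exact integral_exp_neg_mul_sq_mul_one_add_abs_log_le hfim hx
  refine (IsBigO.of_bound' ?_).trans (hexp.add hside.norm_left)
  filter_upwards [eventually_ge_atTop 0] with x hx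
  rw [div_mul_eq_mul_div]
  exact (abs_re_integral_Ioi_exp_mul_le hδ hfc hfd hf hx).trans (le_abs_self _)

/-! ### The function `z log z` -/

theorem norm_mul_log_le (z : ℂ) :
    ‖z * Complex.log z‖ ≤ |‖z‖ * Real.log ‖z‖| + Real.pi * ‖z‖ := by
  have hlog : ‖Complex.log z‖ ≤ |Real.log ‖z‖| + Real.pi :=
    calc ‖Complex.log z‖ ≤ |(Complex.log z).re| + |(Complex.log z).im| :=
          Complex.norm_le_abs_re_add_abs_im _
      _ ≤ |Real.log ‖z‖| + Real.pi := by
          rw [Complex.log_re, Complex.log_im]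
          gcongr
          exact Complex.abs_arg_le_pi z
  calc ‖z * Complex.log z‖ ≤ ‖z‖ * (|Real.log ‖z‖| + Real.pi) := by rw [norm_mul]; gcongr
    _ = |‖z‖ * Real.log ‖z‖| + Real.pi * ‖z‖ := by rw [abs_mul, abs_norm]; ring

theorem abs_mul_log_le_one_add_sq {r : ℝ} (hr : 0 ≤ r) : |r * Real.log r| ≤ 1 + r ^ 2 := by
  obtain rfl | hr := hr.eq_or_lt
  · simp
  calc |r * Real.log r| = r * |Real.log r| := by rw [abs_mul, abs_of_pos hr]
    _ ≤ r * (r + r⁻¹) := by gcongr; exact abs_log_le_add_inv hr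
    _ = 1 + r ^ 2 := by field_simp; ring

theorem continuousAt_mul_log_zero : ContinuousAt (fun z => z * Complex.log z) 0 := by
  have hbound : Continuous fun z : ℂ => |‖z‖ * Real.log ‖z‖| + Real.pi * ‖z‖ :=
    (Real.continuous_mul_log.comp continuous_norm).abs.add (by fun_prop)
  rw [ContinuousAt, zero_mul]
  exact squeeze_zero_norm norm_mul_log_le (by simpa using hbound.tendsto 0)

theorem continuousOn_mul_log : ContinuousOn (fun z => z * Complex.log z) lowerHalfStrip := by
  intro z hz
  obtain rfl | hz0 := eq_or_ne z 0
  · exact continuousAt_mul_log_zero.continuousWithinAt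
  have hslit : z ∈ Complex.slitPlane := by
    refine Complex.mem_slitPlane_iff.2 <| hz.1.lt_or_eq.imp id fun hre him => hz0 ?_
    exact Complex.ext hre.symm him
  exact (continuousAt_id.mul (continuousAt_clog hslit)).continuousWithinAt

theorem differentiableOn_mul_log :
    DifferentiableOn ℂ (fun z => z * Complex.log z) (interior lowerHalfStrip) := by
  refine differentiableOn_id.mul (differentiableOn_id.clog fun z hz => Or.inl ?_)
  rw [lowerHalfStrip, Complex.interior_reProdIm, interior_Ici] at hz
  exact hz.1

theorem norm_le_one_add_re_of_mem_lowerHalfStrip {z : ℂ} (hz : z ∈ lowerHalfStrip) :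
    ‖z‖ ≤ 1 + z.re := by
  have hre : 0 ≤ z.re := hz.1
  have him : |z.im| ≤ 1 := abs_le.2 ⟨hz.2.1, hz.2.2.trans zero_le_one⟩
  have := Complex.norm_le_abs_re_add_abs_im z
  rw [abs_of_nonneg hre] at this
  linarith

theorem re_mul_abs_arg_le {z : ℂ} (hz : 0 ≤ z.re) : z.re * |z.arg| ≤ Real.pi / 2 * |z.im| := by
  have hsin := Real.mul_abs_le_abs_sin (Complex.abs_arg_le_pi_div_two_iff.2 hz)
  rw [Complex.sin_arg, abs_div, abs_norm] at hsin
  obtain rfl | hz0 := eq_or_ne z 0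
  · simp
  calc z.re * |z.arg| ≤ ‖z‖ * |z.arg| := by gcongr; exact Complex.re_le_norm z
    _ = Real.pi / 2 * (2 / Real.pi * |z.arg| * ‖z‖) := by field_simp
    _ ≤ Real.pi / 2 * |z.im| := by
      gcongr
      exact (le_div_iff₀ (norm_pos_iff.2 hz0)).1 hsin

theorem abs_im_mul_log_norm_le {z : ℂ} (hz : z ∈ lowerHalfStrip) :
    |z.im * Real.log ‖z‖| ≤ 1 + Real.log (1 + z.re) := by
  have hre : 0 ≤ z.re := hz.1
  have hlog : 0 ≤ Real.log (1 + z.re) := Real.log_nonneg (by linarith)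
  obtain rfl | hz0 := eq_or_ne z 0
  · simp
  have hpos : 0 < ‖z‖ := norm_pos_iff.2 hz0
  obtain hsmall | hlarge := le_or_gt ‖z‖ 1
  · calc |z.im * Real.log ‖z‖| ≤ ‖z‖ * |Real.log ‖z‖| := by
          rw [abs_mul]; gcongr; exact Complex.abs_im_le_norm z
      _ ≤ 1 := by
          simpa [abs_mul, mul_comm] using (Real.abs_log_mul_self_lt _ hpos hsmall).le
      _ ≤ 1 + Real.log (1 + z.re) := by linarith
  · have him : |z.im| ≤ 1 := abs_le.2 ⟨hz.2.1, hz.2.2.trans zero_le_one⟩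
    calc |z.im * Real.log ‖z‖| ≤ 1 * Real.log ‖z‖ := by
          rw [abs_mul, abs_of_pos (Real.log_pos hlarge)]
          exact mul_le_mul_of_nonneg_right him (Real.log_pos hlarge).le
      _ ≤ 1 * Real.log (1 + z.re) := by
          gcongr; exact norm_le_one_add_re_of_mem_lowerHalfStrip hz
      _ ≤ 1 + Real.log (1 + z.re) := by linarith

theorem abs_im_mul_log_le {z : ℂ} (hz : z ∈ lowerHalfStrip) :
    |(z * Complex.log z).im| ≤ 3 + Real.log (1 + z.re) := by
  have him : |z.im| ≤ 1 := abs_le.2 ⟨hz.2.1, hz.2.2.trans zero_le_one⟩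
  have harg : |z.re * z.arg| ≤ 2 := by
    rw [abs_mul, abs_of_nonneg hz.1]
    nlinarith [re_mul_abs_arg_le hz.1, Real.pi_pos, Real.pi_le_four]
  rw [Complex.mul_im, Complex.log_re, Complex.log_im]
  linarith [abs_add_le (z.re * z.arg) (z.im * Real.log ‖z‖), abs_im_mul_log_norm_le hz]

theorem neg_I_mul_mul_log {u : ℝ} (hu : 0 < u) :
    -I * u * Complex.log (-I * u) = -(u * (Real.pi / 2) : ℝ) - I * (u * Real.log u : ℝ) := by
  rw [Complex.log_mul_ofReal u hu _ (neg_ne_zero.2 Complex.I_ne_zero), Complex.log_neg_I]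
  push_cast
  linear_combination (u * Real.pi / 2 : ℂ) * Complex.I_mul_I

/-! ### The exponent and its second variation -/

/-- The exponent of the `α = 1` characteristic function at frequency `z`, as a real-linear
function of its coefficients: `(p, w)` is sent to `p z - i w z log z`. On `z > 0` the stable
law has `p = -σ + i (μ - (2β/π) σ log σ)` and `w = (2β/π) σ`. -/
noncomputable def stableExponent (z : ℂ) : ℂ × ℝ →L[ℝ] ℂ :=
  z • ContinuousLinearMap.fst ℝ ℂ ℝ -
    (I * (z * Complex.log z)) • Complex.ofRealCLM.comp (ContinuousLinearMap.snd ℝ ℂ ℝ)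

theorem stableExponent_apply (z : ℂ) (a : ℂ × ℝ) :
    stableExponent z a = z * a.1 - I * (z * Complex.log z) * a.2 := by
  simp only [stableExponent, sub_apply, smul_apply, ContinuousLinearMap.coe_fst',
    ContinuousLinearMap.comp_apply, ContinuousLinearMap.coe_snd', Complex.ofRealCLM_apply,
    smul_eq_mul]

theorem norm_stableExponent_le (z : ℂ) :
    ‖stableExponent z‖ ≤ 5 * (‖z‖ * (1 + |Real.log ‖z‖|)) := by
  have hfst : ‖z • ContinuousLinearMap.fst ℝ ℂ ℝ‖ ≤ ‖z‖ := by
    rw [norm_smul]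
    exact mul_le_of_le_one_right (norm_nonneg z) (ContinuousLinearMap.norm_fst_le ..)
  have hsnd : ‖(I * (z * Complex.log z)) • Complex.ofRealCLM.comp
      (ContinuousLinearMap.snd ℝ ℂ ℝ)‖ ≤ ‖z * Complex.log z‖ := by
    rw [norm_smul, norm_mul I, Complex.norm_I, one_mul]
    refine mul_le_of_le_one_right (norm_nonneg _) ?_
    refine (ContinuousLinearMap.opNorm_comp_le _ _).trans ?_
    rw [Complex.ofRealCLM_norm, one_mul]
    exact ContinuousLinearMap.norm_snd_le ..
  have hlog := norm_mul_log_le z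
  rw [abs_mul, abs_norm] at hlog
  have hpi : Real.pi * ‖z‖ ≤ 4 * ‖z‖ := by gcongr; exact Real.pi_le_four
  calc ‖stableExponent z‖ ≤ ‖z‖ + ‖z * Complex.log z‖ := norm_sub_le_of_le hfst hsnd
    _ ≤ 5 * (‖z‖ * (1 + |Real.log ‖z‖|)) := by
      linarith [mul_nonneg (norm_nonneg z) (abs_nonneg (Real.log ‖z‖))]

theorem norm_stableExponent_le_one_add_sq (z : ℂ) :
    ‖stableExponent z‖ ≤ 5 * (1 + ‖z‖) ^ 2 := by
  have hlog := abs_mul_log_le_one_add_sq (norm_nonneg z)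
  rw [abs_mul, abs_norm] at hlog
  linarith [norm_stableExponent_le z, norm_nonneg z]

theorem continuousOn_stableExponent (a : ℂ × ℝ) :
    ContinuousOn (fun z => stableExponent z a) lowerHalfStrip := by
  have := continuousOn_mul_log
  simp only [stableExponent_apply]
  fun_prop

theorem differentiableOn_stableExponent (a : ℂ × ℝ) :
    DifferentiableOn ℂ (fun z => stableExponent z a) (interior lowerHalfStrip) := by
  have := differentiableOn_mul_log
  simp only [stableExponent_apply]
  fun_prop

theorem norm_stableExponent_le_of_mem_lowerHalfStrip {z : ℂ} (hz : z ∈ lowerHalfStrip) :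
    ‖stableExponent z‖ ≤ 20 * (1 + z.re) ^ 2 := by
  have hre : 0 ≤ z.re := hz.1
  calc ‖stableExponent z‖ ≤ 5 * (1 + ‖z‖) ^ 2 := norm_stableExponent_le_one_add_sq z
    _ ≤ 5 * (2 * (1 + z.re)) ^ 2 := by
      gcongr
      linarith [norm_le_one_add_re_of_mem_lowerHalfStrip hz]
    _ = 20 * (1 + z.re) ^ 2 := by ring

theorem re_stableExponent_le {z : ℂ} (hz : z ∈ lowerHalfStrip) (a : ℂ × ℝ) :
    (stableExponent z a).re ≤ a.1.re * z.re + (4 * ‖a‖ + ‖a‖ * Real.log (1 + z.re)) := by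
  have hre : (stableExponent z a).re =
      a.1.re * z.re - z.im * a.1.im + (z * Complex.log z).im * a.2 := by
    rw [stableExponent_apply, Complex.sub_re, Complex.mul_re, Complex.re_mul_ofReal,
      Complex.I_mul_re]
    ring
  have him : |z.im * a.1.im| ≤ 1 * ‖a‖ := by
    rw [abs_mul]
    gcongr
    · exact abs_le.2 ⟨hz.2.1, hz.2.2.trans zero_le_one⟩
    · exact (Complex.abs_im_le_norm _).trans (norm_fst_le a)
  have hlog : |(z * Complex.log z).im * a.2| ≤ (3 + Real.log (1 + z.re)) * ‖a‖ := by
    rw [abs_mul]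
    gcongr
    · exact (abs_nonneg _).trans (abs_im_mul_log_le hz)
    · exact abs_im_mul_log_le hz
    · exact norm_snd_le a
  linarith [neg_abs_le (z.im * a.1.im), le_abs_self ((z * Complex.log z).im * a.2)]

theorem norm_exp_stableExponent_le {z : ℂ} (hz : z ∈ lowerHalfStrip) (a : ℂ × ℝ) :
    ‖Complex.exp (stableExponent z a)‖ ≤
      Real.exp (4 * ‖a‖) * (1 + z.re) ^ ‖a‖ * Real.exp (a.1.re * z.re) := by
  have hre : 0 < 1 + z.re := by linarith [show 0 ≤ z.re from hz.1]
  rw [Complex.norm_exp, Real.rpow_def_of_pos hre, ← Real.exp_add, ← Real.exp_add,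
    Real.exp_le_exp]
  linarith [re_stableExponent_le hz a]

theorem im_stableExponent_neg_I_mul {u : ℝ} (hu : 0 < u) (a : ℂ × ℝ) :
    (stableExponent (-I * u) a).im = u * (a.2 * (Real.pi / 2) - a.1.re) := by
  rw [stableExponent_apply, neg_I_mul_mul_log hu]
  simp only [Complex.sub_im, Complex.mul_im, Complex.mul_re, Complex.sub_re, Complex.neg_re,
    Complex.neg_im, Complex.I_re, Complex.I_im, Complex.ofReal_re, Complex.ofReal_im]
  ring

theorem abs_im_stableExponent_neg_I_mul_le {u : ℝ} (hu : 0 < u) (a : ℂ × ℝ) :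
    |(stableExponent (-I * u) a).im| ≤ 3 * ‖a‖ * u := by
  have hre : |a.1.re| ≤ ‖a‖ := (Complex.abs_re_le_norm _).trans (norm_fst_le a)
  have hw : |a.2 * (Real.pi / 2)| ≤ ‖a‖ * 2 := by
    rw [abs_mul, abs_of_pos (half_pos Real.pi_pos)]
    gcongr
    · exact norm_snd_le a
    · linarith [Real.pi_le_four]
  rw [im_stableExponent_neg_I_mul hu, abs_mul, abs_of_pos hu, mul_comm]
  gcongr
  linarith [abs_sub (a.2 * (Real.pi / 2)) a.1.re]

theorem norm_stableExponent_neg_I_mul_le {u : ℝ} (hu : 0 < u) (a : ℂ × ℝ) :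
    ‖stableExponent (-I * u) a‖ ≤ 5 * ‖a‖ * (u * (1 + |Real.log u|)) := by
  have hnorm := (stableExponent (-I * u)).le_of_opNorm_le (norm_stableExponent_le _) a
  rw [norm_mul, norm_neg, Complex.norm_I, one_mul, Complex.norm_of_nonneg hu.le] at hnorm
  linarith

theorem conj_stableExponent {t : ℝ} (ht : 0 < t) (a : ℂ × ℝ) :
    conj (stableExponent t a) = stableExponent t (conj a.1, -a.2) := by
  simp only [stableExponent_apply, ← Complex.ofReal_log ht.le, map_sub, map_mul,
    Complex.conj_ofReal, Complex.conj_I, Complex.ofReal_neg]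
  ring

theorem mul_one_add_abs_log_le_two {u : ℝ} (hu : u ∈ Ioc (0 : ℝ) 1) :
    u * (1 + |Real.log u|) ≤ 2 := by
  have hlog := Real.abs_log_mul_self_lt u hu.1 hu.2
  rw [abs_mul, abs_of_pos hu.1] at hlog
  linarith [hu.2]

theorem norm_stableExponent_neg_I_mul_sq_add_le {u : ℝ} (hu : u ∈ Ioc (0 : ℝ) 1)
    (b c : ℂ × ℝ) :
    ‖stableExponent (-I * u) b ^ 2 + stableExponent (-I * u) c‖ ≤
      (50 * ‖b‖ ^ 2 + 5 * ‖c‖) * (u * (1 + |Real.log u|)) := by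
  have hu0 : 0 < u := hu.1
  set ℓ := 1 + |Real.log u|
  have hℓ : u * ℓ ≤ 2 := mul_one_add_abs_log_le_two hu
  calc ‖stableExponent (-I * u) b ^ 2 + stableExponent (-I * u) c‖
      ≤ ‖stableExponent (-I * u) b‖ ^ 2 + ‖stableExponent (-I * u) c‖ := by
        rw [← norm_pow]; exact norm_add_le _ _
    _ ≤ (5 * ‖b‖ * (u * ℓ)) ^ 2 + 5 * ‖c‖ * (u * ℓ) := by
        gcongr <;> exact norm_stableExponent_neg_I_mul_le hu0 _
    _ = (25 * ‖b‖ ^ 2 * (u * ℓ) + 5 * ‖c‖) * (u * ℓ) := by ring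
    _ ≤ (25 * ‖b‖ ^ 2 * 2 + 5 * ‖c‖) * (u * ℓ) := by gcongr
    _ = (50 * ‖b‖ ^ 2 + 5 * ‖c‖) * (u * ℓ) := by ring

theorem abs_im_stableExponent_neg_I_mul_sq_add_le {u : ℝ} (hu : 0 < u) (b : ℂ × ℝ)
    {c : ℂ × ℝ} (hc : c.1.re = c.2 * (Real.pi / 2)) :
    |(stableExponent (-I * u) b ^ 2 + stableExponent (-I * u) c).im| ≤
      30 * ‖b‖ ^ 2 * (u ^ 2 * (1 + |Real.log u|)) := by
  have hc_im : (stableExponent (-I * u) c).im = 0 := by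
    rw [im_stableExponent_neg_I_mul hu, hc, sub_self, mul_zero]
  calc |(stableExponent (-I * u) b ^ 2 + stableExponent (-I * u) c).im|
      = 2 * |(stableExponent (-I * u) b).re| * |(stableExponent (-I * u) b).im| := by
        rw [Complex.add_im, hc_im, add_zero, sq, Complex.mul_im, ← abs_two, ← abs_mul, ← abs_mul]
        ring_nf
    _ ≤ 2 * (5 * ‖b‖ * (u * (1 + |Real.log u|))) * (3 * ‖b‖ * u) := by
        gcongr
        · exact (Complex.abs_re_le_norm _).trans (norm_stableExponent_neg_I_mul_le hu b)
        · exact abs_im_stableExponent_neg_I_mul_le hu b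
    _ = 30 * ‖b‖ ^ 2 * (u ^ 2 * (1 + |Real.log u|)) := by ring

/-- The second derivative of `s ↦ exp (stableExponent z (γ s))` at a point where the curve `γ`,
its velocity and its acceleration take the values `a`, `b` and `c`. -/
noncomputable def secondVariation (a b c : ℂ × ℝ) (z : ℂ) : ℂ :=
  Complex.exp (stableExponent z a) * (stableExponent z b ^ 2 + stableExponent z c)

section SecondVariation

variable (a b c : ℂ × ℝ)

theorem continuousOn_secondVariation : ContinuousOn (secondVariation a b c) lowerHalfStrip := by
  have := continuousOn_stableExponent
  unfold secondVariation
  fun_prop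

theorem differentiableOn_secondVariation :
    DifferentiableOn ℂ (secondVariation a b c) (interior lowerHalfStrip) := by
  have := differentiableOn_stableExponent
  unfold secondVariation
  fun_prop

theorem conj_secondVariation {t : ℝ} (ht : 0 < t) :
    conj (secondVariation a b c t) =
      secondVariation (conj a.1, -a.2) (conj b.1, -b.2) (conj c.1, -c.2) t := by
  simp only [secondVariation, map_mul, map_add, map_pow, ← Complex.exp_conj,
    conj_stableExponent ht]

theorem norm_secondVariation_le {z : ℂ} (hz : z ∈ lowerHalfStrip) :
    ‖secondVariation a b c z‖ ≤ Real.exp (4 * ‖a‖) * (400 * ‖b‖ ^ 2 + 20 * ‖c‖) *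
      ((1 + z.re) ^ (‖a‖ + 4) * Real.exp (a.1.re * z.re)) := by
  have hre : 1 ≤ 1 + z.re := by linarith [show 0 ≤ z.re from hz.1]
  have hE (e : ℂ × ℝ) : ‖stableExponent z e‖ ≤ 20 * (1 + z.re) ^ 2 * ‖e‖ :=
    (stableExponent z).le_of_opNorm_le (norm_stableExponent_le_of_mem_lowerHalfStrip hz) e
  have hfactor : ‖stableExponent z b ^ 2 + stableExponent z c‖ ≤
      (400 * ‖b‖ ^ 2 + 20 * ‖c‖) * (1 + z.re) ^ 4 :=
    calc ‖stableExponent z b ^ 2 + stableExponent z c‖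
        ≤ ‖stableExponent z b‖ ^ 2 + ‖stableExponent z c‖ := by
          rw [← norm_pow]; exact norm_add_le _ _
      _ ≤ (20 * (1 + z.re) ^ 2 * ‖b‖) ^ 2 + 20 * (1 + z.re) ^ 4 * ‖c‖ := by
          gcongr
          · exact hE b
          · exact (hE c).trans (by gcongr 20 * ?_ * ‖c‖; exact pow_le_pow_right₀ hre (by norm_num))
      _ = (400 * ‖b‖ ^ 2 + 20 * ‖c‖) * (1 + z.re) ^ 4 := by ring
  calc ‖secondVariation a b c z‖
      ≤ Real.exp (4 * ‖a‖) * (1 + z.re) ^ ‖a‖ * Real.exp (a.1.re * z.re) *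
          ((400 * ‖b‖ ^ 2 + 20 * ‖c‖) * (1 + z.re) ^ 4) := by
        rw [secondVariation, norm_mul]
        gcongr
        exact norm_exp_stableExponent_le hz a
    _ = _ := by
        rw [Real.rpow_add (by linarith), show (4 : ℝ) = (4 : ℕ) by norm_num, Real.rpow_natCast]
        ring

theorem abs_im_secondVariation_neg_I_mul_le (hc : c.1.re = c.2 * (Real.pi / 2))
    {u : ℝ} (hu : u ∈ Ioc (0 : ℝ) 1) :
    |(secondVariation a b c (-I * u)).im| ≤
      Real.exp (10 * ‖a‖) * (30 * ‖b‖ ^ 2 + 3 * ‖a‖ * (50 * ‖b‖ ^ 2 + 5 * ‖c‖)) *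
        (u ^ 2 * (1 + |Real.log u|)) := by
  have hu0 : 0 < u := hu.1
  set E := stableExponent (-I * u)
  set ℓ := 1 + |Real.log u|
  have hexp : Real.exp (E a).re ≤ Real.exp (10 * ‖a‖) := by
    gcongr
    calc (E a).re ≤ 5 * ‖a‖ * (u * ℓ) :=
          (Complex.re_le_norm _).trans (norm_stableExponent_neg_I_mul_le hu0 a)
      _ ≤ 5 * ‖a‖ * 2 := by gcongr; exact mul_one_add_abs_log_le_two hu
      _ = 10 * ‖a‖ := by ring
  calc |(secondVariation a b c (-I * u)).im|
      ≤ Real.exp (E a).re * (|(E b ^ 2 + E c).im| + |(E a).im| * ‖E b ^ 2 + E c‖) :=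
        abs_im_exp_mul_le _ _
    _ ≤ Real.exp (10 * ‖a‖) * (30 * ‖b‖ ^ 2 * (u ^ 2 * ℓ) +
          3 * ‖a‖ * u * ((50 * ‖b‖ ^ 2 + 5 * ‖c‖) * (u * ℓ))) := by
        gcongr
        · exact abs_im_stableExponent_neg_I_mul_sq_add_le hu0 b hc
        · exact abs_im_stableExponent_neg_I_mul_le hu0 a
        · exact norm_stableExponent_neg_I_mul_sq_add_le hu b c
    _ = _ := by ring

theorem re_integral_secondVariation_isBigO (ha : a.1.re < 0)
    (hc : c.1.re = c.2 * (Real.pi / 2)) :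
    (fun x : ℝ => (∫ t in Ioi (0 : ℝ), Complex.exp (-I * x * t) * secondVariation a b c t).re)
      =O[atTop] fun x => x ^ (-3 : ℝ) * Real.log x := by
  set C := Real.exp (4 * ‖a‖) * (400 * ‖b‖ ^ 2 + 20 * ‖c‖)
  set δ := -a.1.re / 2
  have hbound : ∀ z ∈ lowerHalfStrip, ‖secondVariation a b c z‖ ≤
      C * (((‖a‖ + 4) / δ) ^ (‖a‖ + 4) * Real.exp δ) * Real.exp (-δ * z.re) := fun z hz => by
    have hdecay := one_add_rpow_mul_exp_neg_le (p := ‖a‖ + 4) hz.1 (by positivity)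
      (neg_pos.2 ha)
    rw [neg_neg] at hdecay
    rw [mul_assoc]
    exact (norm_secondVariation_le a b c hz).trans
      (mul_le_mul_of_nonneg_left hdecay (by positivity))
  exact re_integral_Ioi_exp_mul_isBigO (half_pos (neg_pos.2 ha))
    (continuousOn_secondVariation a b c) (differentiableOn_secondVariation a b c) hbound
    fun u hu => abs_im_secondVariation_neg_I_mul_le a b c hc hu

theorem re_integral_secondVariation_neg (x : ℝ) :
    (∫ t in Ioi (0 : ℝ), Complex.exp (-I * (-x : ℝ) * t) * secondVariation a b c t).re =
      (∫ t in Ioi (0 : ℝ), Complex.exp (-I * x * t) *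
        secondVariation (conj a.1, -a.2) (conj b.1, -b.2) (conj c.1, -c.2) t).re := by
  rw [← Complex.conj_re, ← integral_conj]
  congr 1
  refine setIntegral_congr_fun measurableSet_Ioi fun t ht => ?_
  simp only [map_mul, ← Complex.exp_conj, map_neg, Complex.conj_I, Complex.conj_ofReal,
    conj_secondVariation a b c ht, Complex.ofReal_neg]
  ring_nf

theorem isBigOAtInfty_re_integral_secondVariation (ha : a.1.re < 0) (hre : c.1.re = 0)
    (hc : c.2 = 0) :
    IsBigOAtInfty
      (fun x => (∫ t in Ioi (0 : ℝ), Complex.exp (-I * x * t) * secondVariation a b c t).re)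
      fun x => |x| ^ (-3 : ℝ) * Real.log |x| := by
  refine isBigOAtInfty_of_isBigO_atTop (r := fun x => x ^ (-3 : ℝ) * Real.log x)
    (re_integral_secondVariation_isBigO a b c ha (by simp [hre, hc])) ?_ ?_
  · simp only [re_integral_secondVariation_neg]
    exact re_integral_secondVariation_isBigO _ _ _ (by simpa using ha) (by simp [hre, hc])
  · filter_upwards [eventually_ge_atTop 1] with x hx
    exact mul_nonneg (by positivity) (Real.log_nonneg hx)

end SecondVariation

/-! ### Differentiation in the coefficients -/

theorem norm_exp_stableExponent_ofReal {t : ℝ} (ht : 0 ≤ t) (a : ℂ × ℝ) :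
    ‖Complex.exp (stableExponent t a)‖ = Real.exp (a.1.re * t) := by
  rw [Complex.norm_exp, stableExponent_apply, ← Complex.ofReal_log ht, Complex.sub_re,
    Complex.re_mul_ofReal, Complex.I_mul_re, ← Complex.ofReal_mul, Complex.ofReal_im,
    Complex.re_ofReal_mul]
  ring_nf

theorem stronglyMeasurable_stableExponent_ofReal :
    StronglyMeasurable fun t : ℝ => stableExponent t := by
  have hid : Measurable fun t : ℝ => (t : ℂ) := Complex.measurable_ofReal
  have hlog : Measurable fun t : ℝ => I * (t * Complex.log t) := by fun_prop
  exact (hid.stronglyMeasurable.smul_const _).sub (hlog.stronglyMeasurable.smul_const _)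

section CoefficientDerivative

variable {V : Type*} [NormedAddCommGroup V] {A : ℝ → V} {a : ℂ × ℝ}

/-- A measurable amplitude of at most polynomial growth on `(0, ∞)`, so that it stays integrable
against `exp (stableExponent t a)` whenever `re a.1 < 0`. -/
structure IsTemperateAmplitude (A : ℝ → V) : Prop where
  aestronglyMeasurable : AEStronglyMeasurable A (volume.restrict (Ioi 0))
  norm_le_pow : ∃ K : ℝ, ∃ n : ℕ, ∀ t > 0, ‖A t‖ ≤ K * (1 + t) ^ n

variable [NormedSpace ℂ V]

theorem IsTemperateAmplitude.integrableOn (hA : IsTemperateAmplitude A) (ha : a.1.re < 0) :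
    IntegrableOn (fun t : ℝ => Complex.exp (stableExponent t a) • A t) (Ioi 0) := by
  obtain ⟨K, n, hK⟩ := hA.norm_le_pow
  refine ((integrableOn_Ioi_one_add_pow_mul_exp_neg n (neg_pos.2 ha)).const_mul K).mono' ?_ ?_
  · exact (Complex.continuous_exp.comp_aestronglyMeasurable
      (stronglyMeasurable_stableExponent_ofReal.aestronglyMeasurable.apply_continuousLinearMap
        a)).smul hA.aestronglyMeasurable
  · filter_upwards [ae_restrict_mem measurableSet_Ioi] with t (ht : 0 < t)
    rw [norm_smul, norm_exp_stableExponent_ofReal ht.le, neg_neg]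
    calc Real.exp (a.1.re * t) * ‖A t‖ ≤ Real.exp (a.1.re * t) * (K * (1 + t) ^ n) := by
          gcongr; exact hK t ht
      _ = K * ((1 + t) ^ n * Real.exp (a.1.re * t)) := by ring

variable [NormedSpace ℝ V]

/-- The oscillatory integral of the amplitude `A` against the `α = 1` characteristic function with
coefficients `a`. -/
noncomputable def stableIntegral (A : ℝ → V) (a : ℂ × ℝ) : V :=
  ∫ t in Ioi (0 : ℝ), Complex.exp (stableExponent t a) • A t

variable [IsScalarTower ℝ ℂ V]

/-- The amplitude `A` multiplied by the exponent, as a real-linear map in the coefficients: the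
amplitude of the Fréchet derivative of `stableIntegral A`. -/
noncomputable def mulExponent (A : ℝ → V) (t : ℝ) : ℂ × ℝ →L[ℝ] V :=
  ((ContinuousLinearMap.lsmul ℝ ℂ).flip (A t)).comp (stableExponent t)

theorem mulExponent_apply (A : ℝ → V) (t : ℝ) (b : ℂ × ℝ) :
    mulExponent A t b = stableExponent t b • A t := rfl

namespace IsTemperateAmplitude

protected theorem mulExponent (hA : IsTemperateAmplitude A) :
    IsTemperateAmplitude (mulExponent A) where
  aestronglyMeasurable := by
    have hflip := (ContinuousLinearMap.lsmul ℝ ℂ).flip.continuous.comp_aestronglyMeasurable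
      hA.aestronglyMeasurable
    exact (ContinuousLinearMap.compL ℝ (ℂ × ℝ) ℂ V).aestronglyMeasurable_comp₂ hflip
      stronglyMeasurable_stableExponent_ofReal.aestronglyMeasurable
  norm_le_pow := by
    obtain ⟨K, n, hK⟩ := hA.norm_le_pow
    refine ⟨K * 5, n + 2, fun t ht => ?_⟩
    have hE := norm_stableExponent_le_one_add_sq (t : ℂ)
    rw [Complex.norm_of_nonneg ht.le] at hE
    have hpos : 0 ≤ K * (1 + t) ^ n := (norm_nonneg _).trans (hK t ht)
    calc ‖_root_.mulExponent A t‖ ≤ 5 * (1 + t) ^ 2 * (K * (1 + t) ^ n) := by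
          refine ContinuousLinearMap.opNorm_le_bound _ (by positivity) fun b => ?_
          rw [mulExponent_apply, norm_smul, mul_right_comm]
          gcongr
          exacts [(stableExponent t).le_of_opNorm_le hE b, hK t ht]
      _ = K * 5 * (1 + t) ^ (n + 2) := by ring

theorem hasFDerivAt_stableIntegral (hA : IsTemperateAmplitude A)
    (ha : a.1.re < 0) :
    HasFDerivAt (stableIntegral A) (stableIntegral (mulExponent A) a) a := by
  obtain ⟨K, n, hK⟩ := hA.mulExponent.norm_le_pow
  have hopen : {b : ℂ × ℝ | b.1.re < a.1.re / 2} ∈ 𝓝 a :=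
    (isOpen_lt (by fun_prop) continuous_const).mem_nhds (show a.1.re < a.1.re / 2 by linarith)
  refine hasFDerivAt_integral_of_dominated_of_fderiv_le
    (F := fun b (t : ℝ) => Complex.exp (stableExponent t b) • A t)
    (F' := fun b (t : ℝ) => Complex.exp (stableExponent t b) • mulExponent A t)
    (bound := fun t => K * ((1 + t) ^ n * Real.exp (-(-(a.1.re / 2)) * t))) hopen ?_
    (hA.integrableOn ha) (hA.mulExponent.integrableOn ha).aestronglyMeasurable ?_
    ((integrableOn_Ioi_one_add_pow_mul_exp_neg n (by linarith)).const_mul K) ?_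
  · filter_upwards [hopen] with b (hb : b.1.re < a.1.re / 2)
    exact (hA.integrableOn (hb.trans (by linarith))).aestronglyMeasurable
  · filter_upwards [ae_restrict_mem measurableSet_Ioi] with t (ht : 0 < t) b hb
    have : b.1.re < a.1.re / 2 := hb
    rw [norm_smul, norm_exp_stableExponent_ofReal ht.le, neg_neg]
    calc Real.exp (b.1.re * t) * ‖mulExponent A t‖
        ≤ Real.exp (a.1.re / 2 * t) * (K * (1 + t) ^ n) := by
          gcongr
          exact hK t ht
      _ = K * ((1 + t) ^ n * Real.exp (a.1.re / 2 * t)) := by ring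
  · filter_upwards with t b _
    refine ((stableExponent t).hasFDerivAt.cexp.smul_const (A t)).congr_fderiv ?_
    exact ContinuousLinearMap.ext fun e => by simp [mulExponent_apply, mul_smul]

theorem hasDerivAt_stableIntegral_comp (hA : IsTemperateAmplitude A) {γ : ℝ → ℂ × ℝ}
    {b : ℂ × ℝ} {s : ℝ} (hγ : HasDerivAt γ b s) (hs : (γ s).1.re < 0) :
    HasDerivAt (fun s => stableIntegral A (γ s)) (stableIntegral (mulExponent A) (γ s) b) s :=
  (hA.hasFDerivAt_stableIntegral hs).comp_hasDerivAt s hγ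

theorem stableIntegral_mulExponent_mulExponent_add (hA : IsTemperateAmplitude A)
    (ha : a.1.re < 0) (b c : ℂ × ℝ) :
    stableIntegral (mulExponent (mulExponent A)) a b b + stableIntegral (mulExponent A) a c =
      ∫ t in Ioi (0 : ℝ), secondVariation a b c t • A t := by
  have hsecond := hA.mulExponent.mulExponent.integrableOn ha
  have hfirst := hA.mulExponent.integrableOn ha
  rw [stableIntegral, stableIntegral, ContinuousLinearMap.integral_apply hsecond,
    ContinuousLinearMap.integral_apply (hsecond.apply_continuousLinearMap b),
    ContinuousLinearMap.integral_apply hfirst,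
    ← integral_add ((hsecond.apply_continuousLinearMap b).apply_continuousLinearMap b)
      (hfirst.apply_continuousLinearMap c)]
  congr 1 with t
  simp only [smul_apply, mulExponent_apply, secondVariation]
  rw [← smul_add, smul_smul, ← sq, ← add_smul, smul_smul]

theorem deriv_deriv_stableIntegral_comp (hA : IsTemperateAmplitude A) {W : Type*}
    [NormedAddCommGroup W] [NormedSpace ℝ W] (L : V →L[ℝ] W) {f : ℝ → W} {γ γ' : ℝ → ℂ × ℝ}
    {c : ℂ × ℝ} {s : ℝ} (hf : ∀ᶠ u in 𝓝 s, f u = L (stableIntegral A (γ u)))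
    (hγ : ∀ᶠ u in 𝓝 s, HasDerivAt γ (γ' u) u) (hγ' : HasDerivAt γ' c s) (hs : (γ s).1.re < 0) :
    deriv (deriv f) s = L (∫ t in Ioi (0 : ℝ), secondVariation (γ s) (γ' s) c t • A t) := by
  have hre : ∀ᶠ u in 𝓝 s, (γ u).1.re < 0 :=
    (Complex.continuous_re.comp continuous_fst).continuousAt.comp
      hγ.self_of_nhds.continuousAt |>.eventually_lt_const hs
  have hderiv : deriv f =ᶠ[𝓝 s] fun u => L (stableIntegral (mulExponent A) (γ u) (γ' u)) := by
    filter_upwards [hf.eventually_nhds, hγ, hre] with u hfu hγu hu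
    exact (L.hasFDerivAt.comp_hasDerivAt u (hA.hasDerivAt_stableIntegral_comp hγu hu)
      |>.congr_of_eventuallyEq hfu).deriv
  have hsecond := (hA.mulExponent.hasDerivAt_stableIntegral_comp hγ.self_of_nhds hs).clm_apply hγ'
  rw [hderiv.deriv_eq, ← hA.stableIntegral_mulExponent_mulExponent_add hs]
  exact (L.hasFDerivAt.comp_hasDerivAt s hsecond).deriv

end IsTemperateAmplitude

end CoefficientDerivative

/-! ### The stable density at `α = 1` -/

theorem phiM_neg (θ : Fin 4 → ℝ) (t : ℝ) : phiM θ (-t) = conj (phiM θ t) := by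
  rw [phiM, phiM, ← Complex.exp_conj]
  congr 1
  unfold psiM
  split_ifs <;>
    simp only [mul_neg, abs_neg, Real.sign_neg, neg_mul, map_neg, map_add, map_sub, map_mul,
      map_one, Complex.conj_I, Complex.conj_ofReal, Complex.ofReal_neg]

/-- The coefficients for which `stableExponent` is the logarithm of the characteristic function
with location `μ`, scale `σ`, skewness `β` and `α = 1` on the positive half-line. -/
noncomputable def stableCoeff (μ σ β : ℝ) : ℂ × ℝ :=
  (-σ + I * (μ - 2 * β / Real.pi * (σ * Real.log σ) : ℝ), 2 * β / Real.pi * σ)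

theorem stableCoeff_fst_re (μ σ β : ℝ) : (stableCoeff μ σ β).1.re = -σ := by
  simp only [stableCoeff, Complex.add_re, Complex.neg_re, Complex.ofReal_re, Complex.re_mul_ofReal,
    Complex.I_re, zero_mul, add_zero]

theorem phiM_eq_exp_stableExponent {μ σ β t : ℝ} (hσ : 0 < σ) (ht : 0 < t) :
    phiM ![μ, σ, 1, β] t = Complex.exp (stableExponent t (stableCoeff μ σ β)) := by
  rw [phiM, stableExponent_apply, ← Complex.ofReal_log ht.le]
  congr 1
  simp [psiM, stableCoeff, abs_of_pos hσ, abs_of_pos ht, Real.log_mul hσ.ne' ht.ne']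
  ring

theorem isTemperateAmplitude_exp_neg_I_mul (x : ℝ) :
    IsTemperateAmplitude fun t : ℝ => Complex.exp (-I * x * t) where
  aestronglyMeasurable := by fun_prop
  norm_le_pow := ⟨1, 0, fun t _ => by simp [Complex.norm_exp]⟩

theorem fM_eq_re_stableIntegral {σ : ℝ} (hσ : 0 < σ) (μ β x : ℝ) :
    fM ![μ, σ, 1, β] x =
      1 / Real.pi *
        (stableIntegral (fun t => Complex.exp (-I * x * t)) (stableCoeff μ σ β)).re := by
  have hintegrand : EqOn (fun t : ℝ => Complex.exp (-I * t * x) * phiM ![μ, σ, 1, β] t)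
      (fun t => Complex.exp (stableExponent t (stableCoeff μ σ β)) • Complex.exp (-I * x * t))
      (Ioi 0) := fun t ht => by
    simp only [phiM_eq_exp_stableExponent hσ ht, smul_eq_mul]
    ring_nf
  have hint := ((isTemperateAmplitude_exp_neg_I_mul x).integrableOn (a := stableCoeff μ σ β)
    (by simpa [stableCoeff_fst_re] using hσ)).congr_fun hintegrand.symm measurableSet_Ioi
  have hconj (t : ℝ) : Complex.exp (-I * (-t : ℝ) * x) * phiM ![μ, σ, 1, β] (-t) =
      conj (Complex.exp (-I * t * x) * phiM ![μ, σ, 1, β] t) := by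
    simp only [phiM_neg, map_mul, ← Complex.exp_conj, map_neg, Complex.conj_I,
      Complex.conj_ofReal, Complex.ofReal_neg, neg_mul, mul_neg, neg_neg]
  rw [fM, re_integral_eq_two_mul_of_conj_symm_s9 hint hconj,
    setIntegral_congr_fun measurableSet_Ioi hintegrand, ← stableIntegral]
  field_simp

theorem fPP_self (i : Fin 4) (θ : Fin 4 → ℝ) (x : ℝ) :
    fPP i i θ x = deriv (deriv fun s => fM (Function.update θ i s) x) (θ i) := by
  simp only [fPP, fP, Function.update_idem, Function.update_self]

theorem hasDerivAt_stableCoeff_scale {s : ℝ} (hs : s ≠ 0) (μ β : ℝ) :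
    HasDerivAt (fun s => stableCoeff μ s β)
      (-1 - I * (2 * β / Real.pi * (Real.log s + 1) : ℝ), 2 * β / Real.pi) s := by
  have hfst := (hasDerivAt_id s).ofReal_comp.neg.fun_add
    (((Real.hasDerivAt_mul_log hs).const_mul (2 * β / Real.pi)).const_sub μ
      |>.ofReal_comp.const_mul I)
  have hsnd := (hasDerivAt_id s).const_mul (2 * β / Real.pi)
  refine (hfst.prodMk hsnd).congr_deriv (Prod.ext ?_ (mul_one _))
  push_cast
  ring

theorem hasDerivAt_stableCoeff_scale_deriv {s : ℝ} (hs : s ≠ 0) (β : ℝ) :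
    HasDerivAt (fun s => ((-1 - I * (2 * β / Real.pi * (Real.log s + 1) : ℝ) : ℂ),
      2 * β / Real.pi)) (-(I * (2 * β / Real.pi * s⁻¹ : ℝ)), 0) s :=
  ((((Real.hasDerivAt_log hs).add_const 1).const_mul (2 * β / Real.pi)).ofReal_comp.const_mul I
    |>.const_sub (-1)).prodMk (hasDerivAt_const ..)

theorem hasDerivAt_stableCoeff_skewness (μ σ β : ℝ) :
    HasDerivAt (fun s => stableCoeff μ σ s)
      (-(I * (2 / Real.pi * (σ * Real.log σ) : ℝ)), 2 / Real.pi * σ) β := by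
  have hcoeff := ((hasDerivAt_id β).const_mul 2).div_const Real.pi
  have hfst := ((hcoeff.mul_const (σ * Real.log σ)).const_sub μ).ofReal_comp.const_mul I
    |>.const_add (-(σ : ℂ))
  refine (hfst.prodMk (hcoeff.mul_const σ)).congr_deriv ?_
  simp only [mul_one, Complex.ofReal_neg, mul_neg]

theorem isBigOAtInfty_deriv_deriv_fM {f : ℝ → ℝ → ℝ} {γ γ' : ℝ → ℂ × ℝ} {c : ℂ × ℝ} {s : ℝ}
    (hf : ∀ x, ∀ᶠ u in 𝓝 s, f u x =
      1 / Real.pi * (stableIntegral (fun t => Complex.exp (-I * x * t)) (γ u)).re)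
    (hγ : ∀ᶠ u in 𝓝 s, HasDerivAt γ (γ' u) u) (hγ' : HasDerivAt γ' c s)
    (hs : (γ s).1.re < 0) (hre : c.1.re = 0) (hc : c.2 = 0) :
    IsBigOAtInfty (fun x => deriv (deriv fun u => f u x) s)
      fun x => |x| ^ (-3 : ℝ) * Real.log |x| := by
  have hderiv (x : ℝ) := (isTemperateAmplitude_exp_neg_I_mul x).deriv_deriv_stableIntegral_comp
    ((1 / Real.pi) • Complex.reCLM) (hf x) hγ hγ' hs
  obtain ⟨C, hC, M, hM, hbound⟩ :=
    isBigOAtInfty_re_integral_secondVariation (γ s) (γ' s) c hs hre hc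
  refine ⟨1 / Real.pi * C, by positivity, M, hM, fun x hx => ?_⟩
  simp only [hderiv x, smul_eq_mul, mul_comm (secondVariation _ _ _ _)]
  rw [smul_apply, Complex.reCLM_apply, smul_eq_mul, abs_mul, abs_of_pos (by positivity), mul_assoc]
  gcongr
  exact hbound x hx

theorem density_second_deriv_tail_bounds_alpha_one_general (μ β : ℝ) {σ : ℝ} (hσ : 0 < σ) :
    IsBigOAtInfty (fPP 1 1 ![μ, σ, 1, β]) (fun x => |x| ^ (-3 : ℝ) * Real.log |x|) ∧
    IsBigOAtInfty (fPP 3 3 ![μ, σ, 1, β]) (fun x => |x| ^ (-3 : ℝ) * Real.log |x|) := by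
  have hscale (s : ℝ) : Function.update ![μ, σ, 1, β] 1 s = ![μ, s, 1, β] := by
    ext i; fin_cases i <;> simp
  have hskewness (s : ℝ) : Function.update ![μ, σ, 1, β] 3 s = ![μ, σ, 1, s] := by
    ext i; fin_cases i <;> simp
  have hre : (stableCoeff μ σ β).1.re < 0 := by simpa [stableCoeff_fst_re] using hσ
  have hpos : ∀ᶠ s in 𝓝 σ, 0 < s := lt_mem_nhds hσ
  constructor
  · simp only [funext (fPP_self 1 _), hscale]
    exact isBigOAtInfty_deriv_deriv_fM
      (fun x => hpos.mono fun s hs => fM_eq_re_stableIntegral hs μ β x)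
      (hpos.mono fun s hs => hasDerivAt_stableCoeff_scale hs.ne' μ β)
      (hasDerivAt_stableCoeff_scale_deriv hσ.ne' β) hre (by simp) rfl
  · simp only [funext (fPP_self 3 _), hskewness]
    exact isBigOAtInfty_deriv_deriv_fM
      (fun x => .of_forall fun s => fM_eq_re_stableIntegral hσ μ s x)
      (.of_forall fun s => hasDerivAt_stableCoeff_skewness μ σ s)
      (hasDerivAt_const _ _) hre rfl rfl

/-- At `α = 1`, `β ∈ (-1,1)`, improved tail bounds hold:
`f_{σσ} = O(|x|⁻³ log|x|)` and `f_{ββ} = O(|x|⁻³ log|x|)`. -/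
theorem density_second_deriv_tail_bounds_alpha_one
    (μ σ β : ℝ) (hσ : 0 < σ) (hβ : β ∈ Set.Ioo (-1 : ℝ) 1) :
    IsBigOAtInfty (fPP 1 1 ![μ, σ, 1, β]) (fun x => |x| ^ (-3 : ℝ) * Real.log |x|) ∧
    IsBigOAtInfty (fPP 3 3 ![μ, σ, 1, β]) (fun x => |x| ^ (-3 : ℝ) * Real.log |x|) := by
  exact density_second_deriv_tail_bounds_alpha_one_general μ β hσ
end
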